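/- arXiv:math/9704231 — 8 statements merged into one kernel-verified Lean document; each statement's English description precedes it below -/
import Mathlib

section
/- The sequence $(s_k)_{k\in\mathbb{Z}}$ satisfies $\lim_{k\to\infty} s_k = b$ and $\lim_{k\to-\infty} s_k = a$. -/
open Filter Topology

theorem up_aux (a b : EReal) (f : ℝ → ℝ)
    (hf_nonneg : ∀ x : ℝ, 0 ≤ f x)
    (hf_pos : ∀ x : ℝ, a < (x : EReal) → (x : EReal) < b → 0 < f x)
    (hf_lip : ∀ u v : ℝ, a < (u : EReal) → (u : EReal) < b →
      a < (v : EReal) → (v : EReal) < b → |f u - f v| ≤ |u - v|)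
    (t : ℕ → ℝ) (h0a : a < (t 0 : EReal)) (h0b : (t 0 : EReal) < b)
    (hup : ∀ k : ℕ,
      ((b ≤ ((t k + f (t k) / 2 : ℝ) : EReal) → ((t (k + 1) : ℝ) : EReal) = b) ∧
       (((t k + f (t k) / 2 : ℝ) : EReal) < b → t (k + 1) = t k + f (t k) / 2))) :
    Tendsto (fun k : ℕ => (t k : EReal)) atTop (𝓝 b) := by
  have hle : ∀ k, (t k : EReal) ≤ b := by
    intro k
    induction k with
    | zero => exact h0b.le
    | succ k ih =>
      rcases le_or_gt b ((t k + f (t k) / 2 : ℝ) : EReal) with h | h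
      · exact ((hup k).1 h).le
      · rw [(hup k).2 h]; exact h.le
  have hmono : Monotone (fun k : ℕ => (t k : EReal)) := by
    apply monotone_nat_of_le_succ
    intro k
    rcases le_or_gt b ((t k + f (t k) / 2 : ℝ) : EReal) with h | h
    · show (t k : EReal) ≤ (t (k+1) : EReal)
      rw [(hup k).1 h]; exact hle k
    · show (t k : EReal) ≤ (t (k+1) : EReal)
      rw [(hup k).2 h, EReal.coe_le_coe_iff]
      linarith [hf_nonneg (t k)]
  have hT := tendsto_atTop_iSup hmono
  suffices hL : (⨆ k, (t k : EReal)) = b by rwa [hL] at hT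
  by_contra hne
  have hlt : (⨆ k, (t k : EReal)) < b := lt_of_le_of_ne (iSup_le hle) hne
  have hge : ∀ k, (t k : EReal) ≤ (⨆ k, (t k : EReal)) := fun k => le_iSup (fun k => (t k : EReal)) k
  obtain ⟨l, hl⟩ : ∃ l : ℝ, (l : EReal) = (⨆ k, (t k : EReal)) :=
    ⟨_, EReal.coe_toReal (hlt.trans_le le_top).ne
      ((EReal.bot_lt_coe _).trans_le (hge 0)).ne'⟩
  rw [← hl] at hlt hge
  have ha : ∀ k, a < (t k : EReal) := fun k => h0a.trans_le (hmono (Nat.zero_le k))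
  have hla : a < (l : EReal) := (ha 0).trans_le (hge 0)
  have hfl := hf_pos l hla hlt
  have : ((l - f l / 3 : ℝ) : EReal) < (⨆ k, (t k : EReal)) := by
    rw [← hl, EReal.coe_lt_coe_iff]; linarith
  obtain ⟨k, hk⟩ := lt_iSup_iff.1 this
  rw [EReal.coe_lt_coe_iff] at hk
  have h1 := EReal.coe_le_coe_iff.1 (hge k)
  have h2 := EReal.coe_le_coe_iff.1 (hge (k+1))
  have h3 := hf_lip l (t k) hla hlt (ha k) ((hge k).trans_lt hlt)
  rw [abs_of_nonneg (sub_nonneg.2 h1)] at h3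
  have h4 := (abs_le.1 h3).2
  rcases le_or_gt b ((t k + f (t k) / 2 : ℝ) : EReal) with h | h
  · have h5 := (hup k).1 h
    have h6 := hge (k+1)
    rw [h5] at h6
    exact absurd hlt (not_lt.2 h6)
  · have h5 := (hup k).2 h
    linarith

theorem int_aux (u : ℤ → EReal) (c : EReal)
    (h : Tendsto (fun n : ℕ => u n) atTop (𝓝 c)) : Tendsto u atTop (𝓝 c) := by
  rw [← Nat.map_cast_int_atTop]
  exact tendsto_map'_iff.2 h

/-- Given `-∞ ≤ a < b ≤ ∞`, a function `f` that is strictly positive on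
`(a,b)`, zero on `(-∞,a] ∪ [b,∞)` and `1`-Lipschitz on `(a,b)`, and the sequence
`(s_k)_{k ∈ ℤ}` defined by `s_{k+1} = s_k + f(s_k)/2` for `k ≥ 0` and
`s_{k-1} = s_k - f(s_k)/2` for `k ≤ 0` (clamped at `b`, resp. `a`, upon overshooting),
one has `lim_{k → ∞} s_k = b` and `lim_{k → -∞} s_k = a`. -/
theorem stmt0
    (a b : EReal) (hab : a < b)
    (f : ℝ → ℝ)
    (hf_nonneg : ∀ x : ℝ, 0 ≤ f x)
    (hf_pos : ∀ x : ℝ, a < (x : EReal) → (x : EReal) < b → 0 < f x)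
    (hf_zero : ∀ x : ℝ, ((x : EReal) ≤ a ∨ b ≤ (x : EReal)) → f x = 0)
    (hf_lip : ∀ u v : ℝ, a < (u : EReal) → (u : EReal) < b →
      a < (v : EReal) → (v : EReal) < b → |f u - f v| ≤ |u - v|)
    (s : ℤ → ℝ)
    (hs0a : a < (s 0 : EReal)) (hs0b : (s 0 : EReal) < b)
    (hup : ∀ k : ℤ, 0 ≤ k →
      ((b ≤ ((s k + f (s k) / 2 : ℝ) : EReal) → ((s (k + 1) : ℝ) : EReal) = b) ∧
       (((s k + f (s k) / 2 : ℝ) : EReal) < b → s (k + 1) = s k + f (s k) / 2)))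
    (hdown : ∀ k : ℤ, k ≤ 0 →
      ((((s k - f (s k) / 2 : ℝ) : EReal) ≤ a → ((s (k - 1) : ℝ) : EReal) = a) ∧
       (a < ((s k - f (s k) / 2 : ℝ) : EReal) → s (k - 1) = s k - f (s k) / 2))) :
    Tendsto (fun k : ℤ => (s k : EReal)) atTop (𝓝 b) ∧
      Tendsto (fun k : ℤ => (s k : EReal)) atBot (𝓝 a) := by
  constructor
  · apply int_aux
    refine up_aux a b f hf_nonneg hf_pos hf_lip (fun n : ℕ => s n) (by simpa using hs0a)
      (by simpa using hs0b) ?_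
    intro k
    have := hup k (by positivity)
    simpa using this
  · have key : Tendsto (fun k : ℕ => ((-s (-(k : ℤ)) : ℝ) : EReal)) atTop (𝓝 (-a)) := by
      have e1 : ∀ x : ℝ, -b < (x : EReal) → ((-x : ℝ) : EReal) < b := by
        intro x hx
        rw [EReal.coe_neg]; exact EReal.neg_lt_comm.1 hx
      have e2 : ∀ x : ℝ, (x : EReal) < -a → a < ((-x : ℝ) : EReal) := by
        intro x hx
        rw [EReal.coe_neg]; exact EReal.lt_neg_comm.1 hx
      refine up_aux (-b) (-a) (fun x => f (-x)) (fun x => hf_nonneg _)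
        (fun x h1 h2 => hf_pos _ (e2 x h2) (e1 x h1)) ?_
        (fun n : ℕ => -s (-(n : ℤ))) ?_ ?_ ?_
      · intro u v hu1 hu2 hv1 hv2
        have := hf_lip (-u) (-v) (e2 u hu2) (e1 u hu1) (e2 v hv2) (e1 v hv1)
        rwa [← abs_neg (-u - -v), show -(-u - -v) = u - v by ring] at this
      · simpa using hs0b
      · simpa using hs0a
      · intro k
        have h := hdown (-(k : ℤ)) (by simp)
        have e : -(((k + 1 : ℕ)) : ℤ) = -(k : ℤ) - 1 := by push_cast; ring
        have e' : -s (-(k : ℤ)) + f (s (-(k : ℤ))) / 2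
            = -(s (-(k : ℤ)) - f (s (-(k : ℤ))) / 2) := by ring
        simp only [neg_neg, e]
        rw [e', EReal.coe_neg, EReal.coe_neg, EReal.neg_le_neg_iff, EReal.neg_lt_neg_iff,
          neg_inj, neg_inj]
        exact h
    have k2 := (int_aux (fun k : ℤ => ((-s (-k) : ℝ) : EReal)) (-a) key).neg
    have k3 := k2.comp tendsto_neg_atBot_atTop
    simpa [Function.comp_def] using k3
end

section
/- Assume $b=\infty$. Then $\tfrac14\sum_{k\ge 0} f(s_k)^2 \le \int_{s_0}^{\infty} f(v)\,dv \le \tfrac34\sum_{k\ge 0} f(s_k)^2$; in particular $\sum_{k\ge 0} f(s_k)^2=\infty$ if and only if $\int_{s_0}^{\infty} f(v)\,dv=\infty$. -/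
open MeasureTheory ENNReal

/-- Given `-∞ ≤ a < b = ∞` and a function `f` that is strictly positive on
`(a,∞)`, zero on `(-∞,a]` and `1`-Lipschitz on `(a,∞)`, and the sequence `s_{k+1} = s_k + f(s_k)/2`
started at `s_0 ∈ (a,∞)`, one has
`(1/4) ∑_{k≥0} f(s_k)² ≤ ∫_{s_0}^∞ f(v) dv ≤ (3/4) ∑_{k≥0} f(s_k)²`; in particular
`∑_{k≥0} f(s_k)² = ∞` iff `∫_{s_0}^∞ f(v) dv = ∞`. -/
theorem stmt2
    (a : EReal) (ha : a < ⊤)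
    (f : ℝ → ℝ)
    (hf_nonneg : ∀ x : ℝ, 0 ≤ f x)
    (hf_pos : ∀ x : ℝ, a < (x : EReal) → 0 < f x)
    (hf_zero : ∀ x : ℝ, (x : EReal) ≤ a → f x = 0)
    (hf_lip : ∀ u v : ℝ, a < (u : EReal) → a < (v : EReal) → |f u - f v| ≤ |u - v|)
    (s : ℕ → ℝ) (hs0 : a < (s 0 : EReal))
    (hrec : ∀ k : ℕ, s (k + 1) = s k + f (s k) / 2) :
    (1 / 4 : ℝ≥0∞) * ∑' k : ℕ, ENNReal.ofReal (f (s k) ^ 2)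
        ≤ ∫⁻ v in Set.Ioi (s 0), ENNReal.ofReal (f v) ∧
      (∫⁻ v in Set.Ioi (s 0), ENNReal.ofReal (f v))
        ≤ (3 / 4 : ℝ≥0∞) * ∑' k : ℕ, ENNReal.ofReal (f (s k) ^ 2) ∧
      ((∑' k : ℕ, ENNReal.ofReal (f (s k) ^ 2) = ⊤) ↔
        (∫⁻ v in Set.Ioi (s 0), ENNReal.ofReal (f v)) = ⊤) := by
  have hmono : Monotone s := monotone_nat_of_le_succ fun k => by
    have := hf_nonneg (s k)
    rw [hrec k]; linarith
  have hge : ∀ x : ℝ, s 0 ≤ x → a < (x : EReal) := fun x hx =>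
    lt_of_lt_of_le hs0 (EReal.coe_le_coe_iff.2 hx)
  have hsk : ∀ k, a < (s k : EReal) := fun k => hge _ (hmono (Nat.zero_le k))
  have htop : Filter.Tendsto s Filter.atTop Filter.atTop := by
    rcases tendsto_of_monotone hmono with h | ⟨L, hL⟩
    · exact h
    · exfalso
      have hle : ∀ k, s k ≤ L := fun k => hmono.ge_of_tendsto hL k
      have haL := hge L (hle 0)
      have hpos := hf_pos L haL
      have hev := hL.eventually (lt_mem_nhds (show L - f L / 4 < L by linarith))
      obtain ⟨k, hk⟩ := hev.exists
      have h1 := hf_lip (s k) L (hsk k) haL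
      rw [abs_le, abs_of_nonpos (by linarith [hle k])] at h1
      have h2 := hle (k + 1)
      rw [hrec k] at h2
      linarith [h1.1]
  have hun : Set.Ioi (s 0) = ⋃ k, Set.Ioc (s k) (s (k + 1)) := by
    ext x
    simp only [Set.mem_Ioi, Set.mem_iUnion, Set.mem_Ioc]
    constructor
    · intro hx
      have hex : ∃ n, x ≤ s n := (htop.eventually_ge_atTop x).exists
      classical
      have h0 : Nat.find hex ≠ 0 := by
        intro h
        have := Nat.find_spec hex
        rw [h] at this
        linarith
      obtain ⟨m, hm⟩ := Nat.exists_eq_succ_of_ne_zero h0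
      refine ⟨m, ?_, ?_⟩
      · exact not_le.1 (Nat.find_min hex (by omega))
      · have := Nat.find_spec hex
        rwa [hm] at this
    · rintro ⟨k, hk, -⟩
      exact lt_of_le_of_lt (hmono (Nat.zero_le k)) hk
  have hint : ∫⁻ v in Set.Ioi (s 0), ENNReal.ofReal (f v)
      = ∑' k, ∫⁻ v in Set.Ioc (s k) (s (k + 1)), ENNReal.ofReal (f v) := by
    rw [hun]
    exact lintegral_iUnion (fun _ => measurableSet_Ioc)
      (by simpa using hmono.pairwise_disjoint_on_Ioc_succ) _
  have hbd : ∀ k, ∀ v ∈ Set.Ioc (s k) (s (k + 1)),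
      f (s k) / 2 ≤ f v ∧ f v ≤ 3 * f (s k) / 2 := by
    intro k v hv
    have hav : a < (v : EReal) := hge v ((hmono (Nat.zero_le k)).trans hv.1.le)
    have h1 := hf_lip v (s k) hav (hsk k)
    rw [abs_le, abs_of_nonneg (by linarith [hv.1])] at h1
    have h2 := hv.2
    rw [hrec k] at h2
    constructor <;> linarith [h1.1, h1.2]
  have hconst : ∀ k (c : ℝ), 0 ≤ c → ∫⁻ _ in Set.Ioc (s k) (s (k + 1)),
      ENNReal.ofReal (c * f (s k)) = ENNReal.ofReal (c / 2) * ENNReal.ofReal (f (s k) ^ 2) := by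
    intro k c hc
    rw [setLIntegral_const, Real.volume_Ioc, hrec k,
      ← ENNReal.ofReal_mul (mul_nonneg hc (hf_nonneg _)), ← ENNReal.ofReal_mul (by positivity)]
    congr 1
    ring
  have e1 : ENNReal.ofReal ((1 / 2) / 2) = 1 / 4 := by
    rw [show ((1 / 2) / 2 : ℝ) = 1 / 4 by norm_num, ENNReal.ofReal_div_of_pos (by norm_num)]
    simp
  have e2 : ENNReal.ofReal ((3 / 2) / 2) = 3 / 4 := by
    rw [show ((3 / 2) / 2 : ℝ) = 3 / 4 by norm_num, ENNReal.ofReal_div_of_pos (by norm_num)]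
    simp
  have A : (1 / 4 : ℝ≥0∞) * ∑' k : ℕ, ENNReal.ofReal (f (s k) ^ 2)
        ≤ ∫⁻ v in Set.Ioi (s 0), ENNReal.ofReal (f v) := by
    rw [hint, ← ENNReal.tsum_mul_left]
    refine ENNReal.tsum_le_tsum fun k => ?_
    rw [← e1, ← hconst k _ (by norm_num)]
    refine setLIntegral_mono' measurableSet_Ioc fun v hv => ENNReal.ofReal_le_ofReal ?_
    linarith [(hbd k v hv).1]
  have B : (∫⁻ v in Set.Ioi (s 0), ENNReal.ofReal (f v))
        ≤ (3 / 4 : ℝ≥0∞) * ∑' k : ℕ, ENNReal.ofReal (f (s k) ^ 2) := by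
    rw [hint, ← ENNReal.tsum_mul_left]
    refine ENNReal.tsum_le_tsum fun k => ?_
    rw [← e2, ← hconst k _ (by norm_num)]
    refine setLIntegral_mono' measurableSet_Ioc fun v hv => ENNReal.ofReal_le_ofReal ?_
    linarith [(hbd k v hv).2]
  refine ⟨A, B, ?_, ?_⟩
  · intro h
    rw [h, ENNReal.mul_top (by simp)] at A
    exact top_le_iff.1 A
  · intro h
    rw [h] at B
    by_contra hne
    refine absurd (top_le_iff.1 B) (ENNReal.mul_ne_top ?_ hne)
    rw [← e2]
    exact ENNReal.ofReal_ne_top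
end

section
/- Assume $b=\infty$. Then $\tfrac1{16}\sum_{k\ge 0} f(s_k)^4 \le \int_{s_0}^{\infty} f(v)^3\,dv \le \tfrac{27}{16}\sum_{k\ge 0} f(s_k)^4$; in particular $\sum_{k\ge 0} f(s_k)^4=\infty$ if and only if $\int_{s_0}^{\infty} f(v)^3\,dv=\infty$. -/
open MeasureTheory ENNReal

/-- Given `-∞ ≤ a < b = ∞` and a function `f` that is strictly positive on
`(a,∞)`, zero on `(-∞,a]` and `1`-Lipschitz on `(a,∞)`, and the sequence `s_{k+1} = s_k + f(s_k)/2`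
started at `s_0 ∈ (a,∞)`, one has
`(1/16) ∑_{k≥0} f(s_k)⁴ ≤ ∫_{s_0}^∞ f(v)³ dv ≤ (27/16) ∑_{k≥0} f(s_k)⁴`; in particular
`∑_{k≥0} f(s_k)⁴ = ∞` iff `∫_{s_0}^∞ f(v)³ dv = ∞`. -/
theorem stmt3
    (a : EReal) (ha : a < ⊤)
    (f : ℝ → ℝ)
    (hf_nonneg : ∀ x : ℝ, 0 ≤ f x)
    (hf_pos : ∀ x : ℝ, a < (x : EReal) → 0 < f x)
    (hf_zero : ∀ x : ℝ, (x : EReal) ≤ a → f x = 0)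
    (hf_lip : ∀ u v : ℝ, a < (u : EReal) → a < (v : EReal) → |f u - f v| ≤ |u - v|)
    (s : ℕ → ℝ) (hs0 : a < (s 0 : EReal))
    (hrec : ∀ k : ℕ, s (k + 1) = s k + f (s k) / 2) :
    (1 / 16 : ℝ≥0∞) * ∑' k : ℕ, ENNReal.ofReal (f (s k) ^ 4)
        ≤ ∫⁻ v in Set.Ioi (s 0), ENNReal.ofReal (f v ^ 3) ∧
      (∫⁻ v in Set.Ioi (s 0), ENNReal.ofReal (f v ^ 3))
        ≤ (27 / 16 : ℝ≥0∞) * ∑' k : ℕ, ENNReal.ofReal (f (s k) ^ 4) ∧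
      ((∑' k : ℕ, ENNReal.ofReal (f (s k) ^ 4) = ⊤) ↔
        (∫⁻ v in Set.Ioi (s 0), ENNReal.ofReal (f v ^ 3)) = ⊤) := by
  have hsa : ∀ k, a < (s k : EReal) := by
    intro k
    induction k with
    | zero => exact hs0
    | succ n ih =>
      refine lt_of_lt_of_le ih ?_
      rw [hrec n]
      exact_mod_cast (by linarith [hf_nonneg (s n)])
  have hmono : Monotone s := monotone_nat_of_le_succ (fun n => by
    rw [hrec n]; linarith [hf_nonneg (s n)])
  have htop : Filter.Tendsto s Filter.atTop Filter.atTop := by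
    rcases tendsto_atTop_of_monotone hmono with h | ⟨L, hL⟩
    · exact h
    · exfalso
      have hle : s 0 ≤ L := hmono.ge_of_tendsto hL 0
      have hLa : a < (L : EReal) := lt_of_lt_of_le hs0 (by exact_mod_cast hle)
      have h1 : Filter.Tendsto (fun k => f (s k)) Filter.atTop (nhds (f L)) := by
        rw [tendsto_iff_dist_tendsto_zero] at hL ⊢
        refine squeeze_zero (fun _ => dist_nonneg) (fun k => ?_) hL
        exact hf_lip _ _ (hsa k) hLa
      have h2 : Filter.Tendsto (fun k => s (k + 1)) Filter.atTop (nhds (L + f L / 2)) := by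
        simp only [hrec]
        exact hL.add (h1.div_const 2)
      have h3 := tendsto_nhds_unique h2 (hL.comp (Filter.tendsto_add_atTop_nat 1))
      linarith [hf_pos L hLa]
  have hU : Set.Ioi (s 0) = ⋃ k, Set.Ioc (s k) (s (k + 1)) := by
    ext x
    simp only [Set.mem_Ioi, Set.mem_iUnion, Set.mem_Ioc]
    constructor
    · intro hx
      have hex : ∃ n, x ≤ s n := (htop.eventually_ge_atTop x).exists
      classical
      have hn := Nat.find_spec hex
      cases hN : Nat.find hex with
      | zero => rw [hN] at hn; linarith
      | succ m =>
        rw [hN] at hn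
        exact ⟨m, not_le.mp (Nat.find_min hex (by omega)), hn⟩
    · rintro ⟨k, hk, -⟩
      exact lt_of_le_of_lt (hmono (Nat.zero_le k)) hk
  have hI : ∫⁻ v in Set.Ioi (s 0), ENNReal.ofReal (f v ^ 3)
      = ∑' k, ∫⁻ v in Set.Ioc (s k) (s (k + 1)), ENNReal.ofReal (f v ^ 3) := by
    rw [hU]
    exact lintegral_iUnion (fun _ => measurableSet_Ioc) hmono.pairwise_disjoint_on_Ioc_succ _
  have hb : ∀ k, ∀ v ∈ Set.Ioc (s k) (s (k + 1)),
      f (s k) / 2 ≤ f v ∧ f v ≤ 3 / 2 * f (s k) := by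
    intro k v hv
    have hva : a < (v : EReal) := lt_of_lt_of_le (hsa k) (by exact_mod_cast hv.1.le)
    have h := hf_lip v (s k) hva (hsa k)
    rw [abs_of_pos (sub_pos.mpr hv.1)] at h
    have h2 := hv.2
    rw [hrec] at h2
    have := abs_le.mp h
    constructor <;> linarith [this.1, this.2]
  have hvol : ∀ k, volume (Set.Ioc (s k) (s (k + 1))) = ENNReal.ofReal (f (s k) / 2) := by
    intro k
    rw [Real.volume_Ioc, hrec]
    congr 1
    ring
  have hc1 : (1 / 16 : ℝ≥0∞) = ENNReal.ofReal (1 / 16) := by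
    rw [ENNReal.ofReal_div_of_pos (by norm_num)]; simp
  have hc2 : (27 / 16 : ℝ≥0∞) = ENNReal.ofReal (27 / 16) := by
    rw [ENNReal.ofReal_div_of_pos (by norm_num)]; simp
  have hlow : (1 / 16 : ℝ≥0∞) * ∑' k : ℕ, ENNReal.ofReal (f (s k) ^ 4)
        ≤ ∫⁻ v in Set.Ioi (s 0), ENNReal.ofReal (f v ^ 3) := by
    rw [hI, ← ENNReal.tsum_mul_left]
    refine ENNReal.tsum_le_tsum fun k => ?_
    have h0 := hf_nonneg (s k)
    calc (1 / 16 : ℝ≥0∞) * ENNReal.ofReal (f (s k) ^ 4)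
        = ∫⁻ v in Set.Ioc (s k) (s (k + 1)), ENNReal.ofReal ((f (s k) / 2) ^ 3) := by
          rw [setLIntegral_const, hvol, hc1, ← ENNReal.ofReal_mul (by norm_num),
            ← ENNReal.ofReal_mul (by positivity)]
          congr 1
          ring
      _ ≤ _ := setLIntegral_mono' measurableSet_Ioc fun v hv =>
          ENNReal.ofReal_le_ofReal (pow_le_pow_left₀ (by positivity) (hb k v hv).1 3)
  have hupp : (∫⁻ v in Set.Ioi (s 0), ENNReal.ofReal (f v ^ 3))
        ≤ (27 / 16 : ℝ≥0∞) * ∑' k : ℕ, ENNReal.ofReal (f (s k) ^ 4) := by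
    rw [hI, ← ENNReal.tsum_mul_left]
    refine ENNReal.tsum_le_tsum fun k => ?_
    have h0 := hf_nonneg (s k)
    calc _ ≤ ∫⁻ v in Set.Ioc (s k) (s (k + 1)), ENNReal.ofReal ((3 / 2 * f (s k)) ^ 3) :=
          setLIntegral_mono' measurableSet_Ioc fun v hv =>
          ENNReal.ofReal_le_ofReal (pow_le_pow_left₀ (hf_nonneg v) (hb k v hv).2 3)
      _ = _ := by
          rw [setLIntegral_const, hvol, hc2, ← ENNReal.ofReal_mul (by positivity),
            ← ENNReal.ofReal_mul (by positivity)]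
          congr 1
          ring
  refine ⟨hlow, hupp, fun h => ?_, fun h => ?_⟩
  · rw [h, hc1, ENNReal.mul_top (by simp)] at hlow
    exact top_le_iff.mp hlow
  · rw [h, hc2] at hupp
    by_contra hne
    exact ENNReal.mul_ne_top ENNReal.ofReal_ne_top hne (top_le_iff.mp hupp)
end

section
/- Let $(\Lambda,\mathcal{A},\mu)$ be a measure space and let $g_1,g_2:\Lambda\to(0,\infty)$ be measurable with $\int_\Lambda g_1\,d\mu = \int_\Lambda g_2\,d\mu = 1$. Suppose $a\in(0,1]$ is such that $g_1(y_1)\,g_2(y_2) \ge a\, g_1(y_2)\, g_2(y_1)$ for all $y_1,y_2\in\Lambda$. Then $a\, g_2(y) \le g_1(y) \le a^{-1} g_2(y)$ for every $y\in\Lambda$. -/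
open MeasureTheory

/-- If `g₁, g₂` are measurable positive probability densities with respect to a
measure `μ` and `a ∈ (0,1]` satisfies the cross-ratio bound
`g₁(y₁) g₂(y₂) ≥ a g₁(y₂) g₂(y₁)` for all `y₁, y₂`, then
`a g₂(y) ≤ g₁(y) ≤ a⁻¹ g₂(y)` for every `y`. -/
theorem stmt4 {Λ : Type*} [MeasurableSpace Λ] (μ : Measure Λ)
    (g₁ g₂ : Λ → ℝ) (hg₁m : Measurable g₁) (hg₂m : Measurable g₂)
    (hg₁pos : ∀ y, 0 < g₁ y) (hg₂pos : ∀ y, 0 < g₂ y)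
    (hg₁int : ∫ y, g₁ y ∂μ = 1) (hg₂int : ∫ y, g₂ y ∂μ = 1)
    (a : ℝ) (ha0 : 0 < a) (ha1 : a ≤ 1)
    (hcross : ∀ y₁ y₂, a * (g₁ y₂ * g₂ y₁) ≤ g₁ y₁ * g₂ y₂) :
    ∀ y, a * g₂ y ≤ g₁ y ∧ g₁ y ≤ a⁻¹ * g₂ y := by
  have i₁ : Integrable g₁ μ := by
    by_contra h
    rw [integral_undef h] at hg₁int
    exact zero_ne_one hg₁int
  have i₂ : Integrable g₂ μ := by
    by_contra h
    rw [integral_undef h] at hg₂int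
    exact zero_ne_one hg₂int
  intro y
  constructor
  · have h : ∫ z, (a * g₂ y) * g₁ z ∂μ ≤ ∫ z, g₁ y * g₂ z ∂μ :=
      integral_mono (i₁.const_mul _) (i₂.const_mul _) fun z => by
        have := hcross y z
        show (a * g₂ y) * g₁ z ≤ g₁ y * g₂ z
        linarith
    rw [integral_const_mul, integral_const_mul, hg₁int, hg₂int] at h
    linarith
  · have h : ∫ z, (a * g₁ y) * g₂ z ∂μ ≤ ∫ z, g₂ y * g₁ z ∂μ :=
      integral_mono (i₂.const_mul _) (i₁.const_mul _) fun z => by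
        have := hcross z y
        show (a * g₁ y) * g₂ z ≤ g₂ y * g₁ z
        linarith
    rw [integral_const_mul, integral_const_mul, hg₁int, hg₂int] at h
    rw [le_inv_mul_iff₀ ha0]
    linarith
end

section
/- Let $n\ge 1$, let $(E_i,\mathcal{E}_i,\mu_i)$, $i=0,1,\dots,n$, be $\sigma$-finite measure spaces, and for each $1\le i\le n$ let $k_i:E_{i-1}\times E_i\to(0,\infty)$ be measurable with $\int_{E_i} k_i(x,y)\,\mu_i(dy)=1$ for every $x\in E_{i-1}$. Suppose $a\in(0,1]$ is such that for every $i$ and all $x_1,x_2\in E_{i-1}$, $y_1,y_2\in E_i$: $k_i(x_1,y_1)\,k_i(x_2,y_2) \ge a\, k_i(x_1,y_2)\,k_i(x_2,y_1)$. Define composed densities by $K_1=k_1$ and $K_i(x,y)=\int_{E_{i-1}} K_{i-1}(x,v)\,k_i(v,y)\,\mu_{i-1}(dv)$ for $x\in E_0$, $y\in E_i$. Then for all $x_1,x_2\in E_0$ and $y_1,y_2\in E_n$: $K_n(x_1,y_1)\,K_n(x_2,y_2) \ge a_n\, K_n(x_1,y_2)\,K_n(x_2,y_1)$, where $a_n =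 1-(1-a)(1-a^2)^{n-1}$. -/
open MeasureTheory

lemma aux_case {a b c A A' B B' : ℝ} (ha0 : 0 ≤ a) (ha1 : a ≤ 1) (hb0 : 0 ≤ b) (hb1 : b ≤ 1)
    (hc1 : c ≤ 1) (hc : c * (1 + a * b) ≤ a + b)
    (hA' : 0 ≤ A') (hB : 0 ≤ B) (hB' : 0 ≤ B')
    (h1 : b * A' ≤ A) (h4 : a * B ≤ B') (hBB : B' ≤ B) :
    c * (A * B' + A' * B) ≤ A * B + A' * B' := by
  have e1 : 0 ≤ B - c * B' := by nlinarith
  have e2 : 0 ≤ (A - b * A') * (B - c * B') := mul_nonneg (by linarith) e1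
  have e3 : 0 ≤ 1 - c * b := by nlinarith
  have e4 : 0 ≤ A' * ((B' - a * B) * (1 - c * b)) :=
    mul_nonneg hA' (mul_nonneg (by linarith) e3)
  have e5 : 0 ≤ (A' * B) * (a + b - c * (1 + a * b)) :=
    mul_nonneg (mul_nonneg hA' hB) (by linarith)
  nlinarith

lemma aux_pointwise {a b c A A' B B' : ℝ} (ha0 : 0 ≤ a) (ha1 : a ≤ 1) (hb0 : 0 ≤ b) (hb1 : b ≤ 1)
    (hc1 : c ≤ 1) (hc : c * (1 + a * b) ≤ a + b)
    (hA : 0 ≤ A) (hA' : 0 ≤ A') (hB : 0 ≤ B) (hB' : 0 ≤ B')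
    (h1 : b * A' ≤ A) (h2 : b * A ≤ A') (h3 : a * B' ≤ B) (h4 : a * B ≤ B') :
    c * (A * B' + A' * B) ≤ A * B + A' * B' := by
  rcases le_total B' B with h | h
  · exact aux_case ha0 ha1 hb0 hb1 hc1 hc hA' hB hB' h1 h4 h
  · have := aux_case ha0 ha1 hb0 hb1 hc1 hc hA hB' hB h2 h3 h
    linarith

lemma aux_int {F : Type*} [MeasurableSpace F] (μ : Measure F) [SigmaFinite μ]
    {a b c : ℝ} (ha0 : 0 ≤ a) (ha1 : a ≤ 1) (hb0 : 0 ≤ b) (hb1 : b ≤ 1)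
    (hc1 : c ≤ 1) (hc : c * (1 + a * b) ≤ a + b)
    (f₁ f₂ g₁ g₂ : F → ℝ) (hf₁ : ∀ v, 0 ≤ f₁ v) (hf₂ : ∀ v, 0 ≤ f₂ v)
    (hg₁ : ∀ v, 0 ≤ g₁ v) (hg₂ : ∀ v, 0 ≤ g₂ v)
    (hf : ∀ u v, b * (f₁ v * f₂ u) ≤ f₁ u * f₂ v)
    (hg : ∀ u v, a * (g₁ v * g₂ u) ≤ g₁ u * g₂ v)
    (i11 : Integrable (fun v => f₁ v * g₁ v) μ) (i12 : Integrable (fun v => f₁ v * g₂ v) μ)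
    (i21 : Integrable (fun v => f₂ v * g₁ v) μ) (i22 : Integrable (fun v => f₂ v * g₂ v) μ) :
    c * ((∫ v, f₁ v * g₂ v ∂μ) * (∫ v, f₂ v * g₁ v ∂μ))
      ≤ (∫ v, f₁ v * g₁ v ∂μ) * (∫ v, f₂ v * g₂ v ∂μ) := by
  have key : ∫ z, c * ((f₁ z.1 * g₂ z.1) * (f₂ z.2 * g₁ z.2)
        + (f₂ z.1 * g₁ z.1) * (f₁ z.2 * g₂ z.2)) ∂(μ.prod μ)
      ≤ ∫ z, ((f₁ z.1 * g₁ z.1) * (f₂ z.2 * g₂ z.2)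
        + (f₂ z.1 * g₂ z.1) * (f₁ z.2 * g₁ z.2)) ∂(μ.prod μ) := by
    apply integral_mono
    · exact ((i12.mul_prod i21).add (i21.mul_prod i12)).const_mul c
    · exact (i11.mul_prod i22).add (i22.mul_prod i11)
    · rintro ⟨u, v⟩
      have := aux_pointwise ha0 ha1 hb0 hb1 hc1 hc
        (mul_nonneg (hf₁ u) (hf₂ v)) (mul_nonneg (hf₁ v) (hf₂ u))
        (mul_nonneg (hg₁ u) (hg₂ v)) (mul_nonneg (hg₁ v) (hg₂ u))
        (hf u v) (hf v u) (hg u v) (hg v u)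
      dsimp only
      nlinarith
  rw [integral_const_mul, integral_add (i12.mul_prod i21) (i21.mul_prod i12),
    integral_add (i11.mul_prod i22) (i22.mul_prod i11)] at key
  rw [integral_prod_mul (fun v => f₁ v * g₂ v) (fun v => f₂ v * g₁ v),
    integral_prod_mul (fun v => f₂ v * g₁ v) (fun v => f₁ v * g₂ v),
    integral_prod_mul (fun v => f₁ v * g₁ v) (fun v => f₂ v * g₂ v),
    integral_prod_mul (fun v => f₂ v * g₂ v) (fun v => f₁ v * g₁ v)] at key
  nlinarith

lemma aux_bdd {F G : Type*} [MeasurableSpace G] (ν : Measure G)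
    (k : F → G → ℝ) (hk_int : ∀ x, ∫ y, k x y ∂ν = 1) {a : ℝ} (ha0 : 0 < a)
    (hk : ∀ (x₁ x₂ : F) (y₁ y₂ : G), a * (k x₁ y₂ * k x₂ y₁) ≤ k x₁ y₁ * k x₂ y₂)
    (hi : ∀ x, Integrable (k x) ν) (u v : F) (y : G) : a * k u y ≤ k v y := by
  have := integral_mono (μ := ν) (f := fun y₂ => (a * k u y) * k v y₂)
    (g := fun y₂ => k v y * k u y₂) ((hi v).const_mul _) ((hi u).const_mul _)
    (fun y₂ => by have := hk v u y y₂; dsimp only; linarith)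
  rw [integral_const_mul, integral_const_mul, hk_int, hk_int] at this
  linarith



/-- (Lemma 2.9 of the paper, abstract form.)  Given σ-finite measure spaces
`E 0, …, E (m+1)` and, for each `i ≤ m`, a positive probability transition density
`k i : E i → E (i+1) → (0,∞)` satisfying the cross-ratio bound with constant `a ∈ (0,1]`,
the composed densities `K i : E 0 → E (i+1)` (with `K 0 = k 0` and
`K (i+1) (x,y) = ∫ K i (x,v) k (i+1) (v,y) μ_{i+1}(dv)`) satisfy the cross-ratio bound with
constant `a_n = 1 - (1-a) (1-a²)^m` (here `n = m + 1` kernels are composed). -/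
theorem stmt5 (m : ℕ)
    (E : ℕ → Type*) [∀ i, MeasurableSpace (E i)]
    (μ : ∀ i, Measure (E i)) [∀ i, SigmaFinite (μ i)]
    (k : ∀ i : ℕ, E i → E (i + 1) → ℝ)
    (hk_meas : ∀ i, i ≤ m → Measurable (Function.uncurry (k i)))
    (hk_pos : ∀ i, i ≤ m → ∀ x y, 0 < k i x y)
    (hk_int : ∀ i, i ≤ m → ∀ x, ∫ y, k i x y ∂(μ (i + 1)) = 1)
    (a : ℝ) (ha0 : 0 < a) (ha1 : a ≤ 1)
    (hk_cross : ∀ i, i ≤ m → ∀ (x₁ x₂ : E i) (y₁ y₂ : E (i + 1)),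
      a * (k i x₁ y₂ * k i x₂ y₁) ≤ k i x₁ y₁ * k i x₂ y₂)
    (K : ∀ i : ℕ, E 0 → E (i + 1) → ℝ)
    (hK0 : ∀ x y, K 0 x y = k 0 x y)
    (hKsucc : ∀ i, i < m → ∀ x y,
      K (i + 1) x y = ∫ v, K i x v * k (i + 1) v y ∂(μ (i + 1)))
    (x₁ x₂ : E 0) (y₁ y₂ : E (m + 1)) :
    (1 - (1 - a) * (1 - a ^ 2) ^ m) * (K m x₁ y₂ * K m x₂ y₁)
      ≤ K m x₁ y₁ * K m x₂ y₂ := by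
  have hki : ∀ i, i ≤ m → ∀ x, Integrable (k i x) (μ (i + 1)) := by
    intro i hi x
    by_contra h
    have := hk_int i hi x
    rw [integral_undef h] at this
    exact zero_ne_one this
  have hprod : ∀ i, i < m → ∀ f : E (i + 1) → ℝ, Integrable f (μ (i + 1)) → ∀ y,
      Integrable (fun v => f v * k (i + 1) v y) (μ (i + 1)) := by
    intro i hi f hf y
    rcases isEmpty_or_nonempty (E (i + 1)) with h | ⟨⟨v₀⟩⟩
    · have : μ (i + 1) = 0 := Measure.eq_zero_of_isEmpty _
      rw [this]
      exact integrable_zero_measure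
    · have hm : Measurable (fun v => k (i + 1) v y) :=
        (hk_meas (i + 1) hi).comp (measurable_id.prodMk measurable_const)
      refine hf.mul_bdd (c := k (i + 1) v₀ y / a) hm.aestronglyMeasurable
        (Filter.Eventually.of_forall fun v => ?_)
      rw [Real.norm_of_nonneg (hk_pos (i + 1) hi v y).le, le_div_iff₀ ha0]
      have := aux_bdd (μ (i + 1 + 1)) (k (i + 1)) (hk_int (i + 1) hi) ha0
        (hk_cross (i + 1) hi) (hki (i + 1) hi) v v₀ y
      linarith
  have main : ∀ i, i ≤ m → (∀ x y, 0 ≤ K i x y) ∧ (∀ x, Integrable (K i x) (μ (i + 1))) ∧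
      ∀ (x₁ x₂ : E 0) (y₁ y₂ : E (i + 1)),
      (1 - (1 - a) * (1 - a ^ 2) ^ i) * (K i x₁ y₂ * K i x₂ y₁) ≤ K i x₁ y₁ * K i x₂ y₂ := by
    intro i
    induction i with
    | zero =>
      intro hi
      have hKk : K 0 = k 0 := by funext x y; exact hK0 x y
      rw [hKk]
      refine ⟨fun x y => (hk_pos 0 hi x y).le, hki 0 hi, fun x₁ x₂ y₁ y₂ => ?_⟩
      have := hk_cross 0 hi x₁ x₂ y₁ y₂
      simpa using this
    | succ i ih =>
      intro hi
      obtain ⟨hpos, hint, hcr⟩ := ih (by omega)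
      have him : i < m := hi
      have hq0 : 0 ≤ 1 - a ^ 2 := by nlinarith
      have hq1 : 1 - a ^ 2 ≤ 1 := by nlinarith
      have hp0 : 0 ≤ (1 - a ^ 2) ^ i := pow_nonneg hq0 i
      have hp1 : (1 - a ^ 2) ^ i ≤ 1 := pow_le_one₀ hq0 hq1
      refine ⟨fun x y => ?_, fun x => ?_, fun x₁ x₂ y₁ y₂ => ?_⟩
      · rw [hKsucc i him]
        exact integral_nonneg fun v => mul_nonneg (hpos x v) (hk_pos (i + 1) hi v y).le
      · have hF : Integrable (fun z : E (i + 1) × E (i + 1 + 1) => K i x z.1 * k (i + 1) z.1 z.2)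
            ((μ (i + 1)).prod (μ (i + 1 + 1))) := by
          rw [integrable_prod_iff]
          · refine ⟨Filter.Eventually.of_forall fun v => (hki (i + 1) hi v).const_mul (K i x v), ?_⟩
            refine (hint x).congr (Filter.Eventually.of_forall fun v => ?_)
            have : ∀ y, ‖K i x v * k (i + 1) v y‖ = K i x v * k (i + 1) v y := fun y =>
              Real.norm_of_nonneg (mul_nonneg (hpos x v) (hk_pos (i + 1) hi v y).le)
            simp only [this]
            rw [integral_const_mul, hk_int (i + 1) hi, mul_one]
          · exact (hint x).1.comp_fst.mul (hk_meas (i + 1) hi).aestronglyMeasurable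
        have := hF.integral_prod_right
        refine this.congr (Filter.Eventually.of_forall fun y => ?_)
        exact (hKsucc i him x y).symm
      · simp only [hKsucc i him]
        set p := (1 - a ^ 2) ^ i with hp
        have hb0 : 0 ≤ 1 - (1 - a) * p := by nlinarith
        have hb1 : 1 - (1 - a) * p ≤ 1 := by nlinarith
        have hd : 0 ≤ (1 - a) * p := mul_nonneg (by linarith) hp0
        have hpp : (1 - a ^ 2) ^ (i + 1) = p * (1 - a ^ 2) := by rw [hp, pow_succ]
        rw [hpp]
        have hgen : ∀ b : ℝ, 0 ≤ b → b ≤ 1 →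
            (1 - (1 - b) * (1 - a ^ 2)) * (1 + a * b) ≤ a + b := by
          intro b h0 h1
          have : 0 ≤ (1 - b) * (1 - a) * (a + a * b * (1 + a)) :=
            mul_nonneg (mul_nonneg (by linarith) (by linarith)) (by positivity)
          nlinarith
        refine aux_int (μ (i + 1)) (b := 1 - (1 - a) * p) ha0.le ha1 hb0 hb1 ?_ ?_ (K i x₁) (K i x₂)
          (fun v => k (i + 1) v y₁) (fun v => k (i + 1) v y₂) (hpos x₁) (hpos x₂)
          (fun v => (hk_pos (i + 1) hi v y₁).le) (fun v => (hk_pos (i + 1) hi v y₂).le)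
          (fun u v => hcr x₁ x₂ u v) (fun u v => ?_)
          (hprod i him _ (hint x₁) _) (hprod i him _ (hint x₁) _)
          (hprod i him _ (hint x₂) _) (hprod i him _ (hint x₂) _)
        · have := mul_nonneg hd hq0
          linarith
        · have := hgen _ hb0 hb1
          have e : 1 - (1 - a) * (p * (1 - a ^ 2))
            = 1 - (1 - (1 - (1 - a) * p)) * (1 - a ^ 2) := by ring
          rw [e]
          exact this
        · have := hk_cross (i + 1) hi u v y₁ y₂
          linarith
  exact (main m le_rfl).2.2 x₁ x₂ y₁ y₂
end

section
/- Let $Y_1,Y_2,Z_1,Z_2$ be real random variables on a common probability space such that $Z_1$ and $Z_2$ are independent. Let $c_1\in(0,1]$ and $c_2>0$ and assume: (i) $P(Z_2\in A) \ge c_1 P(Z_1\in A)$ for every Borel set $A\subset\mathbb{R}$; (ii) $P(Y_1-Y_2\ge c_2) < c_1/16$; (iii) $P(Z_2\in[v,v+c_2)) < c_1/8$ for every $v\in\mathbb{R}$. Then $P(Y_1+Z_1 < Y_2+Z_2) \ge c_1/8$. -/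
open MeasureTheory ProbabilityTheory

lemma exists_median_aux (m : Measure ℝ) [IsProbabilityMeasure m] :
    ∃ v : ℝ, 1 / 2 ≤ m.real (Set.Iic v) ∧ 1 / 2 ≤ m.real (Set.Ici v) := by
  set f := cdf m with hf
  have hne : ∃ x, 1 / 2 ≤ f x :=
    (((tendsto_cdf_atTop m).eventually (lt_mem_nhds (by norm_num : (1 / 2 : ℝ) < 1))).exists).imp
      fun _ h => h.le
  obtain ⟨b, hb⟩ := ((tendsto_cdf_atBot m).eventually
    (gt_mem_nhds (by norm_num : (0 : ℝ) < 1 / 2))).exists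
  have hbdd : BddBelow {x | 1 / 2 ≤ f x} := by
    refine ⟨b, fun x hx => ?_⟩
    by_contra hlt
    have h1 := f.mono (not_le.mp hlt).le
    have h2 : 1 / 2 ≤ f x := hx
    have h3 : f b < 1 / 2 := hb
    linarith
  set v := sInf {x | 1 / 2 ≤ f x} with hv
  have hlow : ∀ x, x < v → f x < 1 / 2 := fun x hx => by
    by_contra h
    exact absurd (csInf_le hbdd (not_lt.mp h)) (not_le.mpr hx)
  have hup : ∀ x, v < x → 1 / 2 ≤ f x := fun x hx => by
    obtain ⟨y, hy, hyx⟩ := exists_lt_of_csInf_lt hne hx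
    exact le_trans hy (f.mono hyx.le)
  refine ⟨v, ?_, ?_⟩
  · rw [← cdf_eq_real, ← hf, ← f.iInf_Ioi_eq v]
    exact le_ciInf fun x => hup x.1 x.2
  · have hL : Function.leftLim f v ≤ 1 / 2 := by
      refine le_of_tendsto (f.mono.tendsto_leftLim v) ?_
      filter_upwards [self_mem_nhdsWithin] with x hx using (hlow x hx).le
    have hI : m (Set.Ici v) = ENNReal.ofReal (1 - Function.leftLim f v) := by
      conv_lhs => rw [← measure_cdf m]
      exact f.measure_Ici (tendsto_cdf_atTop m) v
    rw [measureReal_def, hI, ENNReal.toReal_ofReal (by linarith)]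
    linarith

/-- (Inequality (3.15) of the paper.)  If `Z₁, Z₂` are independent,
`c₁ ∈ (0,1]`, `c₂ > 0`, the law of `Z₂` dominates `c₁` times the law of `Z₁`,
`P(Y₁ - Y₂ ≥ c₂) < c₁/16`, and `P(Z₂ ∈ [v, v+c₂)) < c₁/8` for every `v`, then
`P(Y₁ + Z₁ < Y₂ + Z₂) ≥ c₁/8`. -/
theorem stmt8 {Ω : Type*} [MeasurableSpace Ω] (μ : Measure Ω) [IsProbabilityMeasure μ]
    (Y₁ Y₂ Z₁ Z₂ : Ω → ℝ)
    (hY₁ : Measurable Y₁) (hY₂ : Measurable Y₂)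
    (hZ₁ : Measurable Z₁) (hZ₂ : Measurable Z₂)
    (h_indep : IndepFun Z₁ Z₂ μ)
    (c₁ c₂ : ℝ) (hc₁0 : 0 < c₁) (hc₁1 : c₁ ≤ 1) (hc₂ : 0 < c₂)
    (h1 : ∀ A : Set ℝ, MeasurableSet A →
      ENNReal.ofReal c₁ * μ (Z₁ ⁻¹' A) ≤ μ (Z₂ ⁻¹' A))
    (h2 : μ {ω | c₂ ≤ Y₁ ω - Y₂ ω} < ENNReal.ofReal (c₁ / 16))
    (h3 : ∀ v : ℝ, μ {ω | Z₂ ω ∈ Set.Ico v (v + c₂)} < ENNReal.ofReal (c₁ / 8)) :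
    ENNReal.ofReal (c₁ / 8) ≤ μ {ω | Y₁ ω + Z₁ ω < Y₂ ω + Z₂ ω} := by
  haveI : IsProbabilityMeasure (μ.map Z₁) := Measure.isProbabilityMeasure_map hZ₁.aemeasurable
  obtain ⟨v, hv1, hv2⟩ := exists_median_aux (μ.map Z₁)
  rw [map_measureReal_apply hZ₁ measurableSet_Iic] at hv1
  rw [map_measureReal_apply hZ₁ measurableSet_Ici] at hv2
  have a1 : c₁ * μ.real (Z₁ ⁻¹' Set.Ici v) ≤ μ.real (Z₂ ⁻¹' Set.Ici v) := by
    have h := ENNReal.toReal_mono (measure_ne_top μ _) (h1 (Set.Ici v) measurableSet_Ici)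
    rwa [ENNReal.toReal_mul, ENNReal.toReal_ofReal hc₁0.le] at h
  have a2 : μ.real {ω | c₂ ≤ Y₁ ω - Y₂ ω} < c₁ / 16 :=
    (ENNReal.lt_ofReal_iff_toReal_lt (measure_ne_top μ _)).mp h2
  have a3 : μ.real (Z₂ ⁻¹' Set.Ico v (v + c₂)) < c₁ / 8 :=
    (ENNReal.lt_ofReal_iff_toReal_lt (measure_ne_top μ _)).mp (h3 v)
  have a4 : μ.real (Z₂ ⁻¹' Set.Ici v) ≤
      μ.real (Z₂ ⁻¹' Set.Ico v (v + c₂)) + μ.real (Z₂ ⁻¹' Set.Ici (v + c₂)) := by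
    refine le_trans (measureReal_mono ?_) (measureReal_union_le _ _)
    intro ω hω
    rcases lt_or_ge (Z₂ ω) (v + c₂) with h | h
    · exact Or.inl ⟨hω, h⟩
    · exact Or.inr h
  have a5 : μ.real (Z₁ ⁻¹' Set.Iic v ∩ Z₂ ⁻¹' Set.Ici (v + c₂)) =
      μ.real (Z₁ ⁻¹' Set.Iic v) * μ.real (Z₂ ⁻¹' Set.Ici (v + c₂)) := by
    simp only [measureReal_def]
    rw [h_indep.measure_inter_preimage_eq_mul _ _ measurableSet_Iic measurableSet_Ici,
      ENNReal.toReal_mul]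
  have a6 : μ.real (Z₁ ⁻¹' Set.Iic v ∩ Z₂ ⁻¹' Set.Ici (v + c₂)) ≤
      μ.real {ω | c₂ ≤ Y₁ ω - Y₂ ω} + μ.real {ω | Y₁ ω + Z₁ ω < Y₂ ω + Z₂ ω} := by
    refine le_trans (measureReal_mono ?_) (measureReal_union_le _ _)
    rintro ω ⟨hω1, hω2⟩
    simp only [Set.mem_preimage, Set.mem_Iic, Set.mem_Ici] at hω1 hω2
    rcases lt_or_ge (Y₁ ω - Y₂ ω) c₂ with h | h
    · right
      show Y₁ ω + Z₁ ω < Y₂ ω + Z₂ ω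
      linarith
    · exact Or.inl h
  refine (ENNReal.ofReal_le_iff_le_toReal (measure_ne_top μ _)).mpr ?_
  rw [← measureReal_def]
  have b1 : c₁ * (1 / 2) ≤ c₁ * μ.real (Z₁ ⁻¹' Set.Ici v) :=
    mul_le_mul_of_nonneg_left hv2 hc₁0.le
  have b2 : 3 * c₁ / 8 ≤ μ.real (Z₂ ⁻¹' Set.Ici (v + c₂)) := by linarith
  have b3 : (1 / 2) * (3 * c₁ / 8) ≤
      μ.real (Z₁ ⁻¹' Set.Iic v) * μ.real (Z₂ ⁻¹' Set.Ici (v + c₂)) :=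
    mul_le_mul hv1 b2 (by positivity) (by positivity)
  linarith
end

section
/- Let $\rho\in(0,1)$, let $j:\mathbb{N}\to\mathbb{Z}$ be injective, and let $c:\mathbb{N}\to[0,\infty)$ be nonincreasing. Then $\sum_{i=0}^{\infty}\sum_{n=i}^{\infty} \rho^{|j(n)-j(i)|}\, c(i)\,c(n) \le \frac{1+\rho}{1-\rho}\,\sum_{i=0}^{\infty} c(i)^2$. -/
theorem hasSum_geom_int (ρ : ℝ) (hρ0 : 0 < ρ) (hρ1 : ρ < 1) :
    HasSum (fun m : ℤ => ρ ^ m.natAbs) ((1 + ρ) / (1 - ρ)) := by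
  have h := hasSum_geometric_of_lt_one hρ0.le hρ1
  have h2 := h.mul_left ρ
  have e : (1 + ρ) / (1 - ρ) = (1 - ρ)⁻¹ + ρ * (1 - ρ)⁻¹ := by
    rw [div_eq_mul_inv]; ring
  rw [e]
  apply HasSum.of_nat_of_neg_add_one
  · simpa using h
  · have e2 : (fun n : ℕ => ρ ^ (-((n : ℤ) + 1)).natAbs) = fun n : ℕ => ρ * ρ ^ n := by
      funext n
      have : (-((n : ℤ) + 1)).natAbs = n + 1 := by omega
      rw [this, pow_succ']
    rw [e2]
    exact h2

theorem tsum_geom_int (ρ : ℝ) (hρ0 : 0 < ρ) (hρ1 : ρ < 1) :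
    ∑' m : ℤ, ENNReal.ofReal (ρ ^ m.natAbs) = ENNReal.ofReal ((1 + ρ) / (1 - ρ)) := by
  have h := hasSum_geom_int ρ hρ0 hρ1
  rw [← h.tsum_eq, ENNReal.ofReal_tsum_of_nonneg (fun m => by positivity) h.summable]

/-- (Summation device of display (2.67) of the paper.)  For `ρ ∈ (0,1)`,
an injective `j : ℕ → ℤ` and a nonincreasing `c : ℕ → [0,∞)`,
`∑_{i=0}^∞ ∑_{n=i}^∞ ρ^{|j(n)-j(i)|} c(i) c(n) ≤ ((1+ρ)/(1-ρ)) ∑_{i=0}^∞ c(i)²`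
(the inner sum over `n ≥ i` is written via `n = i + k`). -/
theorem stmt11 (ρ : ℝ) (hρ0 : 0 < ρ) (hρ1 : ρ < 1)
    (j : ℕ → ℤ) (hj : Function.Injective j)
    (c : ℕ → ℝ) (hc0 : ∀ i, 0 ≤ c i) (hc_mono : Antitone c) :
    ∑' i : ℕ, ∑' k : ℕ,
        ENNReal.ofReal (ρ ^ (j (i + k) - j i).natAbs * c i * c (i + k))
      ≤ ENNReal.ofReal ((1 + ρ) / (1 - ρ)) * ∑' i : ℕ, ENNReal.ofReal (c i ^ 2) := by
  rw [← ENNReal.tsum_mul_left]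
  refine ENNReal.tsum_le_tsum fun i => ?_
  have hinj : Function.Injective (fun k : ℕ => j (i + k) - j i) := by
    intro a b hab
    have h1 : j (i + a) = j (i + b) := by
      simp only at hab
      omega
    have := hj h1
    omega
  calc ∑' k : ℕ, ENNReal.ofReal (ρ ^ (j (i + k) - j i).natAbs * c i * c (i + k))
      ≤ ∑' k : ℕ, ENNReal.ofReal (ρ ^ (j (i + k) - j i).natAbs) * ENNReal.ofReal (c i ^ 2) := by
        refine ENNReal.tsum_le_tsum fun k => ?_
        rw [← ENNReal.ofReal_mul (by positivity)]
        apply ENNReal.ofReal_le_ofReal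
        rw [pow_two, ← mul_assoc]
        exact mul_le_mul_of_nonneg_left (hc_mono (Nat.le_add_right i k))
          (mul_nonneg (by positivity) (hc0 i))
    _ = (∑' k : ℕ, ENNReal.ofReal (ρ ^ (j (i + k) - j i).natAbs)) * ENNReal.ofReal (c i ^ 2) :=
        ENNReal.tsum_mul_right
    _ ≤ _ := by
        rw [← tsum_geom_int ρ hρ0 hρ1]
        gcongr
        exact ENNReal.tsum_comp_le_tsum_of_injective hinj
          (fun m : ℤ => ENNReal.ofReal (ρ ^ m.natAbs))
end

section
/- Let $d\ge2$. There exists a constant $c_4\in(0,1)$ depending only on $d$ with the following property. Let $f$, $(s_k)$ and $D_f$ be as in the context, let $n$ be such that $a<s_n\le b$, let $D'$ be the connected component of $D_f\setminus\Lambda_{s_n}$ containing the points $x$ with $x^d<s_n$, and let $h$ be a positive harmonic function on $D'$ which extends continuously by $0$ to $\partial D'\setminus\Lambda_{s_n}$. Then for every $k$ with $a<s_k<s_{k+1}\le s_n$ and every $x\in\Lambda_{s_k}$ with $|\tilde x|>(1-c_4)f(s_k)$: $h(x)\le h(z_k)/2$, where $z_k=(0,\dots,0,s_k)$. In particular the maximum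 of $h$ over $\Lambda_{s_k}$ is attained at a point $x$ with $|\tilde x|\le(1-c_4)f(s_k)$. -/
open Filter Topology

noncomputable section

/-- The last coordinate `x^d` of a point of `ℝ^d` (with `d = m + 1`). -/
def lastCoord (m : ℕ) (x : EuclideanSpace ℝ (Fin (m + 1))) : ℝ := x (Fin.last m)

/-- `|x̃|`, the norm of the first `d - 1` coordinates of `x ∈ ℝ^d` (with `d = m + 1`). -/
def tildeNorm (m : ℕ) (x : EuclideanSpace ℝ (Fin (m + 1))) : ℝ :=
  Real.sqrt (∑ i : Fin m, x (Fin.castSucc i) ^ 2)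

/-- The tube domain `D_f = {x ∈ ℝ^d : |x̃| < f(x^d)}`. -/
def tube (m : ℕ) (f : ℝ → ℝ) : Set (EuclideanSpace ℝ (Fin (m + 1))) :=
  {x | tildeNorm m x < f (lastCoord m x)}

/-- The cross-section `Λ_t = {x ∈ D_f : x^d = t}`. -/
def cross (m : ℕ) (f : ℝ → ℝ) (t : ℝ) : Set (EuclideanSpace ℝ (Fin (m + 1))) :=
  {x | x ∈ tube m f ∧ lastCoord m x = t}

/-- `h` is harmonic on `s`: twice continuously differentiable on `s`, with vanishing
Laplacian (the sum of the pure second derivatives in the coordinate directions). -/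
def IsHarmonicOn (m : ℕ) (h : EuclideanSpace ℝ (Fin (m + 1)) → ℝ)
    (s : Set (EuclideanSpace ℝ (Fin (m + 1)))) : Prop :=
  ContDiffOn ℝ 2 h s ∧
  ∀ x ∈ s, ∑ i : Fin (m + 1),
    iteratedFDerivWithin ℝ 2 h s x (fun _ => EuclideanSpace.single i 1) = 0


namespace Tube
open MeasureTheory Metric

abbrev Eu (n : ℕ) := EuclideanSpace ℝ (Fin n)

/-- Laplacian by iterated directional derivatives. -/
def lap {n : ℕ} (v : Eu n → ℝ) (x : Eu n) : ℝ :=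
  ∑ i, fderiv ℝ (fun y => fderiv ℝ v y (EuclideanSpace.single i 1)) x (EuclideanSpace.single i 1)

def eta {n : ℕ} (y : Eu n) : ℝ := max (1 - ‖y‖ ^ 2) 0

def Psi {n : ℕ} (y : Eu n) : ℝ := eta y ^ 2

variable {n : ℕ}

lemma eta_cont : Continuous (eta : Eu n → ℝ) := by unfold eta; fun_prop
lemma Psi_cont : Continuous (Psi : Eu n → ℝ) := eta_cont.pow 2
lemma eta_nonneg (y : Eu n) : 0 ≤ eta y := le_max_right _ _
lemma Psi_nonneg (y : Eu n) : 0 ≤ Psi y := sq_nonneg _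
lemma eta_le_one (y : Eu n) : eta y ≤ 1 := by
  unfold eta; exact max_le (by nlinarith [sq_nonneg ‖y‖]) (by norm_num)
lemma eta_eq_zero {y : Eu n} (h : 1 ≤ ‖y‖) : eta y = 0 := by
  unfold eta; exact max_eq_right (by nlinarith)
lemma eta_eq {y : Eu n} (h : ‖y‖ ≤ 1) : eta y = 1 - ‖y‖ ^ 2 := by
  unfold eta; exact max_eq_left (by nlinarith [norm_nonneg y])
lemma eta_mono {y z : Eu n} (h : ‖y‖ ≤ ‖z‖) : eta z ≤ eta y := by
  unfold eta; exact max_le_max (by nlinarith [norm_nonneg y]) le_rfl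
lemma Psi_mono {y z : Eu n} (h : ‖y‖ ≤ ‖z‖) : Psi z ≤ Psi y := by
  unfold Psi; exact pow_le_pow_left₀ (eta_nonneg _) (eta_mono h) 2
lemma eta_supp : HasCompactSupport (eta : Eu n → ℝ) := by
  apply HasCompactSupport.intro (isCompact_closedBall (0 : Eu n) 1)
  intro x hx
  apply eta_eq_zero
  simp only [mem_closedBall, dist_zero_right, not_le] at hx; exact hx.le
lemma Psi_supp : HasCompactSupport (Psi : Eu n → ℝ) := by
  apply HasCompactSupport.intro (isCompact_closedBall (0 : Eu n) 1)
  intro x hx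
  unfold Psi
  rw [eta_eq_zero]; · simp
  simp only [mem_closedBall, dist_zero_right, not_le] at hx; exact hx.le
lemma eta_integrable : Integrable (eta : Eu n → ℝ) := eta_cont.integrable_of_hasCompactSupport eta_supp
lemma eta_int_pos : 0 < ∫ y : Eu n, eta y := by
  apply (eta_cont (n := n)).integral_pos_of_hasCompactSupport_nonneg_nonzero eta_supp (fun y => eta_nonneg y) (x := 0)
  simp [eta]

lemma hasDerivAt_posPart_sq (s : ℝ) : HasDerivAt (fun s : ℝ => (max s 0) ^ 2) (2 * max s 0) s := by
  rcases lt_trichotomy s 0 with h | h | h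
  · rw [max_eq_right h.le]
    have : (fun s : ℝ => (max s 0) ^ 2) =ᶠ[𝓝 s] fun _ => 0 := by
      filter_upwards [gt_mem_nhds h] with t ht
      simp [max_eq_right ht.le]
    simpa using (hasDerivAt_const s (0:ℝ)).congr_of_eventuallyEq this
  · subst h
    rw [hasDerivAt_iff_isLittleO_nhds_zero]
    have : (fun h : ℝ => h ^ 2) =o[𝓝 0] fun h => h := by
      simpa using (Asymptotics.isLittleO_pow_pow (𝕜 := ℝ) (m := 1) (n := 2) (by norm_num))
    refine Asymptotics.IsBigO.trans_isLittleO (Asymptotics.IsBigO.of_bound 1 (Eventually.of_forall fun t => ?_)) this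
    simp only [zero_add, max_self, mul_zero, smul_zero, sub_zero, one_mul, norm_pow, Real.norm_eq_abs]
    norm_num
    rcases le_total t 0 with h | h
    · rw [max_eq_right h]; nlinarith [sq_nonneg t]
    · rw [max_eq_left h]
  · rw [max_eq_left h.le]
    have : (fun s : ℝ => (max s 0) ^ 2) =ᶠ[𝓝 s] fun s => s ^ 2 := by
      filter_upwards [lt_mem_nhds h] with t ht
      simp [max_eq_left ht.le]
    simpa using (hasDerivAt_pow 2 s).congr_of_eventuallyEq this

lemma Psi_hasFDerivAt (y : Eu n) : HasFDerivAt Psi ((-(4 * eta y)) • innerSL ℝ y) y := by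
  have h1 : HasFDerivAt (fun y : Eu n => 1 - ‖y‖ ^ 2) (-(2 • innerSL ℝ y)) y :=
    ((hasStrictFDerivAt_norm_sq y).hasFDerivAt).const_sub 1
  have h2 := (hasDerivAt_posPart_sq (1 - ‖y‖ ^ 2)).comp_hasFDerivAt y h1
  have heq : (-(4 * eta y)) • innerSL ℝ y = (2 * max (1 - ‖y‖ ^ 2) 0) • -(2 • (innerSL ℝ) y) := by
    ext z
    simp [eta]; ring
  rw [heq]; exact h2

lemma int_of {g k : Eu n → ℝ} (hg : Continuous g) (hk : Continuous k) (hs : HasCompactSupport k) :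
    Integrable (fun y => g y * k y) :=
  (hg.mul hk).integrable_of_hasCompactSupport hs.mul_left

lemma by_parts {v : Eu n → ℝ} (hv : ContDiff ℝ 2 v) (x : Eu n) (ε : ℝ) :
    ∫ y, fderiv ℝ v (x + ε • y) y * eta y = (ε / 4) * ∫ y, lap v (x + ε • y) * Psi y := by
  have hv1 : ContDiff ℝ 1 (fderiv ℝ v) := hv.fderiv_right (by norm_num)
  have hvi : ∀ i, ContDiff ℝ 1 (fun y => fderiv ℝ v y (EuclideanSpace.single i (1:ℝ))) := fun i =>
    hv1.clm_apply contDiff_const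
  have hdc : ∀ i, Continuous (fun y => fderiv ℝ (fun y => fderiv ℝ v y (EuclideanSpace.single i (1:ℝ))) y (EuclideanSpace.single i 1)) :=
    fun i => ((hvi i).continuous_fderiv (by norm_num)).clm_apply continuous_const
  have haff : Continuous (fun y : Eu n => x + ε • y) := by fun_prop
  have key : ∀ i : Fin n, ∫ y, fderiv ℝ v (x + ε • y) (EuclideanSpace.single i 1) * (y i * eta y)
      = (ε / 4) * ∫ y, fderiv ℝ (fun y => fderiv ℝ v y (EuclideanSpace.single i (1:ℝ))) (x + ε • y) (EuclideanSpace.single i 1) * Psi y := by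
    intro i
    set w : Eu n := EuclideanSpace.single i 1 with hw
    have hP : ∀ y : Eu n, ((-(4 * eta y)) • innerSL ℝ y) w = -(4 * (y i * eta y)) := by
      intro y
      simp [hw, EuclideanSpace.inner_single_right]; ring
    have hfd : ∀ y : Eu n, HasFDerivAt (fun y => fderiv ℝ v (x + ε • y) w)
        ((fderiv ℝ (fun y => fderiv ℝ v y w) (x + ε • y)).comp (ε • ContinuousLinearMap.id ℝ (Eu n))) y := by
      intro y
      have h1 : HasFDerivAt (fun y : Eu n => x + ε • y) (ε • ContinuousLinearMap.id ℝ (Eu n)) y :=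
        ((hasFDerivAt_id y).const_smul ε).const_add x
      exact (((hvi i).differentiable (by norm_num)) (x + ε • y)).hasFDerivAt.comp y h1
    have := integral_bilinear_hasFDerivAt_right_eq_neg_left_of_integrable (μ := (volume : Measure (Eu n)))
      (f := fun y => fderiv ℝ v (x + ε • y) w) (g := Psi) (v := w) (B := ContinuousLinearMap.mul ℝ ℝ)
      (f' := fun y => ((fderiv ℝ (fun y => fderiv ℝ v y w) (x + ε • y)).comp (ε • ContinuousLinearMap.id ℝ (Eu n))))
      (g' := fun y => (-(4 * eta y)) • innerSL ℝ y) ?_ ?_ ?_ (fun y _ => hfd y) (fun y _ => Psi_hasFDerivAt y)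
    · simp only [ContinuousLinearMap.mul_apply', hP] at this
      simp only [ContinuousLinearMap.comp_apply, smul_apply, ContinuousLinearMap.id_apply,
        map_smul, smul_eq_mul] at this
      simp only [mul_assoc] at this
      rw [integral_const_mul] at this
      have e2 : ∀ y : Eu n, fderiv ℝ v (x + ε • y) w * -(4 * (y i * eta y)) = (-4) * (fderiv ℝ v (x + ε • y) w * (y i * eta y)) := by
        intro y; ring
      simp only [e2, integral_const_mul] at this
      linarith
    · simp only [ContinuousLinearMap.mul_apply', ContinuousLinearMap.comp_apply, smul_apply, ContinuousLinearMap.id_apply,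
        map_smul, smul_eq_mul]
      exact int_of (continuous_const.mul ((hdc i).comp haff)) Psi_cont Psi_supp
    · simp only [ContinuousLinearMap.mul_apply', hP]
      have e2 : ∀ y : Eu n, fderiv ℝ v (x + ε • y) w * -(4 * (y i * eta y)) = (fderiv ℝ v (x + ε • y) w * (-4 * y i)) * eta y := by
        intro y; ring
      simp only [e2]
      refine int_of ?_ eta_cont eta_supp
      exact ((hvi i).continuous.comp haff).mul (by fun_prop)
    · simp only [ContinuousLinearMap.mul_apply']
      exact int_of ((hvi i).continuous.comp haff) Psi_cont Psi_supp
  have e1 : ∀ y : Eu n, fderiv ℝ v (x + ε • y) y * eta y = ∑ i, fderiv ℝ v (x + ε • y) (EuclideanSpace.single i 1) * (y i * eta y) := by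
    intro y
    have hy : y = ∑ i, y i • EuclideanSpace.single i (1:ℝ) := by
      ext j; simp [Finset.sum_apply, Pi.single_apply]
    conv_lhs => rw [show fderiv ℝ v (x + ε • y) y = fderiv ℝ v (x + ε • y) (∑ i, y i • EuclideanSpace.single i (1:ℝ)) by rw [← hy]]
    rw [map_sum, Finset.sum_mul]
    refine Finset.sum_congr rfl fun i _ => ?_
    rw [map_smul, smul_eq_mul]; ring
  simp only [e1]
  rw [integral_finsetSum]
  · simp only [key, ← Finset.mul_sum]
    congr 1
    rw [← integral_finsetSum]
    · simp only [lap, Finset.sum_mul]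
    · intro i _
      exact int_of ((hdc i).comp haff) Psi_cont Psi_supp
  · intro i _
    have e2 : ∀ y : Eu n, fderiv ℝ v (x + ε • y) (EuclideanSpace.single i 1) * (y i * eta y) = (fderiv ℝ v (x + ε • y) (EuclideanSpace.single i 1) * (y i)) * eta y := by
      intro y; ring
    simp only [e2]
    exact int_of (((hvi i).continuous.comp haff).mul (by fun_prop)) eta_cont eta_supp

lemma lap_cont {v : Eu n → ℝ} (hv : ContDiff ℝ 2 v) : Continuous (lap v) := by
  have hv1 : ContDiff ℝ 1 (fderiv ℝ v) := hv.fderiv_right (by norm_num)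
  have hvi : ∀ i, ContDiff ℝ 1 (fun y => fderiv ℝ v y (EuclideanSpace.single i (1:ℝ))) := fun i =>
    hv1.clm_apply contDiff_const
  unfold lap
  refine continuous_finsetSum _ fun i _ => ?_
  exact ((hvi i).continuous_fderiv (by norm_num)).clm_apply continuous_const

lemma deriv_mean {v : Eu n → ℝ} (hv : ContDiff ℝ 2 v) (hc : HasCompactSupport v) (x : Eu n) (ε : ℝ) :
    HasDerivAt (fun ε : ℝ => ∫ y, v (x + ε • y) * eta y)
      ((ε / 4) * ∫ y, lap v (x + ε • y) * Psi y) ε := by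
  rw [← by_parts hv]
  have hf : Continuous (fderiv ℝ v) := hv.continuous_fderiv (by norm_num)
  obtain ⟨C, hC⟩ := hf.bounded_above_of_compact_support (hc.fderiv (𝕜 := ℝ))
  have hC0 : 0 ≤ C := (norm_nonneg _).trans (hC 0)
  refine (hasDerivAt_integral_of_dominated_loc_of_deriv_le (F := fun (ε : ℝ) (y : Eu n) => v (x + ε • y) * eta y)
    (F' := fun (ε : ℝ) (y : Eu n) => fderiv ℝ v (x + ε • y) y * eta y)
    (bound := fun y => C * eta y) (s := Set.univ) univ_mem ?_ ?_ ?_ ?_ ?_ ?_).2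
  · refine Eventually.of_forall fun e => Continuous.aestronglyMeasurable ?_
    exact (hv.continuous.comp (by fun_prop)).mul eta_cont
  · exact int_of (hv.continuous.comp (by fun_prop)) eta_cont eta_supp
  · refine Continuous.aestronglyMeasurable ?_
    exact ((hf.comp (by fun_prop)).clm_apply continuous_id).mul eta_cont
  · refine Eventually.of_forall fun y e _ => ?_
    rw [norm_mul, Real.norm_of_nonneg (eta_nonneg y)]
    by_cases hy : 1 ≤ ‖y‖
    · simp [eta_eq_zero hy]
    · push Not at hy
      refine mul_le_mul_of_nonneg_right ?_ (eta_nonneg y)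
      calc ‖fderiv ℝ v (x + e • y) y‖ ≤ ‖fderiv ℝ v (x + e • y)‖ * ‖y‖ := ContinuousLinearMap.le_opNorm _ _
        _ ≤ C * 1 := mul_le_mul (hC _) hy.le (norm_nonneg _) hC0
        _ = C := mul_one _
  · exact eta_integrable.const_mul C
  · refine Eventually.of_forall fun y e _ => ?_
    have h1 : HasDerivAt (fun e : ℝ => x + e • y) y e := by
      simpa using ((hasDerivAt_id e).smul_const y).const_add x
    have := ((hv.differentiable (by norm_num)) (x + e • y)).hasFDerivAt.comp_hasDerivAt e h1
    exact this.mul_const _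

end Tube

namespace Tube
open MeasureTheory Metric

variable {n : ℕ}

lemma lap_congr {v w : Eu n → ℝ} {x : Eu n} (h : v =ᶠ[𝓝 x] w) : lap v x = lap w x := by
  unfold lap
  refine Finset.sum_congr rfl fun i _ => ?_
  have h1 : (fun y => fderiv ℝ v y (EuclideanSpace.single i (1:ℝ))) =ᶠ[𝓝 x] fun y => fderiv ℝ w y (EuclideanSpace.single i 1) := by
    filter_upwards [h.fderiv (𝕜 := ℝ)] with y hy
    rw [hy]
  rw [h1.fderiv_eq]

lemma lap_const (c : ℝ) (x : Eu n) : lap (fun _ : Eu n => c) x = 0 := by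
  simp [lap]

lemma norm_shift {e : Eu n} (he : ‖e‖ = 1) (y : Eu n) (s : ℝ) :
    ‖y + (2 * s) • e‖ ^ 2 = ‖y‖ ^ 2 + 4 * s * (s + inner ℝ e y) := by
  rw [norm_add_sq_real, norm_smul, inner_smul_right, real_inner_comm, he, mul_one, Real.norm_eq_abs, sq_abs]
  ring

lemma norm_le_shift {e : Eu n} (he : ‖e‖ = 1) (y : Eu n) {s : ℝ} (hs : 0 ≤ s) (h : 0 ≤ s + inner ℝ e y) :
    ‖y‖ ≤ ‖y + (2 * s) • e‖ := by
  have := norm_shift he y s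
  have h2 : 0 ≤ 4 * s * (s + inner ℝ e y) := by positivity
  exact le_of_sq_le_sq (by linarith) (norm_nonneg _)

/-- Half-space sub-mean-value inequality, smooth case. -/
lemma half_mean_C2 {v : Eu n → ℝ} (hv : ContDiff ℝ 2 v) (hc : HasCompactSupport v) {e : Eu n}
    (he : ‖e‖ = 1) (α : ℝ) (x : Eu n) (hx : 0 < inner ℝ e x + α) {r : ℝ} (hr : 0 < r)
    (hz : ∀ y : Eu n, inner ℝ e y + α ≤ 0 → v y = 0)
    (hsub : ∀ y : Eu n, ‖y - x‖ < r → 0 < inner ℝ e y + α → 0 ≤ lap v y) :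
    v x * ∫ y : Eu n, eta y ≤
      ∫ y, v (x + r • y) * (eta y - eta (y + (2 * ((inner ℝ e x + α) / r)) • e)) := by
  set T : ℝ := inner ℝ e x + α with hT
  set x' : Eu n := x - (2 * T) • e with hx'
  have hTx' : inner ℝ e x' + α = -T := by
    rw [hx', inner_sub_right, inner_smul_right, real_inner_self_eq_norm_sq, he, hT]; ring
  have hshift : ∀ ε : ℝ, 0 < ε → ∀ y : Eu n, x' + ε • (y + (2 * (T / ε)) • e) = x + ε • y := by
    intro ε hε y
    rw [hx', smul_add, smul_smul]
    have : ε * (2 * (T / ε)) = 2 * T := by field_simp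
    rw [this]; abel
  have haff : ∀ (x : Eu n) (ε : ℝ), Continuous (fun y : Eu n => x + ε • y) := by intro x ε; fun_prop
  have tr : ∀ (g k : Eu n → ℝ), ∀ ε : ℝ, 0 < ε → ∫ y, g (x' + ε • y) * k y = ∫ y, g (x + ε • y) * k (y + (2 * (T / ε)) • e) := by
    intro g k ε hε
    rw [← integral_add_right_eq_self (fun y => g (x' + ε • y) * k y) ((2 * (T / ε)) • e)]
    simp only [hshift ε hε]
  have hd : ∀ ε : ℝ, HasDerivAt (fun ε : ℝ => (∫ y, v (x + ε • y) * eta y) - ∫ y, v (x' + ε • y) * eta y)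
      (((ε / 4) * ∫ y, lap v (x + ε • y) * Psi y) - ((ε / 4) * ∫ y, lap v (x' + ε • y) * Psi y)) ε :=
    fun ε => (deriv_mean hv hc x ε).sub (deriv_mean hv hc x' ε)
  have hmono : MonotoneOn (fun ε : ℝ => (∫ y, v (x + ε • y) * eta y) - ∫ y, v (x' + ε • y) * eta y) (Set.Icc 0 r) := by
    apply monotoneOn_of_deriv_nonneg (convex_Icc 0 r)
    · exact fun ε _ => (hd ε).continuousAt.continuousWithinAt
    · exact fun ε _ => (hd ε).differentiableAt.differentiableWithinAt
    · intro ε hε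
      rw [interior_Icc] at hε
      rw [(hd ε).deriv, ← mul_sub, tr _ _ ε hε.1, ← integral_sub]
      · refine mul_nonneg (by linarith [hε.1]) (integral_nonneg fun y => ?_)
        show 0 ≤ lap v (x + ε • y) * Psi y - lap v (x + ε • y) * Psi (y + (2 * (T / ε)) • e)
        rw [← mul_sub]
        have hTy : inner ℝ e (x + ε • y) + α = ε * (T / ε + inner ℝ e y) := by
          rw [inner_add_right, inner_smul_right]
          have : ε * (T / ε) = T := by field_simp [hε.1.ne']
          rw [mul_add, this, hT]; ring
        rcases lt_trichotomy (inner ℝ e (x + ε • y) + α) 0 with h | h | h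
        · have : v =ᶠ[𝓝 (x + ε • y)] fun _ => 0 := by
            have hcont : Continuous (fun y : Eu n => inner ℝ e y + α) := by fun_prop
            filter_upwards [hcont.continuousAt.eventually (gt_mem_nhds h)] with z hz'
            exact hz z hz'.le
          rw [lap_congr this, lap_const, zero_mul]
        · have h0 : T / ε + inner ℝ e y = 0 := by
            rw [hTy] at h; rcases mul_eq_zero.1 h with h | h
            · exact absurd h hε.1.ne'
            · exact h
          have : ‖y + (2 * (T / ε)) • e‖ = ‖y‖ := by
            have := norm_shift he y (T / ε)
            rw [h0, mul_zero, add_zero] at this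
            exact (sq_eq_sq₀ (norm_nonneg _) (norm_nonneg _)).1 this
          rw [le_antisymm (Psi_mono this.ge) (Psi_mono this.le)]; simp
        · have h0 : 0 ≤ T / ε + inner ℝ e y := by
            rw [hTy] at h; exact (pos_of_mul_pos_right h hε.1.le).le
          have hn := norm_le_shift he y (div_pos hx hε.1).le h0
          by_cases hy : 1 ≤ ‖y‖
          · simp [Psi, eta_eq_zero hy, eta_eq_zero (hy.trans hn)]
          · push Not at hy
            refine mul_nonneg (hsub _ ?_ h) (sub_nonneg.2 (Psi_mono hn))
            rw [add_sub_cancel_left, norm_smul, Real.norm_of_nonneg hε.1.le]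
            nlinarith [hε.1, hε.2]
      · exact int_of ((lap_cont hv).comp (haff x ε)) Psi_cont Psi_supp
      · have := (int_of ((lap_cont hv).comp (haff x' ε)) Psi_cont Psi_supp).comp_add_right ((2 * (T / ε)) • e)
        simpa only [Function.comp, hshift ε hε.1] using this
  have h0r := hmono (Set.left_mem_Icc.2 hr.le) (Set.right_mem_Icc.2 hr.le) hr.le
  simp only [zero_smul, add_zero, integral_const_mul] at h0r
  rw [hz x' (by rw [hTx']; linarith), zero_mul, sub_zero, tr _ _ r hr, ← integral_sub] at h0r
  · simpa only [mul_sub] using h0r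
  · exact int_of (hv.continuous.comp (haff x r)) eta_cont eta_supp
  · have := (int_of (hv.continuous.comp (haff x' r)) eta_cont eta_supp).comp_add_right ((2 * (T / r)) • e)
    simpa only [Function.comp, hshift r hr] using this

end Tube

namespace Tube
open MeasureTheory Metric

variable {n : ℕ}

/-- A smooth convex approximation of the positive part. -/
def phi (t : ℝ) : ℝ := t * expNegInvGlue t

lemma phi_contDiff : ContDiff ℝ 2 phi := contDiff_id.mul (expNegInvGlue.contDiff (n := 2))

lemma phi_of_nonpos {t : ℝ} (h : t ≤ 0) : phi t = 0 := by
  simp [phi, expNegInvGlue.zero_of_nonpos h]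

lemma phi_of_pos {t : ℝ} (h : 0 < t) : phi t = t * Real.exp (-t⁻¹) := by
  simp [phi, expNegInvGlue, not_le.2 h]

lemma phi_nonneg (t : ℝ) : 0 ≤ phi t := by
  rcases le_or_gt t 0 with h | h
  · rw [phi_of_nonpos h]
  · rw [phi_of_pos h]; positivity

lemma phi_le (t : ℝ) : phi t ≤ max t 0 := by
  rcases le_or_gt t 0 with h | h
  · rw [phi_of_nonpos h]; exact le_max_right _ _
  · rw [phi_of_pos h, max_eq_left h.le]
    have : Real.exp (-t⁻¹) ≤ 1 := Real.exp_le_one_iff.2 (by have := inv_pos.2 h; linarith)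
    nlinarith

lemma le_phi (t : ℝ) : t - 1 ≤ phi t := by
  rcases le_or_gt t 0 with h | h
  · rw [phi_of_nonpos h]; linarith
  · rw [phi_of_pos h]
    have := Real.add_one_le_exp (-t⁻¹)
    have h2 : t * t⁻¹ = 1 := mul_inv_cancel₀ h.ne'
    nlinarith

lemma phi_deriv2 (t : ℝ) : 0 ≤ deriv (deriv phi) t := by
  have hcont : Continuous (deriv (deriv phi)) := by
    have := phi_contDiff.continuous_iteratedDeriv 2 le_rfl
    simpa [iteratedDeriv_succ, iteratedDeriv_zero] using this
  have hneg : ∀ t < 0, 0 ≤ deriv (deriv phi) t := by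
    intro t ht
    have h1 : ∀ t < 0, deriv phi t = 0 := by
      intro t ht
      have : phi =ᶠ[𝓝 t] fun _ => 0 := by
        filter_upwards [gt_mem_nhds ht] with s hs using phi_of_nonpos hs.le
      rw [this.deriv_eq]; simp
    have : deriv phi =ᶠ[𝓝 t] fun _ => 0 := by
      filter_upwards [gt_mem_nhds ht] with s hs using h1 s hs
    rw [this.deriv_eq]; simp
  have hpos : ∀ t > 0, 0 ≤ deriv (deriv phi) t := by
    intro t ht
    have hE : ∀ t : ℝ, 0 < t → HasDerivAt (fun t : ℝ => Real.exp (-t⁻¹)) (Real.exp (-t⁻¹) * (t ^ 2)⁻¹) t := by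
      intro t ht
      have := ((hasDerivAt_inv ht.ne').neg).exp
      simpa using this
    have h1 : ∀ t : ℝ, 0 < t → deriv phi t = Real.exp (-t⁻¹) * (1 + t⁻¹) := by
      intro t ht
      have : phi =ᶠ[𝓝 t] fun t => t * Real.exp (-t⁻¹) := by
        filter_upwards [lt_mem_nhds ht] with s hs using phi_of_pos hs
      rw [this.deriv_eq, ((hasDerivAt_id' t).fun_mul (hE t ht)).deriv]
      field_simp
    have : deriv phi =ᶠ[𝓝 t] fun t => Real.exp (-t⁻¹) * (1 + t⁻¹) := by
      filter_upwards [lt_mem_nhds ht] with s hs using h1 s hs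
    rw [this.deriv_eq, ((hE t ht).fun_mul ((hasDerivAt_inv ht.ne').const_add 1)).deriv]
    have : Real.exp (-t⁻¹) * (t ^ 2)⁻¹ * (1 + t⁻¹) + Real.exp (-t⁻¹) * -(t ^ 2)⁻¹ = Real.exp (-t⁻¹) * (t ^ 2)⁻¹ * t⁻¹ := by ring
    rw [this]; positivity
  have hcl : IsClosed {t | 0 ≤ deriv (deriv phi) t} := isClosed_le continuous_const hcont
  rcases lt_trichotomy t 0 with h | h | h
  · exact hneg t h
  · subst h
    have : (0:ℝ) ∈ closure (Set.Ioi (0:ℝ)) := by rw [closure_Ioi]; exact Set.mem_Ici.2 le_rfl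
    exact closure_minimal (fun s hs => hpos s hs) hcl this
  · exact hpos t h

lemma lap_comp_nonneg {u : Eu n → ℝ} {x : Eu n} (hu : ContDiffAt ℝ 2 u x) (hl : lap u x = 0) :
    0 ≤ lap (fun y => phi (u y)) x := by
  have hphi : Differentiable ℝ phi := phi_contDiff.differentiable (by norm_num)
  have hphi1 : ContDiff ℝ 1 (deriv phi) := ((contDiff_succ_iff_deriv (n := 1)).1 phi_contDiff).2.2
  have hphi' : Differentiable ℝ (deriv phi) := hphi1.differentiable (by norm_num)
  have hdiff : ∀ᶠ y in 𝓝 x, DifferentiableAt ℝ u y := by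
    filter_upwards [hu.eventually (by simp)] with y hy using hy.differentiableAt (by norm_num)
  have hfd : ContDiffAt ℝ 1 (fderiv ℝ u) x := hu.fderiv_right (by norm_num)
  have key : ∀ i : Fin n, fderiv ℝ (fun y => fderiv ℝ (fun y => phi (u y)) y (EuclideanSpace.single i (1:ℝ))) x (EuclideanSpace.single i 1)
     = deriv (deriv phi) (u x) * (fderiv ℝ u x (EuclideanSpace.single i 1)) ^ 2 +
       deriv phi (u x) * fderiv ℝ (fun y => fderiv ℝ u y (EuclideanSpace.single i (1:ℝ))) x (EuclideanSpace.single i 1) := by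
    intro i
    set w : Eu n := EuclideanSpace.single i 1
    have h1 : (fun y => fderiv ℝ (fun y => phi (u y)) y w) =ᶠ[𝓝 x] fun y => deriv phi (u y) * fderiv ℝ u y w := by
      filter_upwards [hdiff] with y hy
      have := (hphi (u y)).hasDerivAt.comp_hasFDerivAt y hy.hasFDerivAt
      rw [show (fun y => phi (u y)) = phi ∘ u from rfl, this.fderiv]
      simp
    rw [h1.fderiv_eq]
    have h2 : HasFDerivAt (fun y => deriv phi (u y)) (deriv (deriv phi) (u x) • fderiv ℝ u x) x :=
      (hphi' (u x)).hasDerivAt.comp_hasFDerivAt x (hu.differentiableAt (by norm_num)).hasFDerivAt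
    have h3 : DifferentiableAt ℝ (fun y => fderiv ℝ u y w) x :=
      (hfd.differentiableAt (by norm_num)).clm_apply (differentiableAt_const _)
    rw [(h2.fun_mul h3.hasFDerivAt).fderiv]
    simp
    ring
  unfold lap
  simp only [key]
  rw [Finset.sum_add_distrib, ← Finset.mul_sum, ← Finset.mul_sum]
  have : ∑ i, fderiv ℝ (fun y => fderiv ℝ u y (EuclideanSpace.single i (1:ℝ))) x (EuclideanSpace.single i 1) = 0 := hl
  rw [this, mul_zero, add_zero]
  exact mul_nonneg (phi_deriv2 _) (Finset.sum_nonneg fun i _ => sq_nonneg _)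

lemma lap_affine {u : Eu n → ℝ} {x : Eu n} (hu : ContDiffAt ℝ 2 u x) (hl : lap u x = 0) (a b : ℝ) :
    lap (fun y => a * u y + b) x = 0 := by
  have hdiff : ∀ᶠ y in 𝓝 x, DifferentiableAt ℝ u y := by
    filter_upwards [hu.eventually (by simp)] with y hy using hy.differentiableAt (by norm_num)
  have hfd : ContDiffAt ℝ 1 (fderiv ℝ u) x := hu.fderiv_right (by norm_num)
  have key : ∀ i : Fin n, fderiv ℝ (fun y => fderiv ℝ (fun y => a * u y + b) y (EuclideanSpace.single i (1:ℝ))) x (EuclideanSpace.single i 1)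
     = a * fderiv ℝ (fun y => fderiv ℝ u y (EuclideanSpace.single i (1:ℝ))) x (EuclideanSpace.single i 1) := by
    intro i
    set w : Eu n := EuclideanSpace.single i 1
    have h1 : (fun y => fderiv ℝ (fun y => a * u y + b) y w) =ᶠ[𝓝 x] fun y => a * fderiv ℝ u y w := by
      filter_upwards [hdiff] with y hy
      rw [((hy.hasFDerivAt.const_mul a).add_const b).fderiv]
      simp
    rw [h1.fderiv_eq]
    have h3 : DifferentiableAt ℝ (fun y => fderiv ℝ u y w) x :=
      (hfd.differentiableAt (by norm_num)).clm_apply (differentiableAt_const _)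
    rw [(h3.hasFDerivAt.const_mul a).fderiv]
    simp
  unfold lap at hl ⊢
  simp only [key]
  rw [← Finset.mul_sum, hl, mul_zero]

/-- Nonnegative continuous on `W`, and harmonic where positive. -/
structure Good (W : Set (Eu n)) (u : Eu n → ℝ) : Prop where
  op : IsOpen W
  nn : ∀ x ∈ W, 0 ≤ u x
  ct : ContinuousOn u W
  cd : ∀ x ∈ W, 0 < u x → ContDiffAt ℝ 2 u x
  lp : ∀ x ∈ W, 0 < u x → lap u x = 0

/-- Half-space sub-mean-value inequality. -/
lemma half_mean {W : Set (Eu n)} {u : Eu n → ℝ} (hg : Good W u) {e : Eu n}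
    (he : ‖e‖ = 1) (α : ℝ) (x : Eu n) (hx : 0 < inner ℝ e x + α) {r : ℝ} (hr : 0 < r)
    (hW : closedBall x r ⊆ W)
    (hz : ∀ y ∈ W, inner ℝ e y + α ≤ 0 → u y = 0) {B : Eu n → ℝ} (hBi : Integrable B)
    (hB0 : ∀ y, 0 ≤ B y)
    (hB : ∀ y, ‖y‖ < 1 → 0 < inner ℝ e (x + r • y) + α →
      u (x + r • y) * (eta y - eta (y + (2 * ((inner ℝ e x + α) / r)) • e)) ≤ B y) :
    u x * ∫ y : Eu n, eta y ≤ ∫ y, B y := by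
  obtain ⟨δ', hδ', hth⟩ := (isCompact_closedBall x r).exists_cthickening_subset_open hg.op hW
  have hW' : closedBall x (r + δ') ⊆ W := by
    intro y hy
    apply hth
    rw [cthickening_closedBall hδ'.le hr.le]
    rwa [add_comm]
  let χ : ContDiffBump x := ⟨r, r + δ', hr, by linarith⟩
  have hχ0 : ∀ y, y ∉ closedBall x (r + δ') → (χ : Eu n → ℝ) =ᶠ[𝓝 y] 0 := by
    intro y hy
    rw [← notMem_tsupport_iff_eventuallyEq, χ.tsupport_eq]; exact hy
  have main : ∀ δ : ℝ, 0 < δ → (u x - 2 * δ) * ∫ y : Eu n, eta y ≤ ∫ y, B y := by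
    intro δ hδ
    set p : ℝ → ℝ := fun t => phi (δ⁻¹ * t + (-1)) with hp
    have hpz : ∀ t, t ≤ δ → p t = 0 := by
      intro t ht
      apply phi_of_nonpos
      have : δ⁻¹ * t ≤ δ⁻¹ * δ := mul_le_mul_of_nonneg_left ht (by positivity)
      rw [inv_mul_cancel₀ hδ.ne'] at this; linarith
    have hple : ∀ t, 0 ≤ t → δ * p t ≤ t := by
      intro t ht
      have h1 := phi_le (δ⁻¹ * t + (-1))
      have h2 : max (δ⁻¹ * t + (-1)) 0 ≤ δ⁻¹ * t := max_le (by linarith) (by positivity)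
      calc δ * p t ≤ δ * (δ⁻¹ * t) := mul_le_mul_of_nonneg_left (h1.trans h2) hδ.le
        _ = t := by field_simp
    have hlep : ∀ t, t - 2 * δ ≤ δ * p t := by
      intro t
      have h1 := mul_le_mul_of_nonneg_left (le_phi (δ⁻¹ * t + (-1))) hδ.le
      have : δ * (δ⁻¹ * t + -1 - 1) = t - 2 * δ := by field_simp; ring
      rw [this] at h1; exact h1
    set v : Eu n → ℝ := fun y => χ y * p (u y) with hv
    have hpu0 : ∀ y ∈ W, u y ≤ 0 → (fun y => p (u y)) =ᶠ[𝓝 y] fun _ => 0 := by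
      intro y hy h0
      have hc := (hg.ct.continuousAt (hg.op.mem_nhds hy)).eventually (gt_mem_nhds (lt_of_le_of_lt h0 hδ))
      filter_upwards [hc] with z hz' using hpz _ hz'.le
    have hpc : ContDiff ℝ 2 p := phi_contDiff.comp ((contDiff_const.mul contDiff_id).add contDiff_const)
    have hvC : ContDiff ℝ 2 v := by
      rw [contDiff_iff_contDiffAt]
      intro y
      by_cases hy : y ∈ closedBall x (r + δ')
      · rcases (hg.nn y (hW' hy)).eq_or_lt with h0 | h0
        · have := hpu0 y (hW' hy) h0.ge
          have h2 : v =ᶠ[𝓝 y] fun _ => 0 := by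
            filter_upwards [this] with z hz'
            simp only [hv]; rw [hz', mul_zero]
          exact contDiffAt_const.congr_of_eventuallyEq h2
        · exact (χ.contDiff (n := 2)).contDiffAt.mul (hpc.contDiffAt.comp y (hg.cd y (hW' hy) h0))
      · have h2 : v =ᶠ[𝓝 y] fun _ => 0 := by
          filter_upwards [hχ0 y hy] with z hz'
          simp only [hv]; rw [hz']; simp
        exact contDiffAt_const.congr_of_eventuallyEq h2
    have hvs : HasCompactSupport v := χ.hasCompactSupport.mul_right
    have hpu1 : ∀ y, 0 ≤ p (u y) := fun y => phi_nonneg _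
    have hmain := half_mean_C2 hvC hvs he α x hx hr ?_ ?_
    · have hvx : v x = p (u x) := by
        simp only [hv]; rw [χ.one_of_mem_closedBall (mem_closedBall_self hr.le), one_mul]
      rw [hvx] at hmain
      set k : Eu n → ℝ := fun y => eta y - eta (y + (2 * ((inner ℝ e x + α) / r)) • e) with hk
      have hle : δ * ∫ y, v (x + r • y) * k y ≤ ∫ y, B y := by
        rw [← integral_const_mul]
        apply integral_mono _ hBi
        · intro y
          show δ * (v (x + r • y) * k y) ≤ B y
          by_cases hT : 0 < inner ℝ e (x + r • y) + α
          · have h0 : 0 ≤ (inner ℝ e x + α) / r + inner ℝ e y := by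
              rw [inner_add_right, inner_smul_right] at hT
              have h3 : (inner ℝ e x + α) / r + inner ℝ e y = (inner ℝ e x + r * inner ℝ e y + α) / r := by
                field_simp; ring
              rw [h3]; positivity
            have hn := norm_le_shift he y (div_pos hx hr).le h0
            have hk0 : 0 ≤ k y := sub_nonneg.2 (eta_mono hn)
            by_cases hy : ‖y‖ < 1
            · refine le_trans ?_ (hB y hy hT)
              have hmem : x + r • y ∈ closedBall x r := by
                rw [mem_closedBall, dist_eq_norm, add_sub_cancel_left, norm_smul, Real.norm_of_nonneg hr.le]
                nlinarith
              have : v (x + r • y) = p (u (x + r • y)) := by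
                simp only [hv]; rw [χ.one_of_mem_closedBall hmem, one_mul]
              rw [this, ← mul_assoc]
              exact mul_le_mul_of_nonneg_right (hple _ (hg.nn _ (hW hmem))) hk0
            · push Not at hy
              have : k y = 0 := by simp [hk, eta_eq_zero hy, eta_eq_zero (hy.trans hn)]
              rw [this]; simpa using hB0 y
          · have : v (x + r • y) = 0 := by
              simp only [hv]
              by_cases hy : x + r • y ∈ closedBall x (r + δ')
              · rw [hz _ (hW' hy) (not_lt.1 hT), hpz 0 hδ.le, mul_zero]
              · rw [(hχ0 _ hy).self_of_nhds]; simp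
            rw [this]; simpa using hB0 y
        · refine Integrable.const_mul ?_ δ
          have hvc : Continuous (fun y => v (x + r • y)) := hvC.continuous.comp (by fun_prop)
          simp only [hk, mul_sub]
          refine (int_of hvc eta_cont eta_supp).sub (int_of hvc (eta_cont.comp (by fun_prop)) ?_)
          exact eta_supp.comp_homeomorph (Homeomorph.addRight _)
      have hI := eta_int_pos (n := n)
      calc (u x - 2 * δ) * ∫ y : Eu n, eta y ≤ (δ * p (u x)) * ∫ y : Eu n, eta y :=
            mul_le_mul_of_nonneg_right (hlep _) hI.le
        _ = δ * (p (u x) * ∫ y : Eu n, eta y) := by ring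
        _ ≤ _ := (mul_le_mul_of_nonneg_left hmain hδ.le).trans hle
    · intro y hT
      simp only [hv]
      by_cases hy : y ∈ closedBall x (r + δ')
      · rw [hz _ (hW' hy) hT, hpz 0 hδ.le, mul_zero]
      · rw [(hχ0 _ hy).self_of_nhds]; simp
    · intro y hy hT
      have hyb : y ∈ ball x r := by rwa [mem_ball, dist_eq_norm]
      have hyW : y ∈ W := hW (ball_subset_closedBall hyb)
      have h1 : v =ᶠ[𝓝 y] fun y => p (u y) := by
        filter_upwards [χ.eventuallyEq_one_of_mem_ball hyb] with z hz'
        simp only [hv]; rw [hz']; simp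
      rw [lap_congr h1]
      rcases (hg.nn y hyW).eq_or_lt with h0 | h0
      · rw [lap_congr (hpu0 y hyW h0.ge), lap_const]
      · have hcu := hg.cd y hyW h0
        exact lap_comp_nonneg (u := fun y => δ⁻¹ * u y + (-1)) ((contDiffAt_const.mul hcu).add contDiffAt_const)
          (lap_affine hcu (hg.lp y hyW h0) _ _)
  have hlim : Tendsto (fun δ : ℝ => (u x - 2 * δ) * ∫ y : Eu n, eta y) (𝓝[>] 0) (𝓝 ((u x - 2 * 0) * ∫ y : Eu n, eta y)) := by
    apply Tendsto.mono_left _ nhdsWithin_le_nhds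
    exact (Continuous.tendsto (by fun_prop) 0)
  rw [mul_zero, sub_zero] at hlim
  exact le_of_tendsto hlim (by filter_upwards [self_mem_nhdsWithin] with δ hδ using main δ hδ)

end Tube

namespace Tube
open MeasureTheory Metric

variable {n : ℕ}

def om (n : ℕ) : ℝ := (volume : Measure (Eu n)).real (ball 0 1)

lemma int_eta_le : ∫ y : Eu n, eta y ≤ om n := by
  have h : ∀ y : Eu n, eta y ≤ (ball (0 : Eu n) 1).indicator (fun _ => (1:ℝ)) y := by
    intro y
    by_cases hy : y ∈ ball (0 : Eu n) 1
    · rw [Set.indicator_of_mem hy]; exact eta_le_one y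
    · rw [Set.indicator_of_notMem hy, eta_eq_zero]; simpa using hy
  have hi : Integrable ((ball (0 : Eu n) 1).indicator (fun _ => (1:ℝ))) := by
    rw [integrable_indicator_iff measurableSet_ball]
    exact integrableOn_const (measure_ball_lt_top.ne)
  calc ∫ y : Eu n, eta y ≤ ∫ y, (ball (0 : Eu n) 1).indicator (fun _ => (1:ℝ)) y :=
        integral_mono eta_integrable hi h
    _ = om n := by rw [integral_indicator_const _ measurableSet_ball]; simp [om]

lemma om_pos : 0 < om n := lt_of_lt_of_le eta_int_pos int_eta_le

lemma vol_ball (q : Eu n) {ε : ℝ} (hε : 0 < ε) : (volume : Measure (Eu n)).real (ball q ε) = ε ^ n * om n := by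
  simp only [Measure.real, om]
  rw [Measure.addHaar_ball_of_pos volume q hε, ENNReal.toReal_mul, ENNReal.toReal_ofReal (by positivity)]
  simp

lemma sub_mean {W : Set (Eu n)} {u : Eu n → ℝ} (hg : Good W u) {e : Eu n}
    (he : ‖e‖ = 1) (x : Eu n) {r : ℝ} (hr : 0 < r)
    (hW : closedBall x r ⊆ W) {B : Eu n → ℝ} (hBi : Integrable B) (hB0 : ∀ y, 0 ≤ B y)
    (hB : ∀ y, ‖y‖ < 1 → u (x + r • y) * eta y ≤ B y) :
    u x * ∫ y : Eu n, eta y ≤ ∫ y, B y := by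
  set α : ℝ := - inner ℝ e x + 2 * r with hα
  have hTc : Continuous (fun y : Eu n => inner ℝ e y + α) := by fun_prop
  have hop : IsOpen {y : Eu n | 0 < inner ℝ e y + α} := isOpen_lt continuous_const hTc
  have hg' : Good (W ∩ {y : Eu n | 0 < inner ℝ e y + α}) u :=
    ⟨hg.op.inter hop, fun x hx => hg.nn x hx.1, hg.ct.mono Set.inter_subset_left,
      fun x hx => hg.cd x hx.1, fun x hx => hg.lp x hx.1⟩
  refine half_mean hg' he α x (by rw [hα]; linarith) hr ?_ ?_ hBi hB0 ?_
  · intro y hy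
    refine ⟨hW hy, ?_⟩
    have h1 := abs_real_inner_le_norm e (y - x)
    rw [he, one_mul, inner_sub_right] at h1
    rw [mem_closedBall, dist_eq_norm] at hy
    have := (abs_le.1 (h1.trans hy)).1
    show 0 < inner ℝ e y + α
    rw [hα]; linarith
  · intro y hy h; exact absurd hy.2 (not_lt.2 h)
  · intro y hy _
    refine le_trans (mul_le_mul_of_nonneg_left ?_ ?_) (hB y hy)
    · linarith [eta_nonneg (y + (2 * ((inner ℝ e x + α) / r)) • e)]
    · apply hg.nn; apply hW
      rw [mem_closedBall, dist_eq_norm, add_sub_cancel_left, norm_smul, Real.norm_of_nonneg hr.le]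
      nlinarith

lemma mem_cb {x y : Eu n} {r : ℝ} (hr : 0 < r) (hy : ‖y‖ < 1) : x + r • y ∈ closedBall x r := by
  rw [mem_closedBall, dist_eq_norm, add_sub_cancel_left, norm_smul, Real.norm_of_nonneg hr.le]
  nlinarith

/-- decay lemma -/
lemma decay {W : Set (Eu n)} {u : Eu n → ℝ} (hg : Good W u) {e : Eu n}
    (he : ‖e‖ = 1) (x p : Eu n) {R S : ℝ} (hR : 0 < R) (hS : 0 ≤ S)
    (hW : closedBall x R ⊆ W) (hu : ∀ y ∈ closedBall x R, u y ≤ S)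
    (hp : ‖p - x‖ ≤ 2 / 5 * R) (h0 : ∀ y, ‖y - p‖ < R / 10 → u y = 0) :
    u x ≤ (1 - 3 / 4 * (1 / 10) ^ n) * S := by
  set q : Eu n := R⁻¹ • (p - x) with hq
  have hqn : ‖q‖ ≤ 2 / 5 := by
    rw [hq, norm_smul, norm_inv, Real.norm_of_nonneg hR.le, inv_mul_le_iff₀ hR]; linarith
  have hBi : Integrable (fun y : Eu n => S * (eta y - (ball q (1/10)).indicator eta y)) := by
    exact (eta_integrable.sub (eta_integrable.indicator measurableSet_ball)).const_mul S
  have hind : ∀ y : Eu n, (ball q (1/10)).indicator eta y ≤ eta y := fun y =>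
    Set.indicator_le_self' (fun _ _ => eta_nonneg _) y
  have h := sub_mean hg he x hR hW hBi (fun y => mul_nonneg hS (sub_nonneg.2 (hind y))) ?_
  · rw [integral_const_mul, integral_sub eta_integrable (eta_integrable.indicator measurableSet_ball)] at h
    have hlow : 3 / 4 * ((1/10) ^ n * om n) ≤ ∫ y, (ball q (1/10)).indicator eta y := by
      rw [← vol_ball q (by norm_num : (0:ℝ) < 1/10), integral_indicator measurableSet_ball, mul_comm]
      have : ∫ y in ball q (1/10), (3/4 : ℝ) = (volume : Measure (Eu n)).real (ball q (1/10)) * (3 / 4) := by simp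
      rw [← this]
      apply setIntegral_mono_on
      · exact integrableOn_const (measure_ball_lt_top.ne)
      · exact eta_integrable.integrableOn
      · exact measurableSet_ball
      · intro y hy
        rw [mem_ball, dist_eq_norm] at hy
        have hyn : ‖y‖ ≤ 1 / 2 := by
          have := norm_add_le (y - q) q
          rw [sub_add_cancel] at this; linarith
        rw [eta_eq (by linarith)]
        nlinarith [norm_nonneg y]
    have hI := eta_int_pos (n := n)
    have hle := int_eta_le (n := n)
    have hpow : (0:ℝ) < (1/10) ^ n := by positivity
    have h2 : 3 / 4 * ((1/10) ^ n * ∫ y : Eu n, eta y) ≤ ∫ y, (ball q (1/10)).indicator eta y := by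
      refine le_trans ?_ hlow; gcongr
    have h3 : u x * ∫ y : Eu n, eta y ≤ ((1 - 3 / 4 * (1 / 10) ^ n) * S) * ∫ y : Eu n, eta y := by
      refine h.trans ?_
      have := mul_le_mul_of_nonneg_left h2 hS
      nlinarith
    exact le_of_mul_le_mul_right h3 hI
  · intro y hy
    by_cases hyq : y ∈ ball q (1/10)
    · have : u (x + R • y) = 0 := by
        apply h0
        rw [mem_ball, dist_eq_norm] at hyq
        have : x + R • y - p = R • (y - q) := by
          rw [hq, smul_sub, smul_smul, mul_inv_cancel₀ hR.ne', one_smul]; abel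
        rw [this, norm_smul, Real.norm_of_nonneg hR.le]
        nlinarith
      rw [this, zero_mul]
      exact mul_nonneg hS (sub_nonneg.2 (hind y))
    · rw [Set.indicator_of_notMem hyq, sub_zero]
      exact mul_le_mul_of_nonneg_right (hu _ (mem_cb hR hy)) (eta_nonneg y)

/-- linear bound near a flat boundary -/
lemma flat_bound {W : Set (Eu n)} {u : Eu n → ℝ} (hg : Good W u) {e : Eu n}
    (he : ‖e‖ = 1) (α : ℝ) (x : Eu n) (hx : 0 < inner ℝ e x + α) {R S : ℝ} (hR : 0 < R) (hS : 0 ≤ S)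
    (hW : closedBall x R ⊆ W) (hxR : inner ℝ e x + α ≤ R)
    (hz : ∀ y ∈ W, inner ℝ e y + α ≤ 0 → u y = 0) (hu : ∀ y ∈ closedBall x R, u y ≤ S) :
    u x ≤ (8 * (om n / ∫ y : Eu n, eta y) / R) * S * (inner ℝ e x + α) := by
  set σ := (inner ℝ e x + α) / R with hσ
  have hσ0 : 0 < σ := div_pos hx hR
  have hσ1 : σ ≤ 1 := (div_le_one hR).2 hxR
  have hBi : Integrable (fun y : Eu n => (ball (0 : Eu n) 1).indicator (fun _ => S * (8 * σ)) y) := by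
    rw [integrable_indicator_iff measurableSet_ball]
    exact integrableOn_const (measure_ball_lt_top.ne)
  have h := half_mean hg he α x hx hR hW hz hBi
    (fun y => Set.indicator_nonneg (fun _ _ => by positivity) y) ?_
  · rw [integral_indicator_const _ measurableSet_ball] at h
    have hI := eta_int_pos (n := n)
    rw [← le_div_iff₀ hI] at h
    refine h.trans (le_of_eq ?_)
    change om n • _ / _ = _
    rw [hσ, smul_eq_mul]; field_simp
  · intro y hy hT
    rw [Set.indicator_of_mem (by simpa using hy)]
    have hL : 0 ≤ σ + inner ℝ e y := by
      rw [inner_add_right, inner_smul_right] at hT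
      have h3 : σ + inner ℝ e y = (inner ℝ e x + R * inner ℝ e y + α) / R := by
        rw [hσ]; field_simp; ring
      rw [h3]; positivity
    have hn := norm_le_shift he y hσ0.le hL
    have hsq := norm_shift he y σ
    have hin : inner ℝ e y ≤ 1 := (real_inner_le_norm e y).trans (by rw [he, one_mul]; exact hy.le)
    have hk : eta y - eta (y + (2 * σ) • e) ≤ 8 * σ := by
      have h1 : 1 - ‖y + (2 * σ) • e‖ ^ 2 ≤ eta (y + (2 * σ) • e) := le_max_left _ _
      rw [eta_eq hy.le]
      nlinarith
    exact mul_le_mul (hu _ (mem_cb hR hy)) hk (sub_nonneg.2 (eta_mono hn)) hS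

end Tube

namespace Tube
open MeasureTheory Metric

variable {n : ℕ}

lemma eta_neg (y : Eu n) : eta (-y) = eta y := by simp [eta]

lemma int_inner_eta (e : Eu n) : ∫ y : Eu n, inner ℝ e y * eta y = 0 := by
  have h := integral_neg_eq_self (fun y : Eu n => inner ℝ e y * eta y) volume
  simp only [inner_neg_right, eta_neg, neg_mul] at h
  rw [integral_neg] at h
  linarith

lemma int_L (e : Eu n) (σ : ℝ) :
    ∫ y : Eu n, max (σ + inner ℝ e y) 0 * (eta y - eta (y + (2 * σ) • e)) = σ * ∫ y : Eu n, eta y ∨ ‖e‖ ≠ 1 := by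
  by_cases he : ‖e‖ = 1
  swap
  · right; exact he
  left
  have hee : inner ℝ e e = (1:ℝ) := by rw [real_inner_self_eq_norm_sq, he]; norm_num
  have h1 : Integrable (fun y : Eu n => max (σ + inner ℝ e y) 0 * eta y) :=
    int_of (by fun_prop) eta_cont eta_supp
  have h2 : Integrable (fun y : Eu n => max (-(σ + inner ℝ e y)) 0 * eta y) :=
    int_of (by fun_prop) eta_cont eta_supp
  have h3 : Integrable (fun y : Eu n => max (σ + inner ℝ e y) 0 * eta (y + (2 * σ) • e)) :=
    int_of (by fun_prop) (eta_cont.comp (by fun_prop)) (eta_supp.comp_homeomorph (Homeomorph.addRight _))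
  have h4 : ∫ y : Eu n, max (σ + inner ℝ e y) 0 * eta (y + (2 * σ) • e) =
      ∫ y : Eu n, max (-(σ + inner ℝ e y)) 0 * eta y := by
    have h5 := integral_add_right_eq_self (μ := (volume : Measure (Eu n))) (fun v : Eu n => max (inner ℝ e v - σ) 0 * eta v) ((2 * σ) • e)
    have h6 := integral_neg_eq_self (fun v : Eu n => max (inner ℝ e v - σ) 0 * eta v) volume
    simp only [inner_neg_right, eta_neg] at h6
    have e1 : ∀ y : Eu n, max (σ + inner ℝ e y) 0 * eta (y + (2 * σ) • e) =
      max (inner ℝ e (y + (2 * σ) • e) - σ) 0 * eta (y + (2 * σ) • e) := by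
      intro y
      rw [inner_add_right, inner_smul_right, hee]; congr 2; ring
    have e2 : ∀ y : Eu n, max (-(σ + inner ℝ e y)) 0 * eta y = max (-inner ℝ e y - σ) 0 * eta y := by
      intro y; congr 2; ring
    simp only [e1, e2]
    rw [h5, h6]
  simp only [mul_sub]
  rw [integral_sub h1 h3, h4, ← integral_sub h1 h2]
  have e3 : ∀ y : Eu n, max (σ + inner ℝ e y) 0 * eta y - max (-(σ + inner ℝ e y)) 0 * eta y =
      σ * eta y + inner ℝ e y * eta y := by
    intro y
    rw [← sub_mul, ← add_mul]
    congr 1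
    rcases le_total 0 (σ + inner ℝ e y) with h | h
    · rw [max_eq_left h, max_eq_right (by linarith)]; ring
    · rw [max_eq_right h, max_eq_left (by linarith)]; ring
  simp only [e3]
  rw [integral_add (eta_integrable.const_mul σ) (int_of (by fun_prop) eta_cont eta_supp), int_inner_eta,
    integral_const_mul, add_zero]

/-- Ratio decay. -/
lemma RD {W : Set (Eu n)} {u : Eu n → ℝ} (hg : Good W u) {e : Eu n}
    (he : ‖e‖ = 1) (α : ℝ) (x p : Eu n) (hx : 0 < inner ℝ e x + α) {R M ε : ℝ} (hR : 0 < R) (hM : 0 ≤ M)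
    (hε : 0 < ε) (hW : closedBall x R ⊆ W)
    (hz : ∀ y ∈ W, inner ℝ e y + α ≤ 0 → u y = 0)
    (hu : ∀ y ∈ closedBall x R, 0 < inner ℝ e y + α → u y ≤ M * (inner ℝ e y + α))
    (hp : ∀ y, ‖y - p‖ < ε * R → u y = 0 ∧ ε * R ≤ inner ℝ e y + α)
    (hpx : ‖p - x‖ + ε * R + 2 * (inner ℝ e x + α) ≤ R) :
    u x ≤ (1 - 4 * ε ^ (n + 2)) * M * (inner ℝ e x + α) := by
  set σ := (inner ℝ e x + α) / R with hσ
  have hσ0 : 0 < σ := div_pos hx hR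
  have hTx : inner ℝ e x + α = R * σ := by rw [hσ]; field_simp
  have hT : ∀ w, inner ℝ e (x + R • w) + α = R * (σ + inner ℝ e w) := by
    intro w; rw [inner_add_right, inner_smul_right, mul_add, ← hTx]; ring
  set q : Eu n := R⁻¹ • (p - x) with hq
  have hqn : ‖q‖ + ε + 2 * σ ≤ 1 := by
    rw [hq, norm_smul, norm_inv, Real.norm_of_nonneg hR.le, inv_mul_eq_div]
    rw [hTx] at hpx
    rw [← sub_nonneg]
    have : 1 - (‖p - x‖ / R + ε + 2 * σ) = (R - (‖p - x‖ + ε * R + 2 * (R * σ))) / R := by field_simp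
    rw [this]; exact div_nonneg (by linarith) hR.le
  set k : Eu n → ℝ := fun w => eta w - eta (w + (2 * σ) • e) with hk
  set G : Eu n → ℝ := fun w => max (σ + inner ℝ e w) 0 * k w with hG
  have hGi : Integrable G := by
    have : G = fun y => max (σ + inner ℝ e y) 0 * eta y - max (σ + inner ℝ e y) 0 * eta (y + (2 * σ) • e) := by
      ext y; simp only [hG, hk, mul_sub]
    rw [this]
    exact (int_of (by fun_prop) eta_cont eta_supp).sub
      (int_of (by fun_prop) (eta_cont.comp (by fun_prop)) (eta_supp.comp_homeomorph (Homeomorph.addRight _)))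
  have hG0 : ∀ w, 0 ≤ G w := by
    intro w
    rcases le_total 0 (σ + inner ℝ e w) with h | h
    · exact mul_nonneg (le_max_right _ _) (sub_nonneg.2 (eta_mono (norm_le_shift he w hσ0.le h)))
    · simp only [hG]; rw [max_eq_right h, zero_mul]
  have hind : ∀ y, (ball q ε).indicator G y ≤ G y := fun y =>
    Set.indicator_le_self' (fun _ _ => hG0 _) y
  have hsub : ∀ y ∈ ball q ε, u (x + R • y) = 0 ∧ ε ≤ σ + inner ℝ e y := by
    intro y hyq
    rw [mem_ball, dist_eq_norm] at hyq
    have : x + R • y - p = R • (y - q) := by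
      rw [hq, smul_sub, smul_smul, mul_inv_cancel₀ hR.ne', one_smul]; abel
    have h := hp (x + R • y) (by
      rw [this, norm_smul, Real.norm_of_nonneg hR.le]; nlinarith)
    refine ⟨h.1, ?_⟩
    have h2 := h.2
    rw [hT, mul_comm] at h2
    exact le_of_mul_le_mul_left h2 hR
  have h := half_mean hg he α x hx hR hW hz
    (B := fun y => M * R * (G y - (ball q ε).indicator G y))
    ((hGi.sub (hGi.indicator measurableSet_ball)).const_mul (M * R))
    (fun y => mul_nonneg (by positivity) (sub_nonneg.2 (hind y))) ?_
  · rw [integral_const_mul, integral_sub hGi (hGi.indicator measurableSet_ball)] at h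
    have hlow : 4 * σ * ε ^ 2 * (ε ^ n * om n) ≤ ∫ y, (ball q ε).indicator G y := by
      rw [← vol_ball q hε, integral_indicator measurableSet_ball, mul_comm]
      have : ∫ y in ball q ε, (4 * σ * ε ^ 2 : ℝ) = (volume : Measure (Eu n)).real (ball q ε) * (4 * σ * ε ^ 2) := by simp
      rw [← this]
      apply setIntegral_mono_on
      · exact integrableOn_const (measure_ball_lt_top.ne)
      · exact hGi.integrableOn
      · exact measurableSet_ball
      · intro y hy
        have hL := (hsub y hy).2
        rw [mem_ball, dist_eq_norm] at hy
        have hyn : ‖y‖ + 2 * σ ≤ 1 := by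
          have := norm_add_le (y - q) q
          rw [sub_add_cancel] at this; linarith
        have hyn2 : ‖y + (2 * σ) • e‖ ≤ 1 := by
          refine (norm_add_le _ _).trans ?_
          rw [norm_smul, he, mul_one, Real.norm_of_nonneg (by positivity)]; exact hyn
        simp only [hG, hk]
        rw [eta_eq hyn2, eta_eq (by linarith), norm_shift he, max_eq_left (by linarith)]
        have : (σ + inner ℝ e y) * (1 - ‖y‖ ^ 2 - (1 - (‖y‖ ^ 2 + 4 * σ * (σ + inner ℝ e y)))) = 4 * σ * (σ + inner ℝ e y) ^ 2 := by ring
        rw [this]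
        gcongr
    have hI := eta_int_pos (n := n)
    have hle := int_eta_le (n := n)
    have hIL : ∫ y, G y = σ * ∫ y : Eu n, eta y := by
      rcases int_L e σ with h | h
      · exact h
      · exact absurd he h
    rw [hIL] at h
    have h2 : 4 * σ * ε ^ 2 * (ε ^ n * ∫ y : Eu n, eta y) ≤ ∫ y, (ball q ε).indicator G y := by
      refine le_trans ?_ hlow; gcongr
    have h3 : u x * ∫ y : Eu n, eta y ≤ ((1 - 4 * ε ^ (n + 2)) * M * (inner ℝ e x + α)) * ∫ y : Eu n, eta y := by
      refine h.trans ?_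
      have := mul_le_mul_of_nonneg_left h2 (mul_nonneg hM hR.le)
      rw [hTx]
      calc _ ≤ M * R * (σ * ∫ y : Eu n, eta y) - M * R * (4 * σ * ε ^ 2 * (ε ^ n * ∫ y : Eu n, eta y)) := by linarith
        _ = _ := by ring
    exact le_of_mul_le_mul_right h3 hI
  · intro y hy hTy
    by_cases hyq : y ∈ ball q ε
    · rw [(hsub y hyq).1, zero_mul]
      exact mul_nonneg (by positivity) (sub_nonneg.2 (hind y))
    · show _ ≤ M * R * (G y - (ball q ε).indicator G y)
      rw [Set.indicator_of_notMem hyq, sub_zero]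
      have h1 := hu _ (mem_cb hR hy) hTy
      rw [hT] at h1 hTy
      have hL : 0 < σ + inner ℝ e y := pos_of_mul_pos_right hTy hR.le
      simp only [hG]
      rw [max_eq_left hL.le, ← mul_assoc]
      refine mul_le_mul_of_nonneg_right (h1.trans (le_of_eq (by ring))) ?_
      exact sub_nonneg.2 (eta_mono (norm_le_shift he y hσ0.le hL.le))

end Tube

namespace Tube
open MeasureTheory Metric

variable {n : ℕ}

lemma int_scale (F : Eu n → ℝ) (y : Eu n) {s : ℝ} (hs : 0 < s) :
    ∫ w, F (y + s • w) = (s ^ n)⁻¹ * ∫ z, F z := by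
  have h := Measure.integral_comp_smul (volume : Measure (Eu n)) (fun z => F (y + z)) s
  rw [h, integral_add_left_eq_self]
  rw [abs_of_nonneg (by positivity)]; simp

lemma integrable_scale {F : Eu n → ℝ} (hF : Integrable F) (y : Eu n) {s : ℝ} (hs : 0 < s) :
    Integrable (fun w => F (y + s • w)) := by
  have h := hF.comp_add_left y
  exact (integrable_comp_smul_iff (volume : Measure (Eu n)) (fun z => F (y + z)) hs.ne').2 h

lemma integrable_ind {g : Eu n → ℝ} {K : Set (Eu n)} (hK : IsCompact K) (hg : ContinuousOn g K) :
    Integrable (K.indicator g) := by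
  rw [integrable_indicator_iff hK.measurableSet]
  exact hg.integrableOn_compact hK

lemma mem_cb' {x y : Eu n} {r : ℝ} (hr : 0 < r) : x + r • y ∈ closedBall x r ↔ y ∈ closedBall (0 : Eu n) 1 := by
  rw [mem_closedBall, dist_eq_norm, add_sub_cancel_left, norm_smul, Real.norm_of_nonneg hr.le]
  rw [mem_closedBall, dist_zero_right]
  constructor <;> intro h <;> nlinarith

/-- super mean value property -/
lemma super_mean {W : Set (Eu n)} {u : Eu n → ℝ} (hg : Good W u) {e : Eu n}
    (he : ‖e‖ = 1) (x : Eu n) {r : ℝ} (hr : 0 < r)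
    (hW : closedBall x r ⊆ W) (hpos : ∀ y ∈ closedBall x r, 0 < u y) :
    ∫ w, (closedBall (0 : Eu n) 1).indicator (fun w => u (x + r • w) * eta w) w ≤ u x * ∫ y : Eu n, eta y := by
  obtain ⟨lam, hlam⟩ := ((isCompact_closedBall x r).image_of_continuousOn (hg.ct.mono hW)).bddAbove
  set Λ := lam + 1 with hΛ
  have hlt : ∀ y ∈ closedBall x r, u y < Λ := fun y hy => by
    have := hlam (Set.mem_image_of_mem u hy); linarith
  have hgood : Good (W ∩ u ⁻¹' (Set.Ioo 0 Λ)) (fun y => (-1) * u y + Λ) := by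
    refine ⟨hg.ct.isOpen_inter_preimage hg.op isOpen_Ioo, ?_, ?_, ?_, ?_⟩
    · rintro y ⟨-, hy⟩
      have := hy.2; show 0 ≤ (-1) * u y + Λ; linarith
    · exact ((continuousOn_const.mul hg.ct).add continuousOn_const).mono Set.inter_subset_left
    · rintro y ⟨hy, hy2⟩ -
      exact (contDiffAt_const.mul (hg.cd y hy hy2.1)).add contDiffAt_const
    · rintro y ⟨hy, hy2⟩ -
      exact lap_affine (hg.cd y hy hy2.1) (hg.lp y hy hy2.1) _ _
  have hmaps : Set.MapsTo (fun w : Eu n => x + r • w) (closedBall 0 1) (closedBall x r) :=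
    fun w hw => (mem_cb' hr).2 hw
  have huc : ContinuousOn (fun w : Eu n => u (x + r • w)) (closedBall 0 1) :=
    (hg.ct.mono hW).comp (by fun_prop) hmaps
  have hBi : Integrable ((closedBall (0 : Eu n) 1).indicator (fun w => ((-1) * u (x + r • w) + Λ) * eta w)) :=
    integrable_ind (isCompact_closedBall _ _)
      (((continuousOn_const.mul huc).add continuousOn_const).mul eta_cont.continuousOn)
  have hui : Integrable ((closedBall (0 : Eu n) 1).indicator (fun w => u (x + r • w) * eta w)) :=
    integrable_ind (isCompact_closedBall _ _) (huc.mul eta_cont.continuousOn)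
  have h := sub_mean hgood he x hr (fun y hy => ⟨hW hy, hpos y hy, hlt y hy⟩) hBi ?_ ?_
  · have hI : ∀ w, (closedBall (0 : Eu n) 1).indicator (fun w => ((-1) * u (x + r • w) + Λ) * eta w) w =
        Λ * eta w - (closedBall (0 : Eu n) 1).indicator (fun w => u (x + r • w) * eta w) w := by
      intro w
      by_cases hw : w ∈ closedBall (0 : Eu n) 1
      · rw [Set.indicator_of_mem hw, Set.indicator_of_mem hw]; ring
      · rw [Set.indicator_of_notMem hw, Set.indicator_of_notMem hw, eta_eq_zero]; · ring
        simp at hw; exact hw.le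
    simp only [hI] at h
    rw [integral_sub (eta_integrable.const_mul _) hui, integral_const_mul] at h
    linarith
  · intro w
    apply Set.indicator_nonneg
    intro w hw
    apply mul_nonneg _ (eta_nonneg _)
    have := hlt _ ((mem_cb' hr).2 hw); linarith
  · intro w hw
    rw [Set.indicator_of_mem (by simpa using hw.le)]

def CH (n : ℕ) : ℝ := 3 ^ n * (9 / 5)

lemma CH_ge : 1 ≤ CH n := by
  have : (1:ℝ) ≤ 3 ^ n := one_le_pow₀ (by norm_num)
  unfold CH; linarith

lemma harnack {W : Set (Eu n)} {u : Eu n → ℝ} (hg : Good W u) {e : Eu n}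
    (he : ‖e‖ = 1) (x y : Eu n) {r : ℝ} (hr : 0 < r)
    (hW : closedBall x r ⊆ W) (hpos : ∀ y ∈ closedBall x r, 0 < u y) (hy : ‖y - x‖ ≤ r / 4) :
    u x ≤ CH n * u y := by
  have hI := eta_int_pos (n := n)
  have hsubs : closedBall y (3 / 4 * r) ⊆ closedBall x r := by
    apply closedBall_subset_closedBall'
    rw [dist_eq_norm]; linarith
  have hsub2 : closedBall x (r / 4) ⊆ closedBall x r := closedBall_subset_closedBall (by linarith)
  set F := (closedBall x (r / 4)).indicator u with hF
  have hFi : Integrable F := integrable_ind (isCompact_closedBall _ _) (hg.ct.mono (hsub2.trans hW))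
  have hF0 : ∀ z, 0 ≤ F z := fun z => Set.indicator_nonneg (fun z hz => (hpos z (hsub2 hz)).le) z
  have h1 : u x * ∫ y : Eu n, eta y ≤ ∫ w, F (x + (r / 4) • w) := by
    refine sub_mean hg he x (by positivity : 0 < r / 4) (hsub2.trans hW) (integrable_scale hFi x (by positivity)) (fun w => hF0 _) ?_
    intro w hw
    have hm : x + (r / 4) • w ∈ closedBall x (r / 4) := mem_cb (by positivity) hw
    rw [hF, Set.indicator_of_mem hm]
    have := hpos _ (hsub2 hm)
    have := eta_le_one w
    nlinarith
  have h2 := super_mean hg he y (by positivity : 0 < 3 / 4 * r) (hsubs.trans hW) (fun z hz => hpos z (hsubs hz))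
  have h3 : ∫ w, 5 / 9 * F (y + (3 / 4 * r) • w) ≤
      ∫ w, (closedBall (0 : Eu n) 1).indicator (fun w => u (y + (3 / 4 * r) • w) * eta w) w := by
    apply integral_mono ((integrable_scale hFi y (by positivity)).const_mul _)
    · apply integrable_ind (isCompact_closedBall _ _)
      refine ContinuousOn.mul ?_ eta_cont.continuousOn
      exact (hg.ct.mono (hsubs.trans hW)).comp (by fun_prop) (fun w hw => (mem_cb' (by positivity)).2 hw)
    · intro w
      show 5 / 9 * F (y + (3 / 4 * r) • w) ≤ _
      by_cases hm : y + (3 / 4 * r) • w ∈ closedBall x (r / 4)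
      · rw [hF, Set.indicator_of_mem hm]
        have hu0 := hpos _ (hsub2 hm)
        rw [mem_closedBall, dist_eq_norm] at hm
        have hw : ‖w‖ ≤ 2 / 3 := by
          have h4 : ‖(3 / 4 * r) • w‖ ≤ r / 2 := by
            have : (3 / 4 * r) • w = (y + (3 / 4 * r) • w - x) - (y - x) := by abel
            rw [this]
            refine (norm_sub_le _ _).trans ?_
            linarith
          rw [norm_smul, Real.norm_of_nonneg (by positivity)] at h4
          by_contra hc
          push Not at hc
          nlinarith
        rw [Set.indicator_of_mem (by simp; linarith), eta_eq (by linarith)]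
        have : 5 / 9 ≤ 1 - ‖w‖ ^ 2 := by nlinarith [norm_nonneg w]
        nlinarith
      · rw [hF, Set.indicator_of_notMem hm, mul_zero]
        apply Set.indicator_nonneg
        intro w hw
        exact mul_nonneg (hpos _ (hsubs ((mem_cb' (by positivity)).2 hw))).le (eta_nonneg _)
  rw [integral_const_mul, int_scale _ _ (by positivity)] at h3
  rw [int_scale _ _ (by positivity)] at h1
  have h5 := h3.trans h2
  have h6 : (r / 4 : ℝ)^n * 3 ^ n = (3 / 4 * r) ^ n := by rw [← mul_pow]; congr 1; ring
  have hr4 : 0 < (r / 4) ^ n := by positivity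
  have h3n : (0:ℝ) < 3 ^ n := by positivity
  have h7 : u x * ∫ y : Eu n, eta y ≤ (CH n * u y) * ∫ y : Eu n, eta y := by
    refine h1.trans ?_
    rw [← h6] at h5
    have := mul_le_mul_of_nonneg_left h5 (by positivity : (0:ℝ) ≤ 3 ^ n * (9 / 5))
    unfold CH
    calc _ = 3 ^ n * (9 / 5) * (5 / 9 * (((r / 4) ^ n * 3 ^ n)⁻¹ * ∫ z, F z)) := by field_simp
      _ ≤ _ := this
      _ = _ := by ring
  exact le_of_mul_le_mul_right h7 hI

lemma HS {W : Set (Eu n)} {u : Eu n → ℝ} (hg : Good W u) {e : Eu n}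
    (he : ‖e‖ = 1) (x y : Eu n) {r : ℝ} (hr : 0 < r) (N : ℕ) (hN : ‖y - x‖ ≤ N * (r / 4))
    (h : ∀ t : ℝ, 0 ≤ t → t ≤ 1 → closedBall (x + t • (y - x)) r ⊆ W ∧
      ∀ z ∈ closedBall (x + t • (y - x)) r, 0 < u z) :
    u x ≤ CH n ^ N * u y := by
  rcases Nat.eq_zero_or_pos N with h0 | h0
  · subst h0
    have : y - x = 0 := by
      rw [← norm_le_zero_iff]; simpa using hN
    rw [sub_eq_zero] at this
    simp [this]
  have hN0 : (0:ℝ) < N := by exact_mod_cast h0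
  have hC := CH_ge (n := n)
  have key : ∀ i : ℕ, i ≤ N → u x ≤ CH n ^ i * u (x + ((i:ℝ) / N) • (y - x)) := by
    intro i
    induction i with
    | zero => intro _; simp
    | succ i ih =>
      intro hi
      have hi' : (i:ℝ) + 1 ≤ N := by exact_mod_cast hi
      refine (ih (by omega)).trans ?_
      obtain ⟨h1, h2⟩ := h ((i:ℝ) / N) (by positivity) (by rw [div_le_one hN0]; linarith)
      have := harnack hg he _ (x + (((i + 1 : ℕ):ℝ) / N) • (y - x)) hr h1 h2 (by
        have : x + (((i + 1 : ℕ):ℝ) / N) • (y - x) - (x + ((i:ℝ) / N) • (y - x)) = ((1:ℝ) / N) • (y - x) := by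
          rw [add_sub_add_left_eq_sub, ← sub_smul]; congr 1; push_cast; ring
        rw [this, norm_smul, Real.norm_of_nonneg (by positivity), one_div, inv_mul_le_iff₀ hN0]
        exact hN)
      rw [pow_succ, mul_assoc]
      exact mul_le_mul_of_nonneg_left this (by positivity)
  have := key N le_rfl
  rwa [div_self hN0.ne', one_smul, add_sub_cancel] at this

end Tube

namespace Tube
open MeasureTheory Metric

variable {n : ℕ}

def tt (e x : Eu n) : ℝ := inner ℝ e x
def rr (e x : Eu n) : ℝ := ‖x - (inner ℝ e x : ℝ) • e‖

lemma tt_cont (e : Eu n) : Continuous (tt e) := by unfold tt; fun_prop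
lemma rr_cont (e : Eu n) : Continuous (rr e) := by unfold rr; fun_prop
lemma rr_nonneg (e x : Eu n) : 0 ≤ rr e x := norm_nonneg _

lemma tt_lip {e : Eu n} (he : ‖e‖ = 1) (x y : Eu n) : |tt e x - tt e y| ≤ ‖x - y‖ := by
  unfold tt
  rw [← inner_sub_right]
  have := abs_real_inner_le_norm e (x - y)
  rwa [he, one_mul] at this

lemma inner_ee {e : Eu n} (he : ‖e‖ = 1) : inner ℝ e e = (1:ℝ) := by
  rw [real_inner_self_eq_norm_sq, he]; norm_num

lemma rr_sq {e : Eu n} (he : ‖e‖ = 1) (x : Eu n) : rr e x ^ 2 = ‖x‖ ^ 2 - tt e x ^ 2 := by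
  unfold rr tt
  rw [norm_sub_sq_real, norm_smul, inner_smul_right, he, mul_one, Real.norm_eq_abs, sq_abs, real_inner_comm]
  ring

lemma rr_le {e : Eu n} (he : ‖e‖ = 1) (x : Eu n) : rr e x ≤ ‖x‖ := by
  have := rr_sq he x
  apply le_of_sq_le_sq _ (norm_nonneg _)
  nlinarith [sq_nonneg (tt e x)]

lemma norm_le_rt {e : Eu n} (he : ‖e‖ = 1) (x : Eu n) : ‖x‖ ≤ rr e x + |tt e x| := by
  have h : x = (x - (inner ℝ e x : ℝ) • e) + (inner ℝ e x : ℝ) • e := by abel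
  calc ‖x‖ = ‖(x - (inner ℝ e x : ℝ) • e) + (inner ℝ e x : ℝ) • e‖ := by rw [← h]
    _ ≤ _ := norm_add_le _ _
    _ = _ := by rw [norm_smul, he, mul_one]; rfl

lemma rr_lip {e : Eu n} (he : ‖e‖ = 1) (x y : Eu n) : |rr e x - rr e y| ≤ ‖x - y‖ := by
  have h1 := abs_norm_sub_norm_le (x - (inner ℝ e x : ℝ) • e) (y - (inner ℝ e y : ℝ) • e)
  have h2 : (x - (inner ℝ e x : ℝ) • e) - (y - (inner ℝ e y : ℝ) • e) = (x - y) - (inner ℝ e (x - y) : ℝ) • e := by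
    rw [inner_sub_right, sub_smul]; abel
  rw [h2] at h1
  exact h1.trans (rr_le he (x - y))

lemma rr_seg {e : Eu n} (he : ‖e‖ = 1) (x : Eu n) (l a : ℝ) :
    rr e (x + l • (a • e - x)) = |1 - l| * rr e x := by
  unfold rr
  rw [← Real.norm_eq_abs, ← norm_smul]
  congr 1
  simp only [inner_add_right, inner_smul_right, inner_sub_right, inner_ee he]
  module

lemma tt_seg {e : Eu n} (he : ‖e‖ = 1) (x : Eu n) (l a : ℝ) :
    tt e (x + l • (a • e - x)) = (1 - l) * tt e x + l * a := by
  unfold tt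
  simp only [inner_add_right, inner_smul_right, inner_sub_right, inner_ee he]
  ring

lemma tt_smul {e : Eu n} (he : ‖e‖ = 1) (a : ℝ) : tt e (a • e) = a := by
  unfold tt; rw [inner_smul_right, inner_ee he, mul_one]

lemma rr_smul {e : Eu n} (he : ‖e‖ = 1) (a : ℝ) : rr e (a • e) = 0 := by
  unfold rr; rw [inner_smul_right, inner_ee he, mul_one, sub_self, norm_zero]

/-- moving radially and axially -/
lemma exists_move {e : Eu n} (he : ‖e‖ = 1) (x : Eu n) (hx : 0 < rr e x) (s τ : ℝ) (hs : 0 ≤ rr e x + s) :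
    ∃ p : Eu n, ‖p - x‖ ≤ |s| + |τ| ∧ tt e p = tt e x + τ ∧ rr e p = rr e x + s := by
  set v := x - (inner ℝ e x : ℝ) • e with hv
  have hvn : ‖v‖ = rr e x := rfl
  have hev : inner ℝ e v = (0:ℝ) := by
    rw [hv, inner_sub_right, inner_smul_right, inner_ee he]; ring
  have hvx : x = v + (inner ℝ e x : ℝ) • e := by rw [hv]; abel
  refine ⟨x + (s / rr e x) • v + τ • e, ?_, ?_, ?_⟩
  · have : x + (s / rr e x) • v + τ • e - x = (s / rr e x) • v + τ • e := by abel
    rw [this]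
    refine (norm_add_le _ _).trans ?_
    rw [norm_smul, norm_smul, he, mul_one, hvn, Real.norm_eq_abs, Real.norm_eq_abs, abs_div, abs_of_pos hx,
      div_mul_cancel₀ _ hx.ne']
  · unfold tt
    simp only [inner_add_right, inner_smul_right, inner_ee he, hev]; ring
  · have : x + (s / rr e x) • v + τ • e - (inner ℝ e (x + (s / rr e x) • v + τ • e) : ℝ) • e = ((rr e x + s) / rr e x) • v := by
      simp only [inner_add_right, inner_smul_right, inner_ee he, hev]
      rw [add_div, div_self hx.ne']
      rw [hv]; module
    unfold rr at this ⊢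
    rw [this]
    change ‖((rr e x + s) / rr e x) • v‖ = rr e x + s
    rw [norm_smul, hvn, Real.norm_of_nonneg (by positivity), div_mul_cancel₀ _ hx.ne']

/-- the normalised configuration -/
structure Core (e : Eu n) (α : ℝ) (g : ℝ → ℝ) (u : Eu n → ℝ) : Prop where
  he : ‖e‖ = 1
  α0 : 0 < α
  α1 : α ≤ 1 / 3
  gl : ∀ s t, |g s - g t| ≤ |s - t|
  g0 : g 0 = 1
  ct : ContinuousOn u {x | |tt e x| < 1 / 3}
  z : ∀ x, |tt e x| < 1 / 3 → (tt e x + α ≤ 0 ∨ g (tt e x) ≤ rr e x) → u x = 0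
  pos : ∀ x, |tt e x| < 1 / 3 → 0 < tt e x + α → rr e x < g (tt e x) → 0 < u x
  cd : ∀ x, |tt e x| < 1 / 3 → 0 < tt e x + α → rr e x < g (tt e x) → ContDiffAt ℝ 2 u x
  lp : ∀ x, |tt e x| < 1 / 3 → 0 < tt e x + α → rr e x < g (tt e x) → lap u x = 0

def DD (e : Eu n) (α : ℝ) (g : ℝ → ℝ) (x : Eu n) : ℝ := min (g (tt e x) - rr e x) (tt e x + α)

variable {e : Eu n} {α : ℝ} {g : ℝ → ℝ} {u : Eu n → ℝ}

namespace Core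

lemma good (h : Core e α g u) : Good {x | |tt e x| < 1 / 3} u := by
  have key : ∀ x, |tt e x| < 1 / 3 → u x ≠ 0 → 0 < tt e x + α ∧ rr e x < g (tt e x) := by
    intro x hx hu
    by_contra hc
    apply hu
    apply h.z x hx
    by_contra h2
    push Not at h2
    exact hc h2
  refine ⟨isOpen_lt (tt_cont e).abs continuous_const, ?_, h.ct, ?_, ?_⟩
  · intro x hx
    by_cases h0 : u x = 0
    · exact h0.ge
    · obtain ⟨h1, h2⟩ := key x hx h0
      exact (h.pos x hx h1 h2).le
  · intro x hx h0
    obtain ⟨h1, h2⟩ := key x hx h0.ne'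
    exact h.cd x hx h1 h2
  · intro x hx h0
    obtain ⟨h1, h2⟩ := key x hx h0.ne'
    exact h.lp x hx h1 h2

lemma g_bd (h : Core e α g u) (t : ℝ) : 1 - |t| ≤ g t ∧ g t ≤ 1 + |t| := by
  have := abs_le.1 (h.gl t 0)
  rw [h.g0, sub_zero] at this
  constructor <;> linarith [this.1, this.2]

lemma D_pos (h : Core e α g u) {x : Eu n} (hx : |tt e x| < 1 / 3) (hD : 0 < DD e α g x) : 0 < u x := by
  have := lt_min_iff.1 hD
  exact h.pos x hx this.2 (by linarith [this.1])

lemma D_nonpos (h : Core e α g u) {x : Eu n} (hx : |tt e x| < 1 / 3) (hD : DD e α g x ≤ 0) : u x = 0 := by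
  apply h.z x hx
  rcases min_le_iff.1 hD with h1 | h1
  · right; linarith
  · left; exact h1

lemma nn (h : Core e α g u) {x : Eu n} (hx : |tt e x| < 1 / 3) : 0 ≤ u x := h.good.nn x hx

lemma g_cont (h : Core e α g u) : Continuous g := by
  have : LipschitzWith 1 g := LipschitzWith.of_dist_le_mul (fun s t => by
    rw [Real.dist_eq, Real.dist_eq]; simpa using h.gl s t)
  exact this.continuous

lemma D_cont (h : Core e α g u) : Continuous (DD e α g) := by
  have := h.g_cont
  have h1 := tt_cont e
  have h2 := rr_cont e
  unfold DD
  fun_prop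

lemma D_lip (h : Core e α g u) (x y : Eu n) : DD e α g y ≤ DD e α g x + 2 * ‖y - x‖ := by
  have h1 := abs_le.1 (tt_lip h.he y x)
  have h2 := abs_le.1 (rr_lip h.he y x)
  have h3 := abs_le.1 (h.gl (tt e y) (tt e x))
  have h4 := tt_lip h.he y x
  unfold DD
  rw [← min_add_add_right]
  apply min_le_min
  · linarith [h3.2, h2.1]
  · linarith [h1.2, norm_nonneg (y - x)]

lemma D_le (h : Core e α g u) {x : Eu n} : DD e α g x ≤ |tt e x| + 1 / 3 := by
  have : DD e α g x ≤ tt e x + α := min_le_right _ _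
  linarith [le_abs_self (tt e x), h.α1]

lemma tt_ball (h : Core e α g u) {x y : Eu n} {r : ℝ} (hy : y ∈ closedBall x r) : |tt e y| ≤ |tt e x| + r := by
  rw [mem_closedBall, dist_eq_norm] at hy
  have h1 := tt_lip h.he y x
  have h2 := abs_sub_abs_le_abs_sub (tt e y) (tt e x)
  linarith

/-- interior balls -/
lemma int_ball (h : Core e α g u) {x : Eu n} {r : ℝ} (hx : |tt e x| ≤ 1 / 4) (hr : 20 * r ≤ DD e α g x)
    (hr0 : 0 < r) : closedBall x r ⊆ {x | |tt e x| < 1 / 3} ∧ ∀ z ∈ closedBall x r, 0 < u z := by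
  have h1 : ∀ z ∈ closedBall x r, |tt e z| < 1 / 3 := by
    intro z hz
    have := h.tt_ball hz
    have := h.D_le (x := x)
    linarith
  refine ⟨h1, fun z hz => h.D_pos (h1 z hz) ?_⟩
  have := h.D_lip z x
  rw [mem_closedBall, dist_eq_norm, norm_sub_rev] at hz
  linarith

lemma D_seg (h : Core e α g u) {x : Eu n} {l : ℝ} (hx : |tt e x| ≤ 1 / 4) (hD : 0 < DD e α g x)
    (hl0 : 0 ≤ l) (hl : l ≤ 1) :
    |tt e (x + l • ((1/6 : ℝ) • e - x))| ≤ 1 / 4 ∧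
    min (DD e α g x + l / 12) (1 / 12) ≤ DD e α g (x + l • ((1/6 : ℝ) • e - x)) := by
  have hx' := abs_le.1 hx
  have ht := tt_seg h.he x l (1/6)
  have hr := rr_seg h.he x l (1/6)
  rw [abs_of_nonneg (by linarith)] at hr
  have hr0 := rr_nonneg e x
  have htb : |tt e (x + l • ((1/6 : ℝ) • e - x))| ≤ 1 / 4 := by
    rw [ht, abs_le]; constructor <;> nlinarith
  refine ⟨htb, ?_⟩
  obtain ⟨hD1, hD2⟩ := (lt_min_iff.1 hD)
  have hD3 : DD e α g x ≤ g (tt e x) - rr e x := min_le_left _ _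
  have hD4 : DD e α g x ≤ tt e x + α := min_le_right _ _
  rw [show DD e α g (x + l • ((1/6 : ℝ) • e - x)) = min (g (tt e (x + l • ((1/6 : ℝ) • e - x))) - rr e (x + l • ((1/6 : ℝ) • e - x))) (tt e (x + l • ((1/6 : ℝ) • e - x)) + α) from rfl]
  apply le_min
  · rcases le_total (1/2) (rr e x) with hh | hh
    · refine (min_le_left _ _).trans ?_
      have h3 := abs_le.1 (h.gl (tt e (x + l • ((1/6 : ℝ) • e - x))) (tt e x))
      have h4 : |tt e (x + l • ((1/6 : ℝ) • e - x)) - tt e x| ≤ l * (5 / 12) := by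
        rw [ht, abs_le]; constructor <;> nlinarith
      rw [hr]
      nlinarith [h3.1]
    · refine (min_le_right _ _).trans ?_
      have := (h.g_bd (tt e (x + l • ((1/6 : ℝ) • e - x)))).1
      rw [hr]
      nlinarith
  · rw [ht]
    have := h.α0
    rcases le_total (DD e α g x) (1 / 12) with hh | hh
    · refine (min_le_left _ _).trans ?_
      nlinarith
    · refine (min_le_right _ _).trans ?_
      nlinarith

lemma dist_P (h : Core e α g u) {x : Eu n} (hx : |tt e x| ≤ 1 / 4) (hD : 0 < DD e α g x) :
    ‖(1/6 : ℝ) • e - x‖ ≤ 2 := by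
  have h1 := (lt_min_iff.1 hD).1
  have h2 := (h.g_bd (tt e x)).2
  have h3 := norm_le_rt h.he x
  have h4 := norm_sub_le ((1/6 : ℝ) • e) x
  rw [norm_smul, h.he, Real.norm_of_nonneg (by norm_num)] at h4
  linarith

lemma toP (h : Core e α g u) {x : Eu n} (hx : |tt e x| ≤ 1 / 4) {δ : ℝ} (hδ : 0 < δ) (hδ1 : δ ≤ 1 / 12)
    (hD : δ ≤ DD e α g x) (N : ℕ) (hN : 160 ≤ N * δ) :
    u x ≤ CH n ^ N * u ((1/6 : ℝ) • e) ∧ u ((1/6 : ℝ) • e) ≤ CH n ^ N * u x := by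
  have hd := h.dist_P hx (hδ.trans_le hD)
  have key : ∀ l : ℝ, 0 ≤ l → l ≤ 1 → closedBall (x + l • ((1/6 : ℝ) • e - x)) (δ / 20) ⊆ {x | |tt e x| < 1 / 3} ∧
      ∀ z ∈ closedBall (x + l • ((1/6 : ℝ) • e - x)) (δ / 20), 0 < u z := by
    intro l hl0 hl1
    obtain ⟨h1, h2⟩ := h.D_seg hx (hδ.trans_le hD) hl0 hl1
    apply h.int_ball h1 _ (by positivity)
    have : δ ≤ min (DD e α g x + l / 12) (1 / 12) := le_min (by linarith) hδ1
    linarith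
  constructor
  · apply HS h.good h.he x _ (by positivity : 0 < δ / 20) N _ key
    linarith
  · apply HS h.good h.he _ x (by positivity : 0 < δ / 20) N
    · rw [norm_sub_rev]; linarith
    · intro l hl0 hl1
      have := key (1 - l) (by linarith) (by linarith)
      have e1 : x + (1 - l) • ((1/6 : ℝ) • e - x) = (1/6 : ℝ) • e + l • (x - (1/6 : ℝ) • e) := by module
      rwa [e1] at this

lemma P_pos (h : Core e α g u) : 0 < u ((1/6 : ℝ) • e) := by
  have ht := tt_smul h.he (1/6)
  apply h.pos
  · rw [ht, abs_of_pos] <;> norm_num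
  · rw [ht]; linarith [h.α0]
  · have := (h.g_bd (1/6)).1
    rw [ht, rr_smul h.he]
    rw [abs_of_pos (by norm_num)] at this
    linarith

def KK (e : Eu n) : Set (Eu n) := {x | |tt e x| ≤ 1 / 4 ∧ rr e x ≤ 2}

lemma KK_compact (h : Core e α g u) : IsCompact (KK e) := by
  apply (isCompact_closedBall (0 : Eu n) 3).of_isClosed_subset
  · exact (isClosed_le (tt_cont e).abs continuous_const).inter (isClosed_le (rr_cont e) continuous_const)
  · rintro x ⟨h1, h2⟩
    rw [mem_closedBall, dist_zero_right]
    linarith [norm_le_rt h.he x]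

lemma mem_KK (h : Core e α g u) {x : Eu n} (hx : |tt e x| ≤ 1 / 4) (hD : 0 < DD e α g x) : x ∈ KK e := by
  have h1 := (lt_min_iff.1 hD).1
  have h2 := (h.g_bd (tt e x)).2
  exact ⟨hx, by linarith⟩

lemma KK_sub : KK e ⊆ {x | |tt e x| < 1 / 3} := fun x hx => by
  have := hx.1
  show |tt e x| < 1 / 3
  linarith

lemma zero_facts (h : Core e α g u) : tt e (0 : Eu n) = 0 ∧ rr e (0 : Eu n) = 0 ∧ DD e α g 0 = min 1 α ∧ 0 < DD e α g 0 := by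
  have h1 : tt e (0 : Eu n) = 0 := by simp [tt]
  have h2 : rr e (0 : Eu n) = 0 := by simp [rr]
  have h3 : DD e α g 0 = min 1 α := by unfold DD; rw [h1, h2, h.g0]; simp
  exact ⟨h1, h2, h3, by rw [h3]; exact lt_min one_pos h.α0⟩

end Core
end Tube

namespace Tube
open MeasureTheory Metric

variable {n : ℕ}

namespace Core

/-- interior growth -/
lemma growth (n : ℕ) : ∃ Q : ℕ, ∀ (e : Eu n) (α : ℝ) (g : ℝ → ℝ) (u : Eu n → ℝ), Core e α g u →
    ∀ x, |tt e x| ≤ 1 / 4 → 0 < DD e α g x → u x * DD e α g x ^ Q ≤ CH n ^ 3840 * u ((1/6 : ℝ) • e) := by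
  obtain ⟨Q, hQ⟩ := pow_unbounded_of_one_lt (2 * CH n) (by norm_num : (1:ℝ) < 1 + 1 / 1920)
  refine ⟨Q, fun e α g u h x hx hDx => ?_⟩
  have hC := CH_ge (n := n)
  have hC0 : 0 < CH n := by linarith
  set φ : Eu n → ℝ := fun y => u y * (max (DD e α g y) 0) ^ Q with hφ
  have hφc : ContinuousOn φ (KK e) :=
    (h.ct.mono KK_sub).mul (((h.D_cont.max continuous_const).pow Q).continuousOn)
  obtain ⟨x0, hx0, hmax⟩ := h.KK_compact.exists_isMaxOn ⟨x, h.mem_KK hx hDx⟩ hφc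
  have hφx : φ x = u x * DD e α g x ^ Q := by simp only [hφ]; rw [max_eq_left hDx.le]
  have hφpos : 0 < φ x := by
    rw [hφx]; exact mul_pos (h.D_pos (by linarith) hDx) (by positivity)
  have hφ0 : 0 < φ x0 := lt_of_lt_of_le hφpos (hmax (h.mem_KK hx hDx))
  have hlt : |tt e x0| < 1 / 3 := KK_sub hx0
  have hD0 : 0 < DD e α g x0 := by
    by_contra hc
    have : u x0 = 0 := h.D_nonpos hlt (not_lt.1 hc)
    simp only [hφ] at hφ0
    rw [this, zero_mul] at hφ0
    exact lt_irrefl _ hφ0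
  have hu0 := h.D_pos hlt hD0
  have hφx0 : φ x0 = u x0 * DD e α g x0 ^ Q := by simp only [hφ]; rw [max_eq_left hD0.le]
  rw [← hφx]
  refine (show φ x ≤ φ x0 from hmax (h.mem_KK hx hDx)).trans ?_
  set d := DD e α g x0 with hd
  rcases lt_or_ge d (1/24) with hd24 | hd24
  · exfalso
    set l := d / 160 with hl
    set x' := x0 + l • ((1/6 : ℝ) • e - x0) with hx'
    obtain ⟨ht', hD'⟩ := h.D_seg hx0.1 hD0 (by positivity : 0 ≤ l) (by linarith)
    have hD'' : d * (1 + 1 / 1920) ≤ DD e α g x' := by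
      refine le_trans ?_ hD'
      apply le_min <;> linarith
    have hD'0 : 0 < DD e α g x' := lt_of_lt_of_le (by positivity) hD''
    obtain ⟨hb1, hb2⟩ := h.int_ball (r := d / 20) hx0.1 (by linarith) (by positivity)
    have hh := harnack h.good h.he x0 x' (by positivity : 0 < d / 20) hb1 hb2 (by
      rw [hx', add_sub_cancel_left, norm_smul, Real.norm_of_nonneg (by positivity)]
      have := h.dist_P hx0.1 hD0
      nlinarith)
    have hφx' : φ x' = u x' * DD e α g x' ^ Q := by simp only [hφ]; rw [max_eq_left hD'0.le]
    have h1 : φ x' ≤ φ x0 := hmax (h.mem_KK ht' hD'0)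
    have h2 : (d * (1 + 1 / 1920)) ^ Q ≤ DD e α g x' ^ Q := pow_le_pow_left₀ (by positivity) hD'' Q
    rw [mul_pow] at h2
    have hu' : 0 < u x' := h.D_pos (by linarith) hD'0
    have hdQ : 0 < d ^ Q := by positivity
    have h3 : CH n * φ x' ≥ 2 * CH n * φ x0 := by
      rw [hφx', hφx0]
      calc CH n * (u x' * DD e α g x' ^ Q) = (CH n * u x') * DD e α g x' ^ Q := by ring
        _ ≥ u x0 * (d ^ Q * (2 * CH n)) := by
            apply mul_le_mul hh _ (by positivity) (by positivity)
            exact le_trans (mul_le_mul_of_nonneg_left hQ.le hdQ.le) h2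
        _ = _ := by ring
    nlinarith
  · have h1 := (h.toP hx0.1 (by norm_num : (0:ℝ) < 1/24) (by norm_num) hd24 3840 (by norm_num)).1
    have hd1 : d ≤ 1 := by linarith [h.D_le (x := x0)]
    have h2 : d ^ Q ≤ 1 := pow_le_one₀ hD0.le hd1
    rw [hφx0]
    nlinarith

lemma ext_ball {e : Eu n} {α : ℝ} {g : ℝ → ℝ} {u : Eu n → ℝ} (h : Core e α g u) {x : Eu n}
    (hx : |tt e x| ≤ 1 / 4) (hD : 0 < DD e α g x) (hxD : |tt e x| + 10 * DD e α g x < 1 / 3) :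
    ∃ p, ‖p - x‖ ≤ 4 * DD e α g x ∧ ∀ y, ‖y - p‖ < DD e α g x → u y = 0 := by
  set d := DD e α g x with hd
  have key : ∀ p, ‖p - x‖ ≤ 4 * d → ∀ y, ‖y - p‖ < d → |tt e y| < 1 / 3 := by
    intro p hp y hy
    have h1 := norm_add_le (y - p) (p - x)
    rw [sub_add_sub_cancel] at h1
    have := h.tt_ball (x := x) (y := y) (r := 5 * d) (by rw [mem_closedBall, dist_eq_norm]; linarith)
    linarith
  rcases min_choice (g (tt e x) - rr e x) (tt e x + α) with hc | hc
  · have hc' : d = g (tt e x) - rr e x := hc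
    have hr : 0 < rr e x := by
      have h1 := (h.g_bd (tt e x)).1
      have h2 := h.D_le (x := x)
      linarith
    obtain ⟨p, hp1, hp2, hp3⟩ := exists_move h.he x hr (4 * d) 0 (by positivity)
    rw [abs_zero, add_zero, abs_of_pos (by positivity)] at hp1
    refine ⟨p, hp1, fun y hy => ?_⟩
    apply h.z y (key p hp1 y hy)
    right
    have h1 := abs_le.1 (rr_lip h.he y p)
    have h2 := tt_lip h.he y p
    have h3 := abs_le.1 (h.gl (tt e y) (tt e p))
    rw [hp2, add_zero] at h2 h3
    linarith [h1.1, h3.2]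
  · have hc' : d = tt e x + α := hc
    have hp1 : ‖x - (2 * d) • e - x‖ ≤ 4 * d := by
      rw [sub_sub_cancel_left, norm_neg, norm_smul, h.he, Real.norm_of_nonneg (by positivity)]; linarith
    refine ⟨x - (2 * d) • e, hp1, fun y hy => ?_⟩
    apply h.z y (key _ hp1 y hy)
    left
    have h1 := abs_le.1 (tt_lip h.he y (x - (2 * d) • e))
    have h2 : tt e (x - (2 * d) • e) = tt e x - 2 * d := by
      unfold tt; rw [inner_sub_right, inner_smul_right, inner_ee h.he]; ring
    rw [h2] at h1
    linarith [h1.2]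

lemma dec {e : Eu n} {α : ℝ} {g : ℝ → ℝ} {u : Eu n → ℝ} (h : Core e α g u) {x : Eu n}
    (hx : |tt e x| ≤ 1 / 4) (hD : 0 < DD e α g x) (hxD : |tt e x| + 10 * DD e α g x < 1 / 3) {S : ℝ} (hS : 0 ≤ S)
    (hu : ∀ y, ‖y - x‖ ≤ 10 * DD e α g x → u y ≤ S) :
    u x ≤ (1 - 3 / 4 * (1 / 10) ^ n) * S := by
  obtain ⟨p, hp, hp0⟩ := h.ext_ball hx hD hxD
  refine decay h.good h.he x p (by positivity : 0 < 10 * DD e α g x) hS ?_ ?_ (by linarith) ?_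
  · intro y hy
    have := h.tt_ball hy
    show |tt e y| < 1 / 3
    linarith
  · intro y hy
    rw [mem_closedBall, dist_eq_norm] at hy
    exact hu y hy
  · intro y hy
    apply hp0
    linarith

/-- Carleson estimate -/
lemma carleson (n : ℕ) : ∃ C : ℝ, 0 < C ∧ ∀ (e : Eu n) (α : ℝ) (g : ℝ → ℝ) (u : Eu n → ℝ), Core e α g u →
    ∀ x, |tt e x| ≤ 1 / 8 → u x ≤ C * u ((1/6 : ℝ) • e) := by
  obtain ⟨Q, hQ⟩ := growth n
  set θ : ℝ := 3 / 4 * (1 / 10) ^ n with hθ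
  have hθ0 : 0 < θ := by positivity
  have hθ1 : θ < 1 := by
    have : ((1:ℝ) / 10) ^ n ≤ 1 := pow_le_one₀ (by norm_num) (by norm_num)
    rw [hθ]; linarith
  set κ : ℝ := θ / (20 * (Q + 1)) with hκ
  have hQ1 : (0:ℝ) < Q + 1 := by positivity
  have hκ0 : 0 < κ := by positivity
  have hκ1 : κ * (20 * (Q + 1)) = θ := by rw [hκ]; field_simp
  have hQ0 : (0:ℝ) ≤ Q := by positivity
  have hκ2 : 10 * κ < 1 := by nlinarith
  have hbern : 1 - θ < (1 - 10 * κ) ^ Q := by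
    have := one_add_mul_le_pow (by linarith : (-2:ℝ) ≤ -(10 * κ)) Q
    rw [← sub_eq_add_neg] at this
    refine lt_of_lt_of_le ?_ this
    nlinarith
  have hC0 : 0 < CH n := by linarith [CH_ge (n := n)]
  refine ⟨CH n ^ 3840 * (κ ^ Q)⁻¹ * 8 ^ Q, by positivity, fun e α g u h x hx => ?_⟩
  have hP := h.P_pos
  by_cases hDx : DD e α g x ≤ 0
  · rw [h.D_nonpos (by linarith) hDx]; positivity
  push Not at hDx
  set φ : Eu n → ℝ := fun y => u y * (1 / 4 - |tt e y|) ^ Q with hφ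
  have hφc : ContinuousOn φ (KK e) :=
    (h.ct.mono KK_sub).mul (((continuous_const.sub (tt_cont e).abs).pow Q).continuousOn)
  have hxK := h.mem_KK (by linarith : |tt e x| ≤ 1 / 4) hDx
  obtain ⟨x0, hx0, hmax⟩ := h.KK_compact.exists_isMaxOn ⟨x, hxK⟩ hφc
  have hux := h.D_pos (by linarith) hDx
  have hs : (1/8 : ℝ) ^ Q ≤ (1 / 4 - |tt e x|) ^ Q := pow_le_pow_left₀ (by norm_num) (by linarith) Q
  have hφx : u x * (1/8) ^ Q ≤ φ x := mul_le_mul_of_nonneg_left hs hux.le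
  have h80 : (0:ℝ) < (1/8) ^ Q := by positivity
  have hφ0 : u x * (1/8) ^ Q ≤ φ x0 := hφx.trans (hmax hxK)
  have hlt : |tt e x0| < 1 / 3 := KK_sub hx0
  have hφ00 : 0 < φ x0 := lt_of_lt_of_le (by positivity) hφ0
  have hD0 : 0 < DD e α g x0 := by
    by_contra hc
    have : u x0 = 0 := h.D_nonpos hlt (not_lt.1 hc)
    simp only [hφ] at hφ00
    rw [this, zero_mul] at hφ00
    exact lt_irrefl _ hφ00
  have hu0 := h.D_pos hlt hD0
  have hs0 : 0 ≤ 1 / 4 - |tt e x0| := by linarith [hx0.1]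
  set s := 1 / 4 - |tt e x0| with hsd
  have hsQ : 0 < s ^ Q := by
    have : φ x0 = u x0 * s ^ Q := rfl
    rw [this] at hφ00
    exact pos_of_mul_pos_right hφ00 hu0.le
  set d := DD e α g x0 with hd
  have hgoal : φ x0 ≤ CH n ^ 3840 * (κ ^ Q)⁻¹ * u ((1/6 : ℝ) • e) := by
    rcases le_or_gt d (κ * s) with hc | hc
    · exfalso
      have hspos : 0 < s := by
        rcases hs0.eq_or_lt with h0 | h0
        · rw [← h0, mul_zero] at hc; linarith
        · exact h0
      have hrat : 0 < (1 - 10 * κ) ^ Q := by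
        have : 0 < 1 - 10 * κ := by linarith
        positivity
      have h1 := h.dec (x := x0) (S := u x0 / (1 - 10 * κ) ^ Q) hx0.1 hD0
        (by
          have : 10 * d ≤ s := by nlinarith
          linarith) (by positivity) (by
          intro y hy
          have hty : |tt e y| ≤ |tt e x0| + 10 * d := h.tt_ball (by rw [mem_closedBall, dist_eq_norm]; exact hy)
          have hsy : s * (1 - 10 * κ) ≤ 1 / 4 - |tt e y| := by nlinarith
          have hsy0 : 0 < s * (1 - 10 * κ) := mul_pos hspos (by linarith)
          by_cases hDy : DD e α g y ≤ 0
          · rw [h.D_nonpos (by linarith) hDy]; positivity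
          push Not at hDy
          have h2 : φ y ≤ φ x0 := hmax (h.mem_KK (by linarith) hDy)
          have huy := h.D_pos (by linarith) hDy
          have h3 : (s * (1 - 10 * κ)) ^ Q ≤ (1 / 4 - |tt e y|) ^ Q := pow_le_pow_left₀ hsy0.le hsy Q
          rw [mul_pow] at h3
          have h4 : u y * (s ^ Q * (1 - 10 * κ) ^ Q) ≤ u x0 * s ^ Q :=
            (mul_le_mul_of_nonneg_left h3 huy.le).trans h2
          rw [le_div_iff₀ hrat]
          have : u y * (1 - 10 * κ) ^ Q * s ^ Q ≤ u x0 * s ^ Q := by linarith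
          exact le_of_mul_le_mul_right this hsQ)
      rw [← hθ, mul_div_assoc', le_div_iff₀ hrat] at h1
      nlinarith
    · have h1 := hQ e α g u h x0 hx0.1 hD0
      have h2 : (κ * s) ^ Q ≤ d ^ Q := pow_le_pow_left₀ (by positivity) hc.le Q
      rw [mul_pow] at h2
      have hκQ : 0 < κ ^ Q := by positivity
      have h3 : u x0 * (κ ^ Q * s ^ Q) ≤ CH n ^ 3840 * u ((1/6 : ℝ) • e) :=
        (mul_le_mul_of_nonneg_left h2 hu0.le).trans h1
      show u x0 * s ^ Q ≤ _
      have h4 : u x0 * s ^ Q = (κ ^ Q)⁻¹ * (u x0 * (κ ^ Q * s ^ Q)) := by field_simp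
      rw [h4]
      calc _ ≤ (κ ^ Q)⁻¹ * (CH n ^ 3840 * u ((1/6 : ℝ) • e)) := mul_le_mul_of_nonneg_left h3 (by positivity)
        _ = _ := by ring
  have h5 := hφ0.trans hgoal
  have h6 : u x = 8 ^ Q * (u x * (1/8) ^ Q) := by
    rw [one_div, inv_pow]; field_simp
  rw [h6]
  calc _ ≤ 8 ^ Q * (CH n ^ 3840 * (κ ^ Q)⁻¹ * u ((1/6 : ℝ) • e)) := mul_le_mul_of_nonneg_left h5 (by positivity)
    _ = _ := by ring

end Core
end Tube

namespace Tube
open MeasureTheory Metric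

variable {n : ℕ}

lemma lap_lin {u : Eu n → ℝ} {x : Eu n} (hu : ContDiffAt ℝ 2 u x) (hl : lap u x = 0) (e : Eu n) (c b : ℝ) :
    lap (fun y => c * (inner ℝ e y + b) - u y) x = 0 := by
  have hdiff : ∀ᶠ y in 𝓝 x, DifferentiableAt ℝ u y := by
    filter_upwards [hu.eventually (by simp)] with y hy using hy.differentiableAt (by norm_num)
  have hfd : ContDiffAt ℝ 1 (fderiv ℝ u) x := hu.fderiv_right (by norm_num)
  have key : ∀ i : Fin n, fderiv ℝ (fun y => fderiv ℝ (fun y => c * (inner ℝ e y + b) - u y) y (EuclideanSpace.single i (1:ℝ))) x (EuclideanSpace.single i 1)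
     = - fderiv ℝ (fun y => fderiv ℝ u y (EuclideanSpace.single i (1:ℝ))) x (EuclideanSpace.single i 1) := by
    intro i
    set w : Eu n := EuclideanSpace.single i 1
    have h1 : (fun y => fderiv ℝ (fun y => c * (inner ℝ e y + b) - u y) y w) =ᶠ[𝓝 x] fun y => c * inner ℝ e w - fderiv ℝ u y w := by
      filter_upwards [hdiff] with y hy
      have hi : HasFDerivAt (fun y : Eu n => c * (inner ℝ e y + b)) (c • innerSL ℝ e) y :=
        (((innerSL ℝ e).hasFDerivAt (x := y)).add_const b).const_mul c
      rw [(hi.fun_sub hy.hasFDerivAt).fderiv]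
      simp
    rw [h1.fderiv_eq]
    have h3 : DifferentiableAt ℝ (fun y => fderiv ℝ u y w) x :=
      (hfd.differentiableAt (by norm_num)).clm_apply (differentiableAt_const _)
    rw [(h3.hasFDerivAt.const_sub (c * inner ℝ e w)).fderiv]
    simp
  unfold lap at hl ⊢
  simp only [key]
  rw [Finset.sum_neg_distrib, hl, neg_zero]

namespace Core

variable {e : Eu n} {α : ℝ} {g : ℝ → ℝ} {u : Eu n → ℝ}

lemma thick_iter {C : ℝ} (hC0 : 0 < C) (h : Core e α g u)
    (hC : ∀ x, |tt e x| ≤ 1 / 8 → u x ≤ C * u ((1/6 : ℝ) • e)) (j : ℕ) :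
    ∀ x, |tt e x| ≤ 1 / 8 * (1 / 21) ^ j → DD e α g x ≤ 1 / 8 * (1 / 21) ^ j →
      u x ≤ (1 - 3 / 4 * (1 / 10) ^ n) ^ j * (C * u ((1/6 : ℝ) • e)) := by
  have hP := h.P_pos
  have hθ : 0 ≤ 1 - 3 / 4 * ((1:ℝ) / 10) ^ n := by
    have : ((1:ℝ) / 10) ^ n ≤ 1 := pow_le_one₀ (by norm_num) (by norm_num)
    linarith
  induction j with
  | zero => intro x hx _; simpa using hC x (by simpa using hx)
  | succ j ih =>
    intro x hx hD
    set c : ℝ := 1 / 8 * (1 / 21) ^ (j + 1) with hc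
    have hc' : 1 / 8 * (1 / 21 : ℝ) ^ j = 21 * c := by rw [hc, pow_succ]; ring
    have hj : ((1:ℝ) / 21) ^ j ≤ 1 := pow_le_one₀ (by norm_num) (by norm_num)
    have hcs : 21 * c ≤ 1 / 8 := by rw [← hc']; linarith
    rw [hc'] at ih
    by_cases hDx : DD e α g x ≤ 0
    · rw [h.D_nonpos (by linarith) hDx]; positivity
    push Not at hDx
    have := h.dec (x := x) (S := (1 - 3 / 4 * (1 / 10) ^ n) ^ j * (C * u ((1/6 : ℝ) • e))) (by linarith) hDx (by linarith)
      (by positivity) (by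
        intro y hy
        apply ih y
        · have := h.tt_ball (x := x) (y := y) (r := 10 * DD e α g x) (by rw [mem_closedBall, dist_eq_norm]; exact hy)
          linarith
        · have := h.D_lip x y
          linarith)
    rw [pow_succ]
    calc _ ≤ _ := this
      _ = _ := by ring

lemma flat {C : ℝ} (hC0 : 0 < C) (h : Core e α g u)
    (hC : ∀ x, |tt e x| ≤ 1 / 8 → u x ≤ C * u ((1/6 : ℝ) • e)) {x : Eu n} (hx : |tt e x| ≤ 1 / 16)
    (hT : 0 < tt e x + α) (hT2 : tt e x + α ≤ 1 / 20) :
    u x ≤ (8 * (om n / ∫ y : Eu n, eta y) * 20 * C) * u ((1/6 : ℝ) • e) * (tt e x + α) := by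
  have hP := h.P_pos
  have := flat_bound h.good h.he α x hT (R := 1 / 20) (S := C * u ((1/6 : ℝ) • e)) (by norm_num) (by positivity)
    (by
      intro y hy
      have := h.tt_ball hy
      show |tt e y| < 1 / 3
      linarith) hT2 (fun y hy hy2 => h.z y hy (Or.inl hy2)) (by
      intro y hy
      have := h.tt_ball hy
      exact hC y (by linarith))
  refine this.trans (le_of_eq ?_)
  change _ = _ * _ * (inner ℝ e x + α)
  ring

lemma thin_iter {C : ℝ} (hC0 : 0 < C) (h : Core e α g u)
    (hC : ∀ x, |tt e x| ≤ 1 / 16 → 0 < tt e x + α → tt e x + α ≤ 1 / 20 →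
      u x ≤ C * u ((1/6 : ℝ) • e) * (tt e x + α)) (j : ℕ) (hα : α ≤ 1 / 20 * (1 / 21) ^ j) :
    ∀ x, |rr e x - 1| ≤ 1 / 20 * (1 / 21) ^ j → 0 < tt e x + α → tt e x + α ≤ 1 / 20 * (1 / 21) ^ j →
      u x ≤ (1 - 4 * (1 / 20) ^ (n + 2)) ^ j * (C * u ((1/6 : ℝ) • e)) * (tt e x + α) := by
  have hP := h.P_pos
  have hα0 := h.α0
  have hθ : 0 ≤ 1 - 4 * ((1:ℝ) / 20) ^ (n + 2) := by
    have : ((1:ℝ) / 20) ^ (n + 2) ≤ (1 / 20) ^ 2 := pow_le_pow_of_le_one (by norm_num) (by norm_num) (by omega)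
    linarith
  induction j with
  | zero =>
    intro x _ hT hT2
    simp only [pow_zero, mul_one, one_mul] at hα hT2 ⊢
    refine hC x ?_ hT hT2
    rw [abs_le]; constructor <;> linarith
  | succ j ih =>
    set c : ℝ := 1 / 20 * (1 / 21) ^ (j + 1) with hc
    have hc0 : 0 < c := by positivity
    have hc' : 1 / 20 * (1 / 21 : ℝ) ^ j = 21 * c := by rw [hc, pow_succ]; ring
    have hj : ((1:ℝ) / 21) ^ j ≤ 1 := pow_le_one₀ (by norm_num) (by norm_num)
    have hcs : 21 * c ≤ 1 / 20 := by rw [← hc']; linarith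
    rw [hc'] at ih
    specialize ih (by linarith)
    intro x hr hT hT2
    have hr' := abs_le.1 hr
    have htx : |tt e x| ≤ c := by rw [abs_le]; constructor <;> linarith
    obtain ⟨p, hp1, hp2, hp3⟩ := exists_move h.he x (by linarith [hr'.1] : 0 < rr e x) (1 + 4 * c - rr e x) (2 * c - (tt e x + α))
      (by linarith)
    have hpd : ‖p - x‖ ≤ 7 * c := by
      refine hp1.trans ?_
      have a1 : |1 + 4 * c - rr e x| ≤ 5 * c := by rw [abs_le]; constructor <;> linarith [hr'.1, hr'.2]
      have a2 : |2 * c - (tt e x + α)| ≤ 2 * c := by rw [abs_le]; constructor <;> linarith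
      linarith
    have := RD h.good h.he α x p hT (R := 20 * c) (ε := 1 / 20)
      (M := (1 - 4 * (1 / 20) ^ (n + 2)) ^ j * (C * u ((1/6 : ℝ) • e))) (by positivity) (by positivity) (by norm_num)
      (by
        intro y hy
        have := h.tt_ball hy
        show |tt e y| < 1 / 3
        linarith) (fun y hy hy2 => h.z y hy (Or.inl hy2)) (by
        intro y hy hTy
        rw [mem_closedBall, dist_eq_norm] at hy
        have h1 := abs_le.1 (tt_lip h.he y x)
        have h2 := abs_le.1 (rr_lip h.he y x)
        refine ih y ?_ hTy ?_
        · rw [abs_le]; constructor <;> linarith [h2.1, h2.2, hr'.1, hr'.2]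
        · linarith [h1.2]) (by
        intro y hy
        have h1 := abs_le.1 (tt_lip h.he y p)
        have h2 := abs_le.1 (rr_lip h.he y p)
        have hty : |tt e y| ≤ 3 * c := by rw [abs_le]; constructor <;> linarith [h1.1, h1.2]
        refine ⟨h.z y (by linarith) (Or.inr ?_), ?_⟩
        · have := (h.g_bd (tt e y)).2
          linarith [h2.1]
        · change _ ≤ tt e y + α
          linarith [h1.1]) (by
        change _ + _ + 2 * (tt e x + α) ≤ _
        linarith)
    rw [pow_succ]
    calc _ ≤ _ := this
      _ = _ := by change _ * _ * (tt e x + α) = _; ring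

lemma lower (h : Core e α g u) (hα : α ≤ 1 / 100) :
    4 * (1 / 25) ^ (n + 2) * (u ((1/6 : ℝ) • e) / CH n) * α ≤ u 0 := by
  have hP := h.P_pos
  have hC0 : 0 < CH n := by linarith [CH_ge (n := n)]
  have hα0 := h.α0
  set lam := u ((1/6 : ℝ) • e) / CH n with hlam
  have hl0 : 0 < lam := by positivity
  obtain ⟨z1, z2, -, -⟩ := h.zero_facts
  have hW'o : IsOpen {x : Eu n | rr e x < 2 / 3 ∧ |tt e x| < 1 / 3} :=
    (isOpen_lt (rr_cont e) continuous_const).inter (isOpen_lt (tt_cont e).abs continuous_const)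
  have hTc : Continuous (fun y : Eu n => lam * (inner ℝ e y + α)) := by fun_prop
  have hct : ContinuousOn (fun y => lam * (inner ℝ e y + α) - u y) {x : Eu n | rr e x < 2 / 3 ∧ |tt e x| < 1 / 3} :=
    hTc.continuousOn.sub (h.ct.mono fun x hx => hx.2)
  have hev : ∀ x ∈ {x : Eu n | rr e x < 2 / 3 ∧ |tt e x| < 1 / 3}, 0 < max (lam * (inner ℝ e x + α) - u x) 0 →
      (fun y => max (lam * (inner ℝ e y + α) - u y) 0) =ᶠ[𝓝 x] (fun y => lam * (inner ℝ e y + α) - u y) ∧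
      ContDiffAt ℝ 2 u x ∧ lap u x = 0 := by
    intro x hx h0
    have h1 : 0 < lam * (inner ℝ e x + α) - u x := by
      rcases lt_max_iff.1 h0 with h1 | h1
      · exact h1
      · exact absurd h1 (lt_irrefl _)
    have hu := h.nn hx.2
    have hT : 0 < tt e x + α := by
      by_contra hc
      have : lam * (inner ℝ e x + α) ≤ 0 := mul_nonpos_of_nonneg_of_nonpos hl0.le (not_lt.1 hc)
      linarith
    have hg : rr e x < g (tt e x) := by
      have a := (h.g_bd (tt e x)).1
      have b := hx.1
      have c := hx.2
      linarith
    refine ⟨?_, h.cd x hx.2 hT hg, h.lp x hx.2 hT hg⟩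
    filter_upwards [(hct.continuousAt (hW'o.mem_nhds hx)).eventually (lt_mem_nhds h1)] with y hy
    exact max_eq_left hy.le
  have hgood : Good {x : Eu n | rr e x < 2 / 3 ∧ |tt e x| < 1 / 3} (fun y => max (lam * (inner ℝ e y + α) - u y) 0) := by
    refine ⟨hW'o, fun _ _ => le_max_right _ _, hct.sup continuousOn_const, ?_, ?_⟩
    · intro x hx h0
      obtain ⟨h1, h2, -⟩ := hev x hx h0
      refine ContDiffAt.congr_of_eventuallyEq ?_ h1
      have : ContDiffAt ℝ 2 (fun y : Eu n => lam * (inner ℝ e y + α)) x :=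
        contDiffAt_const.mul (((innerSL ℝ e).contDiff.contDiffAt).add contDiffAt_const)
      exact this.sub h2
    · intro x hx h0
      obtain ⟨h1, h2, h3⟩ := hev x hx h0
      rw [lap_congr h1]
      exact lap_lin h2 h3 e lam α
  have htP := tt_smul h.he (1/6)
  have hDP : 1 / 6 ≤ DD e α g ((1/6 : ℝ) • e) := by
    have := (h.g_bd (1/6)).1
    rw [abs_of_pos (by norm_num)] at this
    unfold DD
    rw [htP, rr_smul h.he]
    apply le_min <;> linarith
  have hRD := RD hgood h.he α 0 ((1/6 : ℝ) • e) (R := 1 / 4) (ε := 1 / 25) (M := lam)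
    (by rw [inner_zero_right]; linarith) (by norm_num) hl0.le (by norm_num) (by
      intro y hy
      have h1 := h.tt_ball hy
      have h2 := rr_le h.he y
      rw [mem_closedBall, dist_zero_right] at hy
      rw [z1, abs_zero] at h1
      exact ⟨by linarith, by linarith⟩) (by
      intro y hy hT
      have hu := h.nn hy.2
      apply max_eq_right
      have : lam * (inner ℝ e y + α) ≤ 0 := mul_nonpos_of_nonneg_of_nonpos hl0.le hT
      linarith) (by
      intro y hy hT
      apply max_le
      · have h1 := h.tt_ball hy
        rw [z1, abs_zero] at h1
        have := h.nn (x := y) (by linarith)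
        linarith
      · positivity) (by
      intro y hy
      norm_num at hy
      have hy1 := abs_le.1 (tt_lip h.he y ((1/6 : ℝ) • e))
      rw [htP] at hy1
      have hb1 : closedBall ((1/6 : ℝ) • e) (1 / 25) ⊆ {x | |tt e x| < 1 / 3} := by
        intro z hz
        have := h.tt_ball hz
        rw [htP, abs_of_pos (by norm_num : (0:ℝ) < 1 / 6)] at this
        show |tt e z| < 1 / 3
        linarith
      have hh := harnack h.good h.he ((1/6 : ℝ) • e) y (by norm_num : (0:ℝ) < 1 / 25) hb1 (by
        intro z hz
        apply h.D_pos (hb1 hz)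
        have := h.D_lip z ((1/6 : ℝ) • e)
        rw [mem_closedBall, dist_eq_norm, norm_sub_rev] at hz
        linarith) (by norm_num; exact hy.le)
      refine ⟨?_, ?_⟩
      · apply max_eq_right
        have h1 : lam ≤ u y := by rw [hlam, div_le_iff₀ hC0]; linarith
        have h2 : tt e y + α ≤ 1 := by norm_num at hy1; linarith [hy1.2]
        have h3 : lam * (tt e y + α) ≤ lam * 1 := mul_le_mul_of_nonneg_left h2 hl0.le
        change lam * (tt e y + α) - u y ≤ 0
        linarith
      · change _ ≤ tt e y + α
        norm_num at hy1 ⊢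
        linarith [hy1.1]) (by
      rw [inner_zero_right, sub_zero, norm_smul, h.he, Real.norm_of_nonneg (by norm_num)]
      linarith)
  rw [inner_zero_right, zero_add] at hRD
  have := (le_max_left (lam * α - u 0) 0).trans hRD
  linarith

/-- The main normalised statement. -/
theorem main (n : ℕ) : ∃ c : ℝ, 0 < c ∧ c < 1 ∧ ∀ (e : Eu n) (α : ℝ) (g : ℝ → ℝ) (u : Eu n → ℝ), Core e α g u →
    ∀ x, tt e x = 0 → 1 - c < rr e x → u x ≤ u 0 / 2 := by
  obtain ⟨C1, hC10, hC1⟩ := carleson n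
  have hC0 : 0 < CH n := by linarith [CH_ge (n := n)]
  have hI := eta_int_pos (n := n)
  have hom := om_pos (n := n)
  set C2 := 8 * (om n / ∫ y : Eu n, eta y) * 20 * C1 with hC2
  have hC20 : 0 < C2 := by positivity
  have hθ : 0 ≤ 1 - 4 * ((1:ℝ) / 20) ^ (n + 2) := by
    have : ((1:ℝ) / 20) ^ (n + 2) ≤ (1 / 20) ^ 2 := pow_le_pow_of_le_one (by norm_num) (by norm_num) (by omega)
    linarith
  have hθ1 : 1 - 4 * ((1:ℝ) / 20) ^ (n + 2) < 1 := by
    have : (0:ℝ) < (1 / 20) ^ (n + 2) := by positivity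
    linarith
  have hw0 : 0 < 4 * ((1:ℝ) / 25) ^ (n + 2) / CH n / (2 * C2) := by positivity
  obtain ⟨J, hJ⟩ := exists_pow_lt_of_lt_one hw0 hθ1
  set cJ : ℝ := 1 / 20 * (1 / 21) ^ J with hcJ
  have hcJ0 : 0 < cJ := by positivity
  set α₀ : ℝ := min cJ (1 / 100) with hα₀
  have hα₀0 : 0 < α₀ := lt_min hcJ0 (by norm_num)
  obtain ⟨N, hN⟩ := exists_nat_gt (160 / α₀)
  have hN' : 160 ≤ N * α₀ := by rw [div_lt_iff₀ hα₀0] at hN; exact hN.le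
  have hϑ : 0 ≤ 1 - 3 / 4 * ((1:ℝ) / 10) ^ n := by
    have : ((1:ℝ) / 10) ^ n ≤ 1 := pow_le_one₀ (by norm_num) (by norm_num)
    linarith
  have hϑ1 : 1 - 3 / 4 * ((1:ℝ) / 10) ^ n < 1 := by
    have : (0:ℝ) < (1 / 10) ^ n := by positivity
    linarith
  have hw1 : 0 < 1 / (2 * (C1 * CH n ^ N)) := by positivity
  obtain ⟨J', hJ'⟩ := exists_pow_lt_of_lt_one hw1 hϑ1
  have hK0 : (0:ℝ) < 1 / 8 * (1 / 21) ^ J' := by positivity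
  refine ⟨min (1/2) (min cJ (1 / 8 * (1 / 21) ^ J')), lt_min (by norm_num) (lt_min hcJ0 hK0),
    lt_of_le_of_lt (min_le_left _ _) (by norm_num), ?_⟩
  intro e α g u h x ht hr
  have hr1 : 1 - cJ < rr e x := by
    have := (min_le_right (1/2) (min cJ (1 / 8 * (1 / 21) ^ J'))).trans (min_le_left _ _)
    linarith
  have hr2 : 1 - 1 / 8 * (1 / 21) ^ J' < rr e x := by
    have := (min_le_right (1/2) (min cJ (1 / 8 * (1 / 21) ^ J'))).trans (min_le_right _ _)
    linarith
  obtain ⟨z1, z2, z3, z4⟩ := h.zero_facts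
  have hP := h.P_pos
  have hu0 : 0 < u 0 := h.D_pos (by rw [z1]; norm_num) z4
  by_cases hr3 : 1 ≤ rr e x
  · rw [h.z x (by rw [ht]; norm_num) (Or.inr (by rw [ht, h.g0]; exact hr3))]
    positivity
  push Not at hr3
  rcases le_or_gt α₀ α with hα | hα
  · have h1 := h.thick_iter hC10 (hC1 e α g u h) J' x (by rw [ht, abs_zero]; exact hK0.le) (by
      refine (min_le_left _ _).trans ?_
      rw [ht, h.g0]; linarith)
    have h2 := (h.toP (x := 0) (by rw [z1]; norm_num) hα₀0 ((min_le_right _ _).trans (by norm_num)) (by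
      rw [z3]
      exact le_min ((min_le_right _ _).trans (by norm_num)) hα) N hN').2
    have h3 : (1 - 3 / 4 * ((1:ℝ) / 10) ^ n) ^ J' * (C1 * CH n ^ N) ≤ 1 / 2 := by
      rw [lt_div_iff₀ (by positivity)] at hJ'
      linarith
    calc u x ≤ _ := h1
      _ ≤ (1 - 3 / 4 * ((1:ℝ) / 10) ^ n) ^ J' * (C1 * (CH n ^ N * u 0)) := by gcongr
      _ = ((1 - 3 / 4 * ((1:ℝ) / 10) ^ n) ^ J' * (C1 * CH n ^ N)) * u 0 := by ring
      _ ≤ 1 / 2 * u 0 := by gcongr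
      _ = _ := by ring
  · have hαc : α ≤ cJ := hα.le.trans (min_le_left _ _)
    have hα0 := h.α0
    have h1 := h.thin_iter hC20 (fun y a b c => h.flat hC10 (hC1 e α g u h) a b c) J hαc x (by
      rw [abs_le]; constructor <;> linarith) (by rw [ht]; linarith) (by rw [ht]; linarith)
    rw [ht, zero_add] at h1
    have h2 := h.lower (hα.le.trans (min_le_right _ _))
    rw [lt_div_iff₀ (by positivity)] at hJ
    have h3 : (1 - 4 * ((1:ℝ) / 20) ^ (n + 2)) ^ J * C2 * 2 ≤ 4 * (1 / 25) ^ (n + 2) / CH n := by linarith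
    have h4 := mul_le_mul_of_nonneg_right h3 (by positivity : 0 ≤ u ((1/6 : ℝ) • e) * α)
    have h5 : 4 * (1 / 25) ^ (n + 2) / CH n * (u ((1/6 : ℝ) • e) * α) = 4 * (1 / 25) ^ (n + 2) * (u ((1/6 : ℝ) • e) / CH n) * α := by ring
    rw [h5] at h4
    linarith

end Core
end Tube

namespace Tube
open MeasureTheory Metric

variable {n : ℕ}

lemma lap_scale {u : Eu n → ℝ} {z : Eu n} {F : ℝ} {y : Eu n} (hu : ContDiffAt ℝ 2 u (z + F • y))
    (hl : lap u (z + F • y) = 0) : lap (fun y => u (z + F • y)) y = 0 := by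
  have hcont : ContinuousAt (fun y : Eu n => z + F • y) y := by fun_prop
  have hdiff : ∀ᶠ y in 𝓝 y, DifferentiableAt ℝ u (z + F • y) := by
    refine hcont.eventually ?_
    filter_upwards [hu.eventually (by simp)] with y hy using hy.differentiableAt (by norm_num)
  have hfd : ContDiffAt ℝ 1 (fderiv ℝ u) (z + F • y) := hu.fderiv_right (by norm_num)
  have hA : ∀ y : Eu n, HasFDerivAt (fun y : Eu n => z + F • y) (F • ContinuousLinearMap.id ℝ (Eu n)) y :=
    fun y => ((hasFDerivAt_id y).const_smul F).const_add z
  have key : ∀ i : Fin n, fderiv ℝ (fun y => fderiv ℝ (fun y => u (z + F • y)) y (EuclideanSpace.single i (1:ℝ))) y (EuclideanSpace.single i 1)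
     = F ^ 2 * fderiv ℝ (fun y => fderiv ℝ u y (EuclideanSpace.single i (1:ℝ))) (z + F • y) (EuclideanSpace.single i 1) := by
    intro i
    set w : Eu n := EuclideanSpace.single i 1
    have h1 : (fun y => fderiv ℝ (fun y => u (z + F • y)) y w) =ᶠ[𝓝 y] fun y => F * fderiv ℝ u (z + F • y) w := by
      filter_upwards [hdiff] with y hy
      have := (hy.hasFDerivAt.comp y (hA y)).fderiv
      change fderiv ℝ (fun y => u (z + F • y)) y = _ at this
      rw [this]
      simp
    rw [h1.fderiv_eq]
    have h3 : DifferentiableAt ℝ (fun y => fderiv ℝ u y w) (z + F • y) :=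
      (hfd.differentiableAt (by norm_num)).clm_apply (differentiableAt_const _)
    have h4 := (h3.hasFDerivAt.comp y (hA y)).const_mul F
    change HasFDerivAt (fun y => F * fderiv ℝ u (z + F • y) w) _ y at h4
    rw [h4.fderiv]
    simp
    ring
  unfold lap at hl ⊢
  simp only [key]
  rw [← Finset.mul_sum, hl, mul_zero]

/-- scaled version of the core theorem -/
lemma scaled (n : ℕ) : ∃ c : ℝ, 0 < c ∧ c < 1 ∧ ∀ (e z : Eu n) (F α : ℝ) (G : ℝ → ℝ) (U : Eu n → ℝ),
    ‖e‖ = 1 → 0 < F → 0 < α → α ≤ 1 / 3 → (∀ s t, |G s - G t| ≤ |s - t|) → G 0 = F →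
    (∀ x, |tt e (x - z)| < F / 3 → ContinuousAt U x) →
    (∀ x, |tt e (x - z)| < F / 3 → (tt e (x - z) + α * F ≤ 0 ∨ G (tt e (x - z)) ≤ rr e (x - z)) → U x = 0) →
    (∀ x, |tt e (x - z)| < F / 3 → 0 < tt e (x - z) + α * F → rr e (x - z) < G (tt e (x - z)) →
      0 < U x ∧ ContDiffAt ℝ 2 U x ∧ lap U x = 0) →
    ∀ x, tt e (x - z) = 0 → (1 - c) * F < rr e (x - z) → U x ≤ U z / 2 := by
  obtain ⟨c, hc0, hc1, hmain⟩ := Core.main n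
  refine ⟨c, hc0, hc1, ?_⟩
  intro e z F α G U he hF hα0 hα1 hG hG0 hct hz hp x hx hr
  have ht : ∀ y, tt e (z + F • y - z) = F * tt e y := by
    intro y; unfold tt; rw [add_sub_cancel_left, inner_smul_right]
  have hrr : ∀ y, rr e (z + F • y - z) = F * rr e y := by
    intro y; unfold rr
    rw [add_sub_cancel_left, inner_smul_right, mul_smul, ← smul_sub, norm_smul, Real.norm_of_nonneg hF.le]
  have hlt : ∀ y, |tt e y| < 1 / 3 → |tt e (z + F • y - z)| < F / 3 := by
    intro y hy
    rw [ht, abs_mul, abs_of_pos hF]; nlinarith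
  have hpp : ∀ y, |tt e y| < 1 / 3 → 0 < tt e y + α → rr e y < G (F * tt e y) / F →
      0 < U (z + F • y) ∧ ContDiffAt ℝ 2 U (z + F • y) ∧ lap U (z + F • y) = 0 := by
    intro y hy h1 h2
    apply hp _ (hlt y hy)
    · rw [ht]; nlinarith
    · rw [ht, hrr]; rw [lt_div_iff₀ hF] at h2; linarith
  have hcore : Core e α (fun s => G (F * s) / F) (fun y => U (z + F • y)) := by
    refine ⟨he, hα0, hα1, ?_, ?_, ?_, ?_, ?_, ?_, ?_⟩
    · intro s t
      rw [← sub_div, abs_div, abs_of_pos hF, div_le_iff₀ hF]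
      refine (hG _ _).trans (le_of_eq ?_)
      rw [← mul_sub, abs_mul, abs_of_pos hF, mul_comm]
    · simp [hG0, hF.ne']
    · intro y hy
      apply ContinuousAt.continuousWithinAt
      exact ContinuousAt.comp (f := fun y : Eu n => z + F • y) (g := U) (hct _ (hlt y hy)) (by fun_prop)
    · intro y hy h
      apply hz _ (hlt y hy)
      rw [ht, hrr]
      rcases h with h | h
      · left; nlinarith
      · right
        rw [div_le_iff₀ hF] at h; linarith
    · exact fun y hy h1 h2 => (hpp y hy h1 h2).1
    · intro y hy h1 h2
      have hA : ContDiffAt ℝ 2 (fun y : Eu n => z + F • y) y := by fun_prop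
      exact ContDiffAt.comp y (hpp y hy h1 h2).2.1 hA
    · intro y hy h1 h2
      obtain ⟨-, h3, h4⟩ := hpp y hy h1 h2
      exact lap_scale h3 h4
  have hxx : z + F • (F⁻¹ • (x - z)) = x := by
    rw [smul_smul, mul_inv_cancel₀ hF.ne', one_smul, add_sub_cancel]
  have e1 := ht (F⁻¹ • (x - z))
  have e2 := hrr (F⁻¹ • (x - z))
  rw [hxx] at e1 e2
  have := hmain e α _ _ hcore (F⁻¹ • (x - z)) (by
    rw [hx] at e1
    rcases mul_eq_zero.1 e1.symm with h | h
    · exact absurd h hF.ne'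
    · exact h) (by
    rw [e2, mul_comm] at hr
    exact lt_of_mul_lt_mul_left hr hF.le)
  rw [hxx, smul_zero, add_zero] at this
  exact this

/-- No nontrivial nonnegative function harmonic where positive with bounded support. -/
lemma no_compact {u : Eu n → ℝ} (hg : Good Set.univ u) {e : Eu n} (he : ‖e‖ = 1) {R : ℝ} (hR : 0 < R)
    (h0 : ∀ y, R < ‖y‖ → u y = 0) (x : Eu n) : u x ≤ 0 := by
  by_contra hx
  push Not at hx
  have hxR : x ∈ closedBall (0 : Eu n) R := by
    rw [mem_closedBall, dist_zero_right]
    by_contra hc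
    rw [h0 x (not_le.1 hc)] at hx
    exact lt_irrefl _ hx
  obtain ⟨x0, hx0, hmax⟩ := (isCompact_closedBall (0 : Eu n) R).exists_isMaxOn ⟨x, hxR⟩ (hg.ct.mono (Set.subset_univ _))
  have hS : 0 < u x0 := hx.trans_le (hmax hxR)
  have hpos : (0:ℝ) < (1 / 10) ^ n := by positivity
  rw [mem_closedBall, dist_zero_right] at hx0
  have hpx : ‖x0 + (4 * R) • e - x0‖ = 4 * R := by
    rw [add_sub_cancel_left, norm_smul, he, mul_one, Real.norm_of_nonneg (by positivity)]
  have := decay hg he x0 (x0 + (4 * R) • e) (R := 10 * R) (S := u x0) (by positivity) hS.le (Set.subset_univ _) (by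
      intro y _
      by_cases hy : ‖y‖ ≤ R
      · exact hmax (by rw [mem_closedBall, dist_zero_right]; exact hy)
      · rw [h0 y (not_le.1 hy)]; exact hS.le) (by rw [hpx]; linarith) (by
      intro y hy
      apply h0
      have h1 : ‖x0 + (4 * R) • e - x0‖ ≤ ‖x0 + (4 * R) • e - y‖ + (‖y‖ + ‖x0‖) := by
        have : x0 + (4 * R) • e - x0 = (x0 + (4 * R) • e - y) + (y - x0) := by abel
        rw [this]
        exact (norm_add_le _ _).trans (add_le_add_right (norm_sub_le _ _) _)
      rw [hpx, norm_sub_rev] at h1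
      linarith)
  nlinarith

end Tube

namespace Tube
open MeasureTheory Metric

variable {n : ℕ}

lemma norm_ed (m : ℕ) : ‖(EuclideanSpace.single (Fin.last m) 1 : Eu (m+1))‖ = 1 := by simp

lemma tt_ed (m : ℕ) (x : Eu (m+1)) :
    tt (EuclideanSpace.single (Fin.last m) 1 : Eu (m+1)) x = lastCoord m x := by
  simp [tt, lastCoord, EuclideanSpace.inner_single_left]

lemma rr_ed (m : ℕ) (x : Eu (m+1)) :
    rr (EuclideanSpace.single (Fin.last m) 1 : Eu (m+1)) x = tildeNorm m x := by
  have h1 := rr_sq (norm_ed m) x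
  rw [tt_ed, EuclideanSpace.norm_sq_eq, Fin.sum_univ_castSucc] at h1
  have h2 : rr (EuclideanSpace.single (Fin.last m) 1 : Eu (m+1)) x ^ 2
      = ∑ i : Fin m, x (Fin.castSucc i) ^ 2 := by
    rw [h1]; simp [lastCoord]
  rw [tildeNorm, ← h2, Real.sqrt_sq (rr_nonneg _ _)]

/-- the part of the tube below level `t`. -/
def Low (e : Eu n) (f : ℝ → ℝ) (t : ℝ) : Set (Eu n) := {x | rr e x < f (tt e x) ∧ tt e x < t}

lemma low_preconn {e : Eu n} (he : ‖e‖ = 1) {f : ℝ → ℝ} (hf : Set.OrdConnected {s | 0 < f s})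
    (t : ℝ) {x₀ : Eu n} (hx₀ : x₀ ∈ Low e f t) : IsPreconnected (Low e f t) := by
  set A : Set (Eu n) := (fun l : ℝ => l • e) '' ({s | 0 < f s} ∩ Set.Iio t) with hA
  have hAc : IsPreconnected A := by
    have : Set.OrdConnected ({s | 0 < f s} ∩ Set.Iio t) := hf.inter Set.ordConnected_Iio
    exact this.isPreconnected.image _ (by fun_prop)
  have hAs : A ⊆ Low e f t := by
    rintro _ ⟨l, ⟨h1, h2⟩, rfl⟩
    refine ⟨?_, ?_⟩
    · simp only [rr_smul he, tt_smul he]; exact h1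
    · simp only [tt_smul he]; exact h2
  have hxA : ∀ x ∈ Low e f t, tt e x • e ∈ A := by
    intro x hx
    exact ⟨tt e x, ⟨(rr_nonneg _ _).trans_lt hx.1, hx.2⟩, rfl⟩
  have hseg : ∀ x ∈ Low e f t, segment ℝ x (tt e x • e) ⊆ Low e f t := by
    intro x hx
    rw [segment_eq_image']
    rintro _ ⟨l, ⟨h1, h2⟩, rfl⟩
    have ht : tt e (x + l • (tt e x • e - x)) = tt e x := by rw [tt_seg he]; ring
    have hr : rr e (x + l • (tt e x • e - x)) ≤ rr e x := by
      rw [rr_seg he, abs_of_nonneg (by linarith)]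
      nlinarith [rr_nonneg e x]
    refine ⟨?_, ?_⟩
    · simp only [ht]; exact hr.trans_lt hx.1
    · simp only [ht]; exact hx.2
  have hu : ∀ x ∈ Low e f t, IsPreconnected (A ∪ segment ℝ x (tt e x • e)) := fun x hx =>
    hAc.union _ (hxA x hx) (right_mem_segment ℝ _ _) (convex_segment _ _).isPreconnected
  apply isPreconnected_of_forall x₀
  intro y hy
  refine ⟨(A ∪ segment ℝ x₀ (tt e x₀ • e)) ∪ (A ∪ segment ℝ y (tt e y • e)), ?_, ?_, ?_, ?_⟩
  · exact Set.union_subset (Set.union_subset hAs (hseg _ hx₀)) (Set.union_subset hAs (hseg _ hy))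
  · exact Or.inl (Or.inr (left_mem_segment ℝ _ _))
  · exact Or.inr (Or.inr (left_mem_segment ℝ _ _))
  · exact (hu x₀ hx₀).union _ (Or.inl (hxA _ hx₀)) (Or.inl (hxA _ hx₀)) (hu y hy)

lemma tube_eq (m : ℕ) (f : ℝ → ℝ) (t : ℝ) :
    Low (EuclideanSpace.single (Fin.last m) 1 : Eu (m+1)) f t =
      {x | x ∈ tube m f ∧ lastCoord m x < t} := by
  ext x
  simp only [Low, tube, Set.mem_setOf_eq, rr_ed, tt_ed]

lemma comp_eq (m : ℕ) {f : ℝ → ℝ} (hf : Set.OrdConnected {s | 0 < f s})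
    (t : ℝ) {x₀ : Eu (m+1)} (hx₀ : x₀ ∈ tube m f) (hl : lastCoord m x₀ < t) :
    connectedComponentIn (tube m f \ cross m f t) x₀ =
      Low (EuclideanSpace.single (Fin.last m) 1 : Eu (m+1)) f t := by
  have hx' : x₀ ∈ Low (EuclideanSpace.single (Fin.last m) 1 : Eu (m+1)) f t := by
    rw [tube_eq]; exact ⟨hx₀, hl⟩
  apply Set.Subset.antisymm
  · intro y hy
    have hys := connectedComponentIn_subset _ _ hy
    rw [tube_eq]
    refine ⟨hys.1, ?_⟩
    by_contra hc
    push Not at hc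
    have hpc : IsPreconnected (tt (EuclideanSpace.single (Fin.last m) 1 : Eu (m+1)) ''
        connectedComponentIn (tube m f \ cross m f t) x₀) :=
      isPreconnected_connectedComponentIn.image _ (tt_cont _).continuousOn
    have hxm : x₀ ∈ connectedComponentIn (tube m f \ cross m f t) x₀ :=
      mem_connectedComponentIn ⟨hx₀, fun h => by have := h.2; linarith⟩
    have := hpc.ordConnected.out ⟨x₀, hxm, rfl⟩ ⟨y, hy, rfl⟩
    have h3 : t ∈ Set.Icc (tt (EuclideanSpace.single (Fin.last m) 1 : Eu (m+1)) x₀)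
        (tt (EuclideanSpace.single (Fin.last m) 1 : Eu (m+1)) y) := by
      rw [tt_ed, tt_ed]; exact ⟨hl.le, hc⟩
    obtain ⟨w, hw, hwt⟩ := this h3
    have hws := connectedComponentIn_subset _ _ hw
    rw [tt_ed] at hwt
    exact hws.2 ⟨hws.1, hwt⟩
  · apply (low_preconn (norm_ed m) hf t hx').subset_connectedComponentIn hx'
    rw [tube_eq]
    rintro y ⟨h1, h2⟩
    exact ⟨h1, fun h => by have := h.2; linarith⟩

end Tube

namespace Tube
open MeasureTheory Metric

lemma ind_in {m : ℕ} {D : Set (Eu (m+1))} (hD : IsOpen D) {h : Eu (m+1) → ℝ}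
    (hh : IsHarmonicOn m h D) {x : Eu (m+1)} (hx : x ∈ D) :
    ContDiffAt ℝ 2 (D.indicator h) x ∧ lap (D.indicator h) x = 0 := by
  have heq : D.indicator h =ᶠ[𝓝 x] h := by
    filter_upwards [hD.mem_nhds hx] with y hy
    exact Set.indicator_of_mem hy h
  have hc : ContDiffAt ℝ 2 h x := (hh.1).contDiffAt (hD.mem_nhds hx)
  refine ⟨hc.congr_of_eventuallyEq heq, ?_⟩
  rw [lap_congr heq, ← hh.2 x hx]
  unfold lap
  refine Finset.sum_congr rfl fun i _ => ?_
  rw [iteratedFDerivWithin_of_isOpen 2 hD hx, iteratedFDeriv_two_apply]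
  have hd : DifferentiableAt ℝ (fderiv ℝ h) x :=
    (hc.fderiv_right (m := 1) (by norm_num)).differentiableAt (by norm_num)
  rw [fderiv_clm_apply hd (differentiableAt_const _)]
  simp

lemma ind_cont {m : ℕ} {D : Set (Eu (m+1))} (hD : IsOpen D) {h : Eu (m+1) → ℝ}
    (hh : IsHarmonicOn m h D) {x : Eu (m+1)}
    (hx : x ∈ frontier D → Tendsto h (𝓝[D] x) (𝓝 0)) : ContinuousAt (D.indicator h) x := by
  by_cases h1 : x ∈ D
  · exact (ind_in hD hh h1).1.continuousAt
  by_cases h2 : x ∈ closure D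
  · have h3 := hx ⟨h2, by rwa [hD.interior_eq]⟩
    unfold ContinuousAt
    rw [Set.indicator_of_notMem h1]
    have : 𝓝 x = 𝓝[D] x ⊔ 𝓝[Dᶜ] x := by
      rw [← nhdsWithin_union, Set.union_compl_self, nhdsWithin_univ]
    rw [this]
    apply Tendsto.sup
    · apply h3.congr'
      filter_upwards [self_mem_nhdsWithin] with y hy
      rw [Set.indicator_of_mem hy]
    · apply tendsto_const_nhds.congr'
      filter_upwards [self_mem_nhdsWithin] with y hy
      rw [Set.indicator_of_notMem hy]
  · have : D.indicator h =ᶠ[𝓝 x] fun _ => 0 := by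
      filter_upwards [isClosed_closure.isOpen_compl.mem_nhds h2] with y hy
      exact Set.indicator_of_notMem (fun hc => hy (subset_closure hc)) h
    exact continuousAt_const.congr this.symm

lemma low_open {n : ℕ} (e : Eu n) {f g : ℝ → ℝ} (hV : IsOpen {s | 0 < f s}) (hg : Continuous g)
    (hfg : ∀ s, 0 < f s → f s = g s) (t : ℝ) : IsOpen (Low e f t) := by
  have : Low e f t = (tt e ⁻¹' {s | 0 < f s}) ∩ ({x | rr e x < g (tt e x)} ∩ {x | tt e x < t}) := by
    ext x
    constructor
    · rintro ⟨h1, h2⟩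
      have h0 : 0 < f (tt e x) := (rr_nonneg e x).trans_lt h1
      exact ⟨h0, by rw [hfg _ h0] at h1; exact h1, h2⟩
    · rintro ⟨h0, h1, h2⟩
      refine ⟨?_, h2⟩
      rw [hfg _ h0]; exact h1
  rw [this]
  exact (hV.preimage (tt_cont e)).inter ((isOpen_lt (rr_cont e) (hg.comp (tt_cont e))).inter
    (isOpen_lt (tt_cont e) continuous_const))

lemma tt_pm {n : ℕ} {e z : Eu n} (he : ‖e‖ = 1) {σ ε : ℝ} (hz : z = σ • e) (x : Eu n) :
    tt (ε • e) (x - z) = ε * (tt e x - σ) := by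
  have h : tt e z = σ := by rw [hz, tt_smul he]
  rw [← h]
  simp only [tt, inner_sub_right, inner_smul_left]
  simp only [conj_trivial]
  ring

lemma rr_pm {n : ℕ} {e z : Eu n} (he : ‖e‖ = 1) {σ ε : ℝ} (hε : ε * ε = 1)
    (hz : z = σ • e) (x : Eu n) : rr (ε • e) (x - z) = rr e x := by
  unfold rr
  congr 1
  rw [inner_smul_left, smul_smul, hz, inner_sub_right, inner_smul_right, inner_ee he]
  simp only [conj_trivial]
  rw [show ε * (inner ℝ e x - σ * 1) * ε = ε * ε * (inner ℝ e x - σ) by ring, hε, one_mul, sub_smul]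
  abel

/-- application of `scaled` -/
lemma apply_scaled (m : ℕ) : ∃ c : ℝ, 0 < c ∧ c < 1 ∧
    ∀ (e z : Eu (m+1)) (f g : ℝ → ℝ) (t σ ε α : ℝ) (h : Eu (m+1) → ℝ), ‖e‖ = 1 → ε * ε = 1 →
      z = σ • e → IsOpen {s | 0 < f s} → (∀ s t, |g s - g t| ≤ |s - t|) →
      (∀ s, 0 < f s → f s = g s) → 0 < f σ → 0 < α → α ≤ 1/3 →
      (∀ l, |l - σ| < f σ / 3 → (0 < ε * (l - σ) + α * f σ ↔ 0 < f l ∧ l < t)) →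
      (∀ l, |l - σ| < f σ / 3 → 0 < f l → l ≠ t) →
      IsHarmonicOn m h (Low e f t) → (∀ x ∈ Low e f t, 0 < h x) →
      (∀ x ∈ frontier (Low e f t), ¬ (rr e x < f (tt e x) ∧ tt e x = t) →
        Tendsto h (𝓝[Low e f t] x) (𝓝 0)) →
      ∀ x, tt e x = σ → (1 - c) * f σ < rr e x → rr e x < f σ → h x ≤ h z / 2 := by
  obtain ⟨c, hc0, hc1, H⟩ := scaled (m+1)
  refine ⟨c, hc0, hc1, ?_⟩
  intro e z f g t σ ε α h he hε hz hV hg hfg hF hα hα3 hiff hne hh hpos hfr x hx hxr hxr2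
  have hgc : Continuous g := by
    have : LipschitzWith 1 g := LipschitzWith.of_dist_le_mul fun a b => by
      simpa [Real.dist_eq] using hg a b
    exact this.continuous
  have hD := low_open e hV hgc hfg t
  have he' : ‖ε • e‖ = 1 := by
    rw [norm_smul, he, mul_one, Real.norm_eq_abs]
    have : |ε| * |ε| = 1 := by rw [← abs_mul, hε, abs_one]
    nlinarith [abs_nonneg ε]
  have haε : |ε| = 1 := by
    have := he'
    rwa [norm_smul, he, mul_one, Real.norm_eq_abs] at this
  have habs : ∀ y, |tt (ε • e) (y - z)| = |tt e y - σ| := by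
    intro y; rw [tt_pm he hz, abs_mul, haε, one_mul]
  have hback : ∀ y, σ + ε * tt (ε • e) (y - z) = tt e y := by
    intro y; rw [tt_pm he hz, ← mul_assoc, hε]; ring
  have hσt : σ < t := ((hiff σ (by simp; positivity)).1 (by simp; positivity)).2
  have hin : ∀ y, tt e y = σ → rr e y < f σ → y ∈ Low e f t := by
    intro y h1 h2; exact ⟨by rw [h1]; exact h2, by rw [h1]; exact hσt⟩
  have hz1 : tt e z = σ := by rw [hz, tt_smul he]
  have hz2 : rr e z = 0 := by rw [hz, rr_smul he]
  have key := H (ε • e) z (f σ) α (fun τ => g (σ + ε * τ)) ((Low e f t).indicator h) he' hF hα hα3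
    ?_ ?_ ?_ ?_ ?_ x ?_ ?_
  · rw [Set.indicator_of_mem (hin x hx hxr2), Set.indicator_of_mem (hin z hz1 (by rw [hz2]; exact hF))]
      at key
    exact key
  · intro a b
    refine (hg _ _).trans (le_of_eq ?_)
    rw [show σ + ε * a - (σ + ε * b) = ε * (a - b) by ring, abs_mul, haε, one_mul]
  · simp only [mul_zero, add_zero]; exact (hfg _ hF).symm
  · intro y hy
    rw [habs] at hy
    apply ind_cont hD hh
    intro hyf
    apply hfr y hyf
    rintro ⟨h1, h2⟩
    exact hne _ hy ((rr_nonneg e y).trans_lt h1) h2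
  · intro y hy hor
    rw [habs] at hy
    apply Set.indicator_of_notMem
    rintro ⟨h1, h2⟩
    have h0 := (rr_nonneg e y).trans_lt h1
    rcases hor with h | h
    · rw [tt_pm he hz] at h
      have := (hiff _ hy).2 ⟨h0, h2⟩
      linarith
    · rw [hback, rr_pm he hε hz, ← hfg _ h0] at h
      linarith
  · intro y hy hp hr
    rw [habs] at hy
    rw [tt_pm he hz] at hp
    have h0 := (hiff _ hy).1 hp
    rw [hback, rr_pm he hε hz, ← hfg _ h0.1] at hr
    have hyD : y ∈ Low e f t := ⟨hr, h0.2⟩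
    refine ⟨?_, ind_in hD hh hyD⟩
    rw [Set.indicator_of_mem hyD]; exact hpos y hyD
  · rw [tt_pm he hz, hx]; ring
  · rw [rr_pm he hε hz]; exact hxr

/-- no positive harmonic function vanishing on the whole boundary of a bounded tube -/
lemma no_bounded (m : ℕ) {e : Eu (m+1)} {f g : ℝ → ℝ} {t σ M : ℝ} {h : Eu (m+1) → ℝ} (he : ‖e‖ = 1)
    (hV : IsOpen {s | 0 < f s}) (hgc : Continuous g)
    (hfg : ∀ s, 0 < f s → f s = g s) (hF : 0 < f σ) (hσt : σ < t)
    (hM : ∀ l, 0 < f l → |l| ≤ M ∧ f l ≤ M) (hft : ¬ 0 < f t)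
    (hh : IsHarmonicOn m h (Low e f t)) (hpos : ∀ x ∈ Low e f t, 0 < h x)
    (hfr : ∀ x ∈ frontier (Low e f t), ¬ (rr e x < f (tt e x) ∧ tt e x = t) →
        Tendsto h (𝓝[Low e f t] x) (𝓝 0)) : False := by
  have hD := low_open e hV hgc hfg t
  have hzD : σ • e ∈ Low e f t := by
    refine ⟨?_, ?_⟩
    · rw [rr_smul he, tt_smul he]; exact hF
    · rw [tt_smul he]; exact hσt
  have hG : Good Set.univ ((Low e f t).indicator h) := by
    refine ⟨isOpen_univ, ?_, ?_, ?_, ?_⟩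
    · intro x _
      exact Set.indicator_nonneg (fun y hy => (hpos y hy).le) x
    · intro x _
      refine (ind_cont hD hh fun hx => hfr x hx ?_).continuousWithinAt
      rintro ⟨h1, h2⟩
      rw [h2] at h1
      exact hft ((rr_nonneg e x).trans_lt h1)
    · intro x _ hx
      by_cases hxD : x ∈ Low e f t
      · exact (ind_in hD hh hxD).1
      · rw [Set.indicator_of_notMem hxD] at hx; exact absurd hx (lt_irrefl _)
    · intro x _ hx
      by_cases hxD : x ∈ Low e f t
      · exact (ind_in hD hh hxD).2
      · rw [Set.indicator_of_notMem hxD] at hx; exact absurd hx (lt_irrefl _)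
  have hM0 : 0 < M := hF.trans_le (hM σ hF).2
  have := no_compact hG he (R := 2 * M) (by positivity) ?_ (σ • e)
  · rw [Set.indicator_of_mem hzD] at this
    linarith [hpos _ hzD]
  · intro y hy
    apply Set.indicator_of_notMem
    rintro ⟨h1, h2⟩
    have h0 := (rr_nonneg e y).trans_lt h1
    have := norm_le_rt he y
    have := hM _ h0
    linarith

end Tube

/-- (From the proof of Lemma 2.5 of the paper.)  For `d ≥ 2` there is a
constant `c₄ ∈ (0,1)`, depending only on `d`, such that for any tube `D_f`, any `n` with
`a < s_n ≤ b`, and any positive harmonic function `h` on the connected component `D'` of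
`D_f ∖ Λ_{s_n}` containing the points with `x^d < s_n` which vanishes continuously on
`∂D' ∖ Λ_{s_n}`: for every `k` with `a < s_k < s_{k+1} ≤ s_n` and every `x ∈ Λ_{s_k}` with
`|x̃| > (1 - c₄) f(s_k)` one has `h(x) ≤ h(z_k)/2` where `z_k = (0,…,0,s_k)`; in particular
the maximum of `h` over `Λ_{s_k}` is attained at a point `x` with `|x̃| ≤ (1 - c₄) f(s_k)`. -/
theorem stmt13 (m : ℕ) (hm : 1 ≤ m) :
    ∃ c₄ : ℝ, 0 < c₄ ∧ c₄ < 1 ∧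
      ∀ (a b : EReal), a < b →
      ∀ f : ℝ → ℝ,
        (∀ x : ℝ, 0 ≤ f x) →
        (∀ x : ℝ, a < (x : EReal) → (x : EReal) < b → 0 < f x) →
        (∀ x : ℝ, ((x : EReal) ≤ a ∨ b ≤ (x : EReal)) → f x = 0) →
        (∀ u v : ℝ, a < (u : EReal) → (u : EReal) < b →
          a < (v : EReal) → (v : EReal) < b → |f u - f v| ≤ |u - v|) →
      ∀ s : ℤ → ℝ,
        a < (s 0 : EReal) → (s 0 : EReal) < b →
        (∀ k : ℤ, 0 ≤ k →
          ((b ≤ ((s k + f (s k) / 2 : ℝ) : EReal) → ((s (k + 1) : ℝ) : EReal) = b) ∧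
           (((s k + f (s k) / 2 : ℝ) : EReal) < b → s (k + 1) = s k + f (s k) / 2))) →
        (∀ k : ℤ, k ≤ 0 →
          ((((s k - f (s k) / 2 : ℝ) : EReal) ≤ a → ((s (k - 1) : ℝ) : EReal) = a) ∧
           (a < ((s k - f (s k) / 2 : ℝ) : EReal) → s (k - 1) = s k - f (s k) / 2))) →
      ∀ n : ℤ, a < (s n : EReal) → (s n : EReal) ≤ b →
      -- `D'` is the connected component of `D_f ∖ Λ_{s_n}` containing the points `x₀`
      -- of `D_f` with `x₀^d < s_n`:
      ∀ x₀ : EuclideanSpace ℝ (Fin (m + 1)),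
        x₀ ∈ tube m f → lastCoord m x₀ < s n →
      ∀ h : EuclideanSpace ℝ (Fin (m + 1)) → ℝ,
        IsHarmonicOn m h (connectedComponentIn (tube m f \ cross m f (s n)) x₀) →
        (∀ x ∈ connectedComponentIn (tube m f \ cross m f (s n)) x₀, 0 < h x) →
        (∀ z ∈ frontier (connectedComponentIn (tube m f \ cross m f (s n)) x₀),
          z ∉ cross m f (s n) →
          Tendsto h (𝓝[connectedComponentIn (tube m f \ cross m f (s n)) x₀] z) (𝓝 0)) →
      ∀ k : ℤ, a < (s k : EReal) → s k < s (k + 1) → s (k + 1) ≤ s n →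
        (∀ x ∈ cross m f (s k), (1 - c₄) * f (s k) < tildeNorm m x →
          h x ≤ h (EuclideanSpace.single (Fin.last m) (s k)) / 2) ∧
        (∃ x ∈ cross m f (s k), tildeNorm m x ≤ (1 - c₄) * f (s k) ∧
          ∀ y ∈ cross m f (s k), h y ≤ h x) := by
  obtain ⟨c, hc0, hc1, H⟩ := Tube.apply_scaled m
  refine ⟨c, hc0, hc1, ?_⟩
  intro a b hab f hf0 hfpos hfz hflip s hs0a hs0b hsup hsdn n hna hnb x₀ hx₀ hx₀l h hh hpos hfr
    k hka hkk hkn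
  have hV : ∀ l : ℝ, 0 < f l ↔ a < (l : EReal) ∧ (l : EReal) < b := by
    intro l
    constructor
    · intro hl
      by_contra hc
      have : (l : EReal) ≤ a ∨ b ≤ (l : EReal) := by
        by_cases h1 : a < (l : EReal)
        · exact Or.inr (not_lt.1 fun h2 => hc ⟨h1, h2⟩)
        · exact Or.inl (not_lt.1 h1)
      rw [hfz l this] at hl
      exact lt_irrefl _ hl
    · rintro ⟨h1, h2⟩; exact hfpos l h1 h2
  have hVo : IsOpen {l : ℝ | 0 < f l} := by
    have : {l : ℝ | 0 < f l} = (fun l : ℝ => (l : EReal)) ⁻¹' Set.Ioo a b := by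
      ext l; exact hV l
    rw [this]
    exact isOpen_Ioo.preimage continuous_coe_real_ereal
  have hVc : Set.OrdConnected {l : ℝ | 0 < f l} := by
    refine ⟨fun x hx y hy w hw => (hV w).2 ⟨?_, ?_⟩⟩
    · exact ((hV x).1 hx).1.trans_le (EReal.coe_le_coe_iff.2 hw.1)
    · exact (EReal.coe_le_coe_iff.2 hw.2).trans_lt ((hV y).1 hy).2
  obtain ⟨g, hgl, hfg⟩ : ∃ g : ℝ → ℝ, (∀ u v, |g u - g v| ≤ |u - v|) ∧
      ∀ l, 0 < f l → f l = g l := by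
    have hL : LipschitzOnWith 1 f {l : ℝ | 0 < f l} := LipschitzOnWith.of_dist_le_mul
      fun u hu v hv => by
        have := hflip u v ((hV u).1 hu).1 ((hV u).1 hu).2 ((hV v).1 hv).1 ((hV v).1 hv).2
        simpa [Real.dist_eq] using this
    obtain ⟨g, hg, hfg⟩ := hL.extend_real
    refine ⟨g, fun u v => ?_, fun l hl => hfg hl⟩
    simpa [Real.dist_eq] using hg.dist_le_mul u v
  have hgc : Continuous g := by
    have : LipschitzWith 1 g := LipschitzWith.of_dist_le_mul fun a b => by
      simpa [Real.dist_eq] using hgl a b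
    exact this.continuous
  rw [Tube.comp_eq m hVc (s n) hx₀ hx₀l] at hh hpos hfr
  set e : Tube.Eu (m+1) := EuclideanSpace.single (Fin.last m) 1 with he_def
  have he : ‖e‖ = 1 := Tube.norm_ed m
  have hrr : ∀ x, Tube.rr e x = tildeNorm m x := Tube.rr_ed m
  have htt : ∀ x, Tube.tt e x = lastCoord m x := Tube.tt_ed m
  have hz : (EuclideanSpace.single (Fin.last m) (s k) : Tube.Eu (m+1)) = s k • e := by
    ext i
    simp only [he_def, PiLp.smul_apply, EuclideanSpace.single_apply, smul_eq_mul]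
    split_ifs <;> simp
  have hfr' : ∀ x ∈ frontier (Tube.Low e f (s n)),
      ¬ (Tube.rr e x < f (Tube.tt e x) ∧ Tube.tt e x = s n) →
        Tendsto h (𝓝[Tube.Low e f (s n)] x) (𝓝 0) := by
    intro x hx hn
    apply hfr x hx
    rintro ⟨h1, h2⟩
    apply hn
    rw [hrr, htt]
    exact ⟨h1, h2⟩
  have hkn' : s k < s n := hkk.trans_le hkn
  have hkb : (s k : EReal) < b := (EReal.coe_lt_coe_iff.2 hkn').trans_le hnb
  have hF : 0 < f (s k) := hfpos _ hka hkb
  have hdich : s k + f (s k) / 3 ≤ s n ∨ (s n : EReal) = b := by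
    rcases le_or_gt 0 k with hk | hk
    · obtain ⟨h1, h2⟩ := hsup k hk
      by_cases hb : b ≤ ((s k + f (s k) / 2 : ℝ) : EReal)
      · right
        apply le_antisymm hnb
        rw [← h1 hb]
        exact EReal.coe_le_coe_iff.2 hkn
      · left
        have := h2 (not_le.1 hb)
        linarith
    · left
      obtain ⟨h1, h2⟩ := hsdn (k + 1) (by omega)
      rw [add_sub_cancel_right] at h1 h2
      by_cases ha : ((s (k+1) - f (s (k+1)) / 2 : ℝ) : EReal) ≤ a
      · have := h1 ha
        rw [this] at hka
        exact absurd hka (lt_irrefl _)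
      · have h3 := h2 (not_le.1 ha)
        have h4 : 0 < f (s (k+1)) := by linarith
        have h5 := (hV _).1 h4
        have h6 := hflip (s k) (s (k+1)) hka hkb h5.1 h5.2
        have h7 := abs_le.1 h6
        have h8 : |s k - s (k+1)| = f (s (k+1)) / 2 := by
          rw [abs_of_neg (by linarith)]; linarith
        linarith [h7.2]
  have hfirst : ∀ x ∈ cross m f (s k), (1 - c) * f (s k) < tildeNorm m x →
      h x ≤ h (EuclideanSpace.single (Fin.last m) (s k)) / 2 := by
    rintro x ⟨hx1, hx2⟩ hx3
    have hx1' : Tube.rr e x < f (s k) := by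
      rw [hrr, ← hx2]; exact hx1
    have hx2' : Tube.tt e x = s k := by rw [htt]; exact hx2
    have hx3' : (1 - c) * f (s k) < Tube.rr e x := by rw [hrr]; exact hx3
    have fin : ∀ ε α : ℝ, ε * ε = 1 → 0 < α → α ≤ 1/3 →
      (∀ l, |l - s k| < f (s k) / 3 → (0 < ε * (l - s k) + α * f (s k) ↔ 0 < f l ∧ l < s n)) →
      (∀ l, |l - s k| < f (s k) / 3 → 0 < f l → l ≠ s n) →
      h x ≤ h (EuclideanSpace.single (Fin.last m) (s k)) / 2 := by
      intro ε α h1 h2 h3 h4 h5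
      exact H e _ f g (s n) (s k) ε α h he h1 hz hVo hgl hfg hF h2 h3 h4 h5 hh hpos hfr' x hx2' hx3' hx1'
    have ha_real : ¬ a ≤ ((s k - f (s k) / 3 : ℝ) : EReal) → ∃ A : ℝ, a = A ∧ A < s k ∧
        s k - f (s k) / 3 < A := by
      intro hna
      rw [not_le] at hna
      have h1 : a ≠ ⊤ := ne_top_of_lt hab
      have h2 : a ≠ ⊥ := ne_bot_of_gt hna
      lift a to ℝ using ⟨h1, h2⟩
      exact ⟨a, rfl, EReal.coe_lt_coe_iff.1 hka, EReal.coe_lt_coe_iff.1 hna⟩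
    by_cases hA : s k + f (s k) / 3 ≤ s n
    · have hlb : ∀ l : ℝ, |l - s k| < f (s k) / 3 → l < s n ∧ (l : EReal) < b := by
        intro l hl
        have h1 : l < s n := by linarith [(abs_lt.1 hl).2]
        exact ⟨h1, (EReal.coe_lt_coe_iff.2 h1).trans_le hnb⟩
      by_cases ha : a ≤ ((s k - f (s k) / 3 : ℝ) : EReal)
      · refine fin 1 (1/3) (by norm_num) (by norm_num) le_rfl ?_ ?_
        · intro l hl
          have h1 := abs_lt.1 hl
          have h2 := hlb l hl
          constructor
          · intro _
            refine ⟨(hV l).2 ⟨ha.trans_lt (EReal.coe_lt_coe_iff.2 (by linarith)), h2.2⟩, h2.1⟩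
          · intro _; linarith
        · intro l hl _; exact (hlb l hl).1.ne
      · obtain ⟨A, rfl, hA1, hA2⟩ := ha_real ha
        have hcalc : (s k - A) / f (s k) * f (s k) = s k - A := by field_simp
        refine fin 1 ((s k - A) / f (s k)) (by norm_num) (div_pos (by linarith) hF) ?_ ?_ ?_
        · rw [div_le_iff₀ hF]; linarith
        · intro l hl
          have h2 := hlb l hl
          rw [hcalc, hV, EReal.coe_lt_coe_iff]
          constructor
          · intro h3; exact ⟨⟨by linarith, h2.2⟩, h2.1⟩
          · intro h3; linarith [h3.1.1]
        · intro l hl _; exact (hlb l hl).1.ne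
    · have hb := hdich.resolve_left hA
      rw [not_le] at hA
      have hftn : ¬ 0 < f (s n) := by
        rw [hV, hb]; exact fun h => lt_irrefl _ h.2
      have hlb : ∀ l : ℝ, (l : EReal) < b ↔ l < s n := by
        intro l; rw [← hb, EReal.coe_lt_coe_iff]
      by_cases ha : a ≤ ((s k - f (s k) / 3 : ℝ) : EReal)
      · have hcalc : (s n - s k) / f (s k) * f (s k) = s n - s k := by field_simp
        refine fin (-1) ((s n - s k) / f (s k)) (by norm_num) (div_pos (by linarith) hF) ?_ ?_ ?_
        · rw [div_le_iff₀ hF]; linarith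
        · intro l hl
          have h1 := abs_lt.1 hl
          rw [hcalc, hV, hlb]
          constructor
          · intro h3
            exact ⟨⟨ha.trans_lt (EReal.coe_lt_coe_iff.2 (by linarith)), by linarith⟩, by linarith⟩
          · intro h3; linarith [h3.2]
        · intro l hl h0 h1
          rw [h1] at h0
          exact hftn h0
      · exfalso
        obtain ⟨A, rfl, hA1, hA2⟩ := ha_real ha
        refine Tube.no_bounded m (M := |s k| + 2 * f (s k)) he hVo hgc hfg hF hkn' ?_ hftn hh hpos hfr'
        intro l hl
        obtain ⟨h1, h2⟩ := (hV l).1 hl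
        have h3 := hflip l (s k) h1 h2 hka hkb
        rw [EReal.coe_lt_coe_iff] at h1
        rw [hlb] at h2
        have h4 : |l - s k| ≤ f (s k) / 3 := abs_le.2 ⟨by linarith, by linarith⟩
        have h5 := abs_le.1 h3
        have h6 : |l| ≤ |s k| + |l - s k| := by
          have := abs_add_le (s k) (l - s k)
          rwa [add_sub_cancel] at this
        have h7 := abs_nonneg (s k)
        exact ⟨by linarith, by linarith [h5.2]⟩
  refine ⟨hfirst, ?_⟩
  set z : Tube.Eu (m+1) := EuclideanSpace.single (Fin.last m) (s k) with hz_def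
  have hz1 : Tube.tt e z = s k := by rw [hz, Tube.tt_smul he]
  have hz2 : Tube.rr e z = 0 := by rw [hz, Tube.rr_smul he]
  set K : Set (Tube.Eu (m+1)) := {x | Tube.tt e x = s k ∧ Tube.rr e x ≤ (1 - c) * f (s k)} with hK
  have hKin : ∀ x, Tube.tt e x = s k → Tube.rr e x < f (s k) → x ∈ Tube.Low e f (s n) := by
    intro x h1 h2
    exact ⟨by rw [h1]; exact h2, by rw [h1]; exact hkn'⟩
  have hcF : (1 - c) * f (s k) < f (s k) := by nlinarith
  have hcF0 : 0 < (1 - c) * f (s k) := mul_pos (by linarith) hF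
  have hKD : K ⊆ Tube.Low e f (s n) := fun x hx => hKin x hx.1 (hx.2.trans_lt hcF)
  have hKc : IsCompact K := by
    apply Metric.isCompact_of_isClosed_isBounded
    · exact (isClosed_eq (Tube.tt_cont e) continuous_const).inter
        (isClosed_le (Tube.rr_cont e) continuous_const)
    · apply (Metric.isBounded_closedBall (x := (0 : Tube.Eu (m+1))) (r := f (s k) + |s k|)).subset
      intro x hx
      rw [mem_closedBall_zero_iff]
      have h1 := Tube.norm_le_rt he x
      rw [hx.1] at h1
      linarith [hx.2]
  have hzK : z ∈ K := ⟨hz1, by rw [hz2]; exact hcF0.le⟩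
  obtain ⟨x, hxK, hxmax⟩ := hKc.exists_isMaxOn ⟨z, hzK⟩ (hh.1.continuousOn.mono hKD)
  refine ⟨x, ⟨?_, ?_⟩, ?_, ?_⟩
  · have := (hKD hxK).1
    rw [hrr, htt] at this
    exact this
  · rw [← htt]; exact hxK.1
  · rw [← hrr]; exact hxK.2
  · intro y hy
    by_cases hyr : tildeNorm m y ≤ (1 - c) * f (s k)
    · exact hxmax ⟨by rw [htt]; exact hy.2, by rw [hrr]; exact hyr⟩
    · have h1 := hfirst y hy (not_le.1 hyr)
      have h2 : h z ≤ h x := hxmax hzK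
      have h3 := hpos z (hKD hzK)
      linarith
end
end
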